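/- There exist universal constants c, C > 0 such that the following holds. Let X be an isotropic random vector in ℝⁿ with log-concave density which is ψ_α (α ∈ [1,2]) with constant b_α, let A be an n×n real matrix with ‖A‖_HS² = n, let G_n be a standard Gaussian random vector in ℝⁿ independent of X, and set Y = (AX + G_n)/√2 and ñ := n/(‖A‖_op²·b_α²). Then for every real p ≠ 0 with |p| ≤ c·ñ^{α/2}: 1 − C·(|p−2|/ñ^{α/2})^{1/(α+1)} ≤ (E|Y|^p)^{1/p} / (E|Y|²)^{1/2} ≤ 1 + C·(|p−2|/ñ^{α/2})^{1/(α+1)}. -/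

import Mathlib

open MeasureTheory ProbabilityTheory Real
open scoped ENNReal RealInnerProductSpace Pointwise NNReal

noncomputable section

/-- A nonnegative function is log-concave if `f(λx+(1-λ)y) ≥ f(x)^λ f(y)^{1-λ}`. -/
def IsLogConcaveFn {E : Type*} [AddCommGroup E] [Module ℝ E] (f : E → ℝ) : Prop :=
  (∀ x, 0 ≤ f x) ∧
  ∀ x y : E, ∀ l : ℝ, 0 ≤ l → l ≤ 1 →
    f x ^ l * f y ^ (1 - l) ≤ f (l • x + (1 - l) • y)

/-- Hilbert-Schmidt (Frobenius) norm of a matrix. -/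
def hsNorm {n : ℕ} (A : Matrix (Fin n) (Fin n) ℝ) : ℝ :=
  Real.sqrt (∑ i, ∑ j, (A i j) ^ 2)

/-- Operator norm of a matrix acting on Euclidean space. -/
def opNorm {n : ℕ} (A : Matrix (Fin n) (Fin n) ℝ) : ℝ :=
  ‖LinearMap.toContinuousLinearMap (Matrix.toEuclideanLin A)‖

/-- Application of a matrix to a Euclidean vector. -/
def mApp {n : ℕ} (A : Matrix (Fin n) (Fin n) ℝ) (x : EuclideanSpace ℝ (Fin n)) :
    EuclideanSpace ℝ (Fin n) := Matrix.toEuclideanLin A x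

/-- The random vector `X` has density `f` with respect to Lebesgue measure. -/
def HasDensityFn {Ω : Type*} [MeasurableSpace Ω] (P : Measure Ω) {n : ℕ}
    (X : Ω → EuclideanSpace ℝ (Fin n)) (f : EuclideanSpace ℝ (Fin n) → ℝ) : Prop :=
  Measurable X ∧ Measure.map X P = volume.withDensity fun x => ENNReal.ofReal (f x)

/-- `X` is isotropic: centered with identity covariance. -/
def Isotropic {Ω : Type*} [MeasurableSpace Ω] (P : Measure Ω) {n : ℕ}
    (X : Ω → EuclideanSpace ℝ (Fin n)) : Prop :=
  (∫ ω, X ω ∂P) = 0 ∧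
  ∀ θ η : EuclideanSpace ℝ (Fin n), (∫ ω, ⟪X ω, θ⟫ * ⟪X ω, η⟫ ∂P) = ⟪θ, η⟫

/-- `X` is ψ_α with constant `b`. -/
def IsPsiAlpha {Ω : Type*} [MeasurableSpace Ω] (P : Measure Ω) {n : ℕ}
    (X : Ω → EuclideanSpace ℝ (Fin n)) (α b : ℝ) : Prop :=
  ∀ p : ℝ, 2 ≤ p → ∀ y : EuclideanSpace ℝ (Fin n),
    (∫ ω, |⟪X ω, y⟫| ^ p ∂P) ^ (1/p) ≤ b * p ^ (1/α) * (∫ ω, ⟪X ω, y⟫ ^ 2 ∂P) ^ ((1:ℝ)/2)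

/-- `G` is a standard Gaussian random vector in `ℝⁿ`. -/
def IsStdGaussian {Ω : Type*} [MeasurableSpace Ω] (P : Measure Ω) {n : ℕ}
    (G : Ω → EuclideanSpace ℝ (Fin n)) : Prop :=
  Measurable G ∧
  Measure.map G P = volume.withDensity fun x =>
    ENNReal.ofReal ((2 * π) ^ (-(n:ℝ)/2) * Real.exp (-‖x‖ ^ 2 / 2))

/-- Surface area of the unit sphere `S^{k-1}` in `ℝᵏ`. -/
def sphereVol (k : ℕ) : ℝ := 2 * π ^ ((k : ℝ)/2) / Real.Gamma ((k : ℝ)/2)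

/-- The marginal density `π_F g(x) = ∫_{F^⊥} g(x+y) dy`. -/
def marginalDensity {n : ℕ} (g : EuclideanSpace ℝ (Fin n) → ℝ)
    (F : Submodule ℝ (EuclideanSpace ℝ (Fin n))) (x : EuclideanSpace ℝ (Fin n)) : ℝ :=
  ∫ y : Fᗮ, g (x + y)

/-- `h_{k,p}(u) = vol(S^{k-1}) ∫₀^∞ t^{p+k-1} π_{u(E₀)} g(t u(θ₀)) dt`. -/
def hkp {n : ℕ} (g : EuclideanSpace ℝ (Fin n) → ℝ)
    (E₀ : Submodule ℝ (EuclideanSpace ℝ (Fin n))) (θ₀ : EuclideanSpace ℝ (Fin n))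
    (k : ℕ) (p : ℝ) (u : Matrix (Fin n) (Fin n) ℝ) : ℝ :=
  sphereVol k * ∫ t in Set.Ioi (0:ℝ), t ^ (p + (k:ℝ) - 1) *
    marginalDensity g (Submodule.map (Matrix.toEuclideanLin u) E₀) (t • mApp u θ₀)

/-- Support functional of the one-sided L_q-centroid body `Z⁺_q(w)`. -/
def suppZplus {m : ℕ} (w : EuclideanSpace ℝ (Fin m) → ℝ) (q : ℝ)
    (y : EuclideanSpace ℝ (Fin m)) : ℝ :=
  (2 * ∫ x, (max ⟪x, y⟫ 0) ^ q * w x) ^ (1/q)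

/-- Ball's body `K_q(w) = {x : q ∫₀^∞ t^{q-1} w(tx) dt ≥ 1}`. -/
def ballBody {m : ℕ} (w : EuclideanSpace ℝ (Fin m) → ℝ) (q : ℝ) :
    Set (EuclideanSpace ℝ (Fin m)) :=
  {x | 1 ≤ q * ∫ t in Set.Ioi (0:ℝ), t ^ (q-1) * w (t • x)}

/-- The one-sided L_q-centroid body `Z⁺_q(w)`, as the convex set with support
functional `suppZplus w q`. -/
def ZplusBody {m : ℕ} (w : EuclideanSpace ℝ (Fin m) → ℝ) (q : ℝ) :
    Set (EuclideanSpace ℝ (Fin m)) :=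
  {x | ∀ y, ⟪x, y⟫ ≤ suppZplus w q y}

/-!
Let `μ` be the law of `X`, let `L = A / √n`, so that `L` has Hilbert–Schmidt norm `1`, and let
`r x = √(1 + ‖L x‖ ^ 2)`. For Gaussian rows `Γ₁, …, Γ_k` and a unit vector `e ∈ ℝᵏ`, set
`h_q Γ = ∫∫_{t > 0} t ^ q * exp (-‖t e - Γ L x‖ ^ 2 / 2) dt dμ(x)`. The average of `h_q` over `Γ`
is a constant times `E r ^ (q + 1 - k)`.

* The Prékopa–Leindler inequality in `(x, t)` makes `q ↦ h_q Γ` almost log-concave: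
  `h_(q - a) * h_(q + a) ≤ exp (2 a ^ 2 / q) * h_q ^ 2`.
* By Jensen's inequality, on a good event of rows, a shift of `Γ` by `Δ` changes `h_q` by at most a
  factor `exp (C ρ k + ∑ ‖Δ_i‖ ^ 2 / 2)`, where the `ψ_α` condition controls `ρ`; the complementary
  event costs a bounded factor.
* The Prékopa–Leindler inequality for the Gaussian measure, whose cost `‖x - y‖ ^ 2 / 4` absorbs the
  shift, integrates these pointwise bounds over `Γ` to
  `E r ^ (2 - a) * E r ^ (2 + a) ≤ 4 * exp (C (ρ k + a ^ 2 / k))`.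

Choosing `k` to balance the two terms of the exponent bounds products of moments of `r` placed
symmetrically around `2`. Conditionally on `X`, the moments of `‖A X + G‖` are comparable with those
of `r`, and log-convexity of moments turns the symmetric products into two-sided bounds.
-/

section PrekopaLeindlerReal

theorem volume_add_le_two_mul_of_midpoint_mem_of_isCompact {K L W : Set ℝ} (hK : IsCompact K)
    (hL : IsCompact L) (hK₀ : K.Nonempty) (hL₀ : L.Nonempty)
    (h : ∀ s ∈ K, ∀ t ∈ L, (s + t) / 2 ∈ W) :
    volume K + volume L ≤ 2 * volume W := by
  obtain ⟨a, haK, ha⟩ := hK.exists_isGreatest hK₀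
  obtain ⟨b, hbL, hb⟩ := hL.exists_isLeast hL₀
  -- `K + min L` and `max K + L` lie in `2 • W` and meet only in the point `max K + min L`.
  have h_inter : volume ((· + b) '' K ∩ (a + ·) '' L) = 0 := by
    refine measure_mono_null (t := {a + b}) ?_ (by simp)
    rintro _ ⟨⟨y, hy, rfl⟩, ⟨z, hz, hzy⟩⟩
    have hy_le := ha hy
    have hle_z := hb hz
    simp only [Set.mem_singleton_iff] at hzy ⊢
    linarith
  have h_subset : (· + b) '' K ∪ (a + ·) '' L ⊆ (2 : ℝ) • W := by
    rintro _ (⟨y, hy, rfl⟩ | ⟨z, hz, rfl⟩)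
    · exact ⟨_, h y hy b hbL, by simp only [smul_eq_mul]; ring⟩
    · exact ⟨_, h a haK z hz, by simp only [smul_eq_mul]; ring⟩
  calc volume K + volume L = volume ((· + b) '' K ∪ (a + ·) '' L) := by
        rw [measure_union₀ (hL.image (by fun_prop)).measurableSet.nullMeasurableSet h_inter]
        simp
    _ ≤ volume ((2 : ℝ) • W) := measure_mono h_subset
    _ = 2 * volume W := by simp [Measure.addHaar_smul]

theorem volume_add_le_two_mul_of_midpoint_mem {S T W : Set ℝ} (hS : MeasurableSet S)
    (hT : MeasurableSet T) (hS₀ : S.Nonempty) (hT₀ : T.Nonempty)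
    (h : ∀ s ∈ S, ∀ t ∈ T, (s + t) / 2 ∈ W) :
    volume S + volume T ≤ 2 * volume W := by
  obtain ⟨s, hs⟩ := hS₀
  obtain ⟨t, ht⟩ := hT₀
  rw [hS.measure_eq_iSup_isCompact, hT.measure_eq_iSup_isCompact]
  simp only [iSup_and']
  refine ENNReal.biSup_add_biSup_le' ⟨∅, by simp⟩ ⟨∅, by simp⟩ ?_
  rintro K ⟨hKS, hK⟩ L ⟨hLT, hL⟩
  calc volume K + volume L ≤ volume (insert s K) + volume (insert t L) := by
        gcongr <;> exact Set.subset_insert _ _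
    _ ≤ 2 * volume W := volume_add_le_two_mul_of_midpoint_mem_of_isCompact (hK.insert s)
        (hL.insert t) (Set.insert_nonempty _ _) (Set.insert_nonempty _ _) fun x hx y hy =>
          h x (Set.insert_subset hs hKS hx) y (Set.insert_subset ht hLT hy)

theorem lintegral_eq_setLIntegral_Ioo_measure_lt {Ω : Type*} [MeasurableSpace Ω] (μ : Measure Ω)
    {u : Ω → ℝ≥0∞} (hu : Measurable u) (hu₁ : ∀ x, u x ≤ 1) :
    ∫⁻ x, u x ∂μ = ∫⁻ l in Set.Ioo (0 : ℝ) 1, μ {x | ENNReal.ofReal l < u x} := by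
  have hu_top (x) : u x ≠ ∞ := ne_top_of_le_ne_top ENNReal.one_ne_top (hu₁ x)
  have h_tail : ∫⁻ l in Set.Ici (1 : ℝ), μ {x | l < (u x).toReal} = 0 := by
    refine setLIntegral_eq_zero measurableSet_Ici fun l (hl : 1 ≤ l) => ?_
    have h_empty : {x | l < (u x).toReal} = ∅ := Set.eq_empty_of_forall_notMem fun x hx =>
      (hl.trans_lt hx).not_ge (ENNReal.toReal_mono ENNReal.one_ne_top (hu₁ x))
    simp [h_empty]
  calc ∫⁻ x, u x ∂μ = ∫⁻ x, ENNReal.ofReal (u x).toReal ∂μ := by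
        simp only [ENNReal.ofReal_toReal (hu_top _)]
    _ = ∫⁻ l in Set.Ioi (0 : ℝ), μ {x | l < (u x).toReal} :=
        lintegral_eq_lintegral_meas_lt μ (ae_of_all _ fun _ => ENNReal.toReal_nonneg)
          hu.ennreal_toReal.aemeasurable
    _ = ∫⁻ l in Set.Ioo (0 : ℝ) 1, μ {x | l < (u x).toReal} := by
        rw [← Set.Ioo_union_Ici_eq_Ioi zero_lt_one, lintegral_union measurableSet_Ici
          (Set.disjoint_left.2 fun _ hl => not_le.2 hl.2), h_tail, add_zero]
    _ = ∫⁻ l in Set.Ioo (0 : ℝ) 1, μ {x | ENNReal.ofReal l < u x} := by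
        refine setLIntegral_congr_fun measurableSet_Ioo fun l hl => ?_
        simp only [ENNReal.ofReal_lt_iff_lt_toReal hl.1.le (hu_top _)]

theorem lintegral_add_lintegral_le_of_mul_le_midpoint_sq {u v w : ℝ → ℝ≥0∞} (hu : Measurable u)
    (hv : Measurable v) (hw : Measurable w) (hu_sup : ⨆ x, u x = 1) (hv_sup : ⨆ x, v x = 1)
    (h : ∀ x y, u x * v y ≤ w ((x + y) / 2) ^ 2) :
    (∫⁻ x, u x) + ∫⁻ x, v x ≤ 2 * ∫⁻ x, w x := by
  have hu₁ (x) : u x ≤ 1 := hu_sup ▸ le_iSup u x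
  have hv₁ (x) : v x ≤ 1 := hv_sup ▸ le_iSup v x
  have h_meas (f : ℝ → ℝ≥0∞) : Measurable fun l => volume {x | ENNReal.ofReal l < f x} :=
    Antitone.measurable fun _ _ hll' =>
      measure_mono fun _ hx => (ENNReal.ofReal_le_ofReal hll').trans_lt hx
  have h_level {l : ℝ} (hl : l ∈ Set.Ioo (0 : ℝ) 1) :
      volume {x | ENNReal.ofReal l < u x} + volume {x | ENNReal.ofReal l < v x} ≤
        2 * volume {x | ENNReal.ofReal l < min (w x) 1} := by
    have hl_lt : ENNReal.ofReal l < 1 := by simpa using hl.2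
    refine volume_add_le_two_mul_of_midpoint_mem (measurableSet_lt measurable_const hu)
      (measurableSet_lt measurable_const hv) ?_ ?_
      fun s hs t ht => lt_min (lt_of_not_ge fun hw_le => (h s t).not_gt ?_) hl_lt
    · exact lt_iSup_iff.1 (hu_sup.symm ▸ hl_lt)
    · exact lt_iSup_iff.1 (hv_sup.symm ▸ hl_lt)
    · calc w ((s + t) / 2) ^ 2 ≤ ENNReal.ofReal l ^ 2 := by gcongr
        _ < u s * v t := by rw [sq]; exact ENNReal.mul_lt_mul hs ht
  calc (∫⁻ x, u x) + ∫⁻ x, v x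
      = ∫⁻ l in Set.Ioo (0 : ℝ) 1, volume {x | ENNReal.ofReal l < u x} +
          volume {x | ENNReal.ofReal l < v x} := by
        rw [lintegral_eq_setLIntegral_Ioo_measure_lt _ hu hu₁,
          lintegral_eq_setLIntegral_Ioo_measure_lt _ hv hv₁, lintegral_add_left (h_meas u)]
    _ ≤ ∫⁻ l in Set.Ioo (0 : ℝ) 1, 2 * volume {x | ENNReal.ofReal l < min (w x) 1} :=
        setLIntegral_mono' measurableSet_Ioo fun _ hl => h_level hl
    _ = 2 * ∫⁻ x, min (w x) 1 := by
        rw [lintegral_const_mul _ (h_meas fun x => min (w x) 1),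
          lintegral_eq_setLIntegral_Ioo_measure_lt _ (hw.min measurable_const)
            fun _ => min_le_right _ _]
    _ ≤ 2 * ∫⁻ x, w x := by gcongr; exact min_le_left _ _

theorem ennreal_four_mul_le_sq_add (a b : ℝ≥0∞) : 4 * (a * b) ≤ (a + b) ^ 2 := by
  rcases eq_or_ne a ∞ with rfl | ha
  · simp
  rcases eq_or_ne b ∞ with rfl | hb
  · simp
  lift a to ℝ≥0 using ha
  lift b to ℝ≥0 using hb
  norm_cast
  simpa only [mul_assoc] using four_mul_le_sq_add a b

theorem lintegral_mul_lintegral_le_sq_of_bounded {u v w : ℝ → ℝ≥0∞} (hu : Measurable u)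
    (hv : Measurable v) (hw : Measurable w) (hu_top : ⨆ x, u x ≠ ∞) (hv_top : ⨆ x, v x ≠ ∞)
    (h : ∀ x y, u x * v y ≤ w ((x + y) / 2) ^ 2) :
    (∫⁻ x, u x) * ∫⁻ x, v x ≤ (∫⁻ x, w x) ^ 2 := by
  rcases eq_or_ne (⨆ x, u x) 0 with hu₀ | hu₀
  · simp [ENNReal.iSup_eq_zero.1 hu₀]
  rcases eq_or_ne (⨆ x, v x) 0 with hv₀ | hv₀
  · simp [ENNReal.iSup_eq_zero.1 hv₀]
  set a := ⨆ x, u x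
  set b := ⨆ x, v x
  set c := (a * b) ^ (1 / 2 : ℝ)
  have hc_sq : c ^ 2 = a * b := by
    rw [← ENNReal.rpow_natCast, ← ENNReal.rpow_mul]
    norm_num
  have hc₀ : c ^ 2 ≠ 0 := hc_sq ▸ mul_ne_zero hu₀ hv₀
  have hc_top : c ^ 2 ≠ ∞ := hc_sq ▸ ENNReal.mul_ne_top hu_top hv_top
  have h_inv : a⁻¹ * b⁻¹ = c⁻¹ ^ 2 := by
    rw [← ENNReal.inv_pow, hc_sq, ENNReal.mul_inv (.inl hu₀) (.inl hu_top)]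
  have h_normalized : a⁻¹ * (∫⁻ x, u x) + b⁻¹ * (∫⁻ x, v x) ≤ 2 * (c⁻¹ * ∫⁻ x, w x) := by
    simp only [← lintegral_const_mul _ hu, ← lintegral_const_mul _ hv, ← lintegral_const_mul _ hw]
    refine lintegral_add_lintegral_le_of_mul_le_midpoint_sq (hu.const_mul _) (hv.const_mul _)
      (hw.const_mul _) ?_ ?_ fun x y => ?_
    · rw [← ENNReal.mul_iSup, ENNReal.inv_mul_cancel hu₀ hu_top]
    · rw [← ENNReal.mul_iSup, ENNReal.inv_mul_cancel hv₀ hv_top]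
    · calc a⁻¹ * u x * (b⁻¹ * v y) = a⁻¹ * b⁻¹ * (u x * v y) := by ring
        _ ≤ a⁻¹ * b⁻¹ * w ((x + y) / 2) ^ 2 := by gcongr; exact h x y
        _ = (c⁻¹ * w ((x + y) / 2)) ^ 2 := by rw [h_inv, mul_pow]
  have h_four : 4 * ((c ^ 2)⁻¹ * ((∫⁻ x, u x) * ∫⁻ x, v x)) ≤
      4 * ((c ^ 2)⁻¹ * (∫⁻ x, w x) ^ 2) := by
    calc 4 * ((c ^ 2)⁻¹ * ((∫⁻ x, u x) * ∫⁻ x, v x))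
        = 4 * ((a⁻¹ * ∫⁻ x, u x) * (b⁻¹ * ∫⁻ x, v x)) := by
          rw [ENNReal.inv_pow, ← h_inv]; ring
      _ ≤ (a⁻¹ * (∫⁻ x, u x) + b⁻¹ * ∫⁻ x, v x) ^ 2 := ennreal_four_mul_le_sq_add _ _
      _ ≤ (2 * (c⁻¹ * ∫⁻ x, w x)) ^ 2 := by gcongr
      _ = 4 * ((c ^ 2)⁻¹ * (∫⁻ x, w x) ^ 2) := by rw [ENNReal.inv_pow]; ring
  rwa [ENNReal.mul_le_mul_iff_right (by norm_num) (by norm_num),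
    ENNReal.mul_le_mul_iff_right (ENNReal.inv_ne_zero.2 hc_top) (ENNReal.inv_ne_top.2 hc₀)]
    at h_four

theorem lintegral_eq_iSup_lintegral_min_natCast {Ω : Type*} [MeasurableSpace Ω] (μ : Measure Ω)
    {u : Ω → ℝ≥0∞} (hu : Measurable u) :
    ∫⁻ x, u x ∂μ = ⨆ m : ℕ, ∫⁻ x, min (u x) m ∂μ := by
  rw [← lintegral_iSup (fun m => hu.min measurable_const)
    fun _ _ hab _ => min_le_min_left _ (by exact_mod_cast hab)]
  simp only [← inf_iSup_eq, ENNReal.iSup_natCast, inf_top_eq]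

theorem prekopa_leindler_midpoint_real {u v w : ℝ → ℝ≥0∞}
    (hu : Measurable u) (hv : Measurable v) (hw : Measurable w)
    (h : ∀ x y, u x * v y ≤ w ((x + y) / 2) ^ 2) :
    (∫⁻ x, u x) * ∫⁻ x, v x ≤ (∫⁻ x, w x) ^ 2 := by
  simp only [lintegral_eq_iSup_lintegral_min_natCast _ hu,
    lintegral_eq_iSup_lintegral_min_natCast _ hv, ENNReal.iSup_mul, ENNReal.mul_iSup, iSup_le_iff]
  have h_top (f : ℝ → ℝ≥0∞) (m : ℕ) : ⨆ x, min (f x) m ≠ ∞ :=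
    ne_top_of_le_ne_top (ENNReal.natCast_ne_top m) (iSup_le fun _ => min_le_right _ _)
  exact fun m m' => lintegral_mul_lintegral_le_sq_of_bounded (hu.min measurable_const)
    (hv.min measurable_const) hw (h_top u m') (h_top v m) fun x y =>
      (mul_le_mul' (min_le_left _ _) (min_le_left _ _)).trans (h x y)

end PrekopaLeindlerReal

section MidpointPrekopaLeindler

/-- The Prékopa–Leindler inequality at midpoints for the measure `μ`, with a transport cost `c`.
Lebesgue measure satisfies it with cost `0`, the standard Gaussian measure with cost
`‖x - y‖ ^ 2 / 4`. -/
def MidpointPrekopaLeindler {E : Type*} [AddCommGroup E] [Module ℝ E] [MeasurableSpace E]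
    (μ : Measure E) (c : E → E → ℝ) : Prop :=
  ∀ u v w : E → ℝ≥0∞, Measurable u → Measurable v → Measurable w →
    (∀ x y, u x * v y ≤ w ((1 / 2 : ℝ) • (x + y)) ^ 2 * ENNReal.ofReal (exp (c x y))) →
    (∫⁻ x, u x ∂μ) * (∫⁻ x, v x ∂μ) ≤ (∫⁻ x, w x ∂μ) ^ 2

namespace MidpointPrekopaLeindler

theorem volume_real : MidpointPrekopaLeindler (volume : Measure ℝ) 0 := fun u v w hu hv hw h =>
  prekopa_leindler_midpoint_real hu hv hw fun x y => by
    simpa [div_eq_inv_mul] using h x y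

section Transfer

variable {E F : Type*} [AddCommGroup E] [Module ℝ E] [MeasurableSpace E] [AddCommGroup F]
  [Module ℝ F] [MeasurableSpace F] {μ : Measure E} {ν : Measure F} {c : E → E → ℝ}
  {d : F → F → ℝ}

theorem of_measurePreserving (hμ : MidpointPrekopaLeindler μ c) {e : E → F}
    (he : MeasurePreserving e μ ν)
    (he_mid : ∀ x y, e ((1 / 2 : ℝ) • (x + y)) = (1 / 2 : ℝ) • (e x + e y))
    (hdc : ∀ x y, d (e x) (e y) ≤ c x y) : MidpointPrekopaLeindler ν d := by
  intro u v w hu hv hw h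
  rw [← he.lintegral_comp hu, ← he.lintegral_comp hv, ← he.lintegral_comp hw]
  refine hμ _ _ _ (hu.comp he.measurable) (hv.comp he.measurable) (hw.comp he.measurable)
    fun x y => ?_
  rw [he_mid]
  refine (h (e x) (e y)).trans ?_
  gcongr
  exact hdc x y

theorem prod [SFinite μ] [SFinite ν] (hμ : MidpointPrekopaLeindler μ c)
    (hν : MidpointPrekopaLeindler ν d) :
    MidpointPrekopaLeindler (μ.prod ν) fun x y => c x.1 y.1 + d x.2 y.2 := by
  intro u v w hu hv hw h
  rw [lintegral_prod_symm' _ hu, lintegral_prod_symm' _ hv, lintegral_prod_symm' _ hw]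
  refine hν _ _ _ hu.lintegral_prod_left' hv.lintegral_prod_left' hw.lintegral_prod_left'
    fun y₁ y₂ => ?_
  set r := ENNReal.ofReal (exp (d y₁ y₂ / 2))
  have hr_sq : r ^ 2 = ENNReal.ofReal (exp (d y₁ y₂)) := by
    rw [← ENNReal.ofReal_pow (exp_pos _).le, ← Real.exp_nat_mul]
    congr 2
    push_cast
    ring
  have h_section := hμ (fun x => u (x, y₁)) (fun x => v (x, y₂))
    (fun x => r * w (x, (1 / 2 : ℝ) • (y₁ + y₂))) (by fun_prop) (by fun_prop) (by fun_prop)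
    fun x₁ x₂ => (h (x₁, y₁) (x₂, y₂)).trans_eq <| by
      simp only [mul_pow, hr_sq, Prod.mk_add_mk, Prod.smul_mk]
      rw [Real.exp_add, ENNReal.ofReal_mul (exp_pos _).le]
      ring
  rwa [lintegral_const_mul _ (by fun_prop), mul_pow, hr_sq, mul_comm (ENNReal.ofReal _)]
    at h_section

theorem pi [SigmaFinite μ] (hμ : MidpointPrekopaLeindler μ c) (k : ℕ) :
    MidpointPrekopaLeindler (Measure.pi fun _ : Fin k => μ) fun x y => ∑ i, c (x i) (y i) := by
  induction k with
  | zero =>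
    intro u v w _ _ _ h
    have h_eval (g : (Fin 0 → E) → ℝ≥0∞) : ∫⁻ x, g x ∂(Measure.pi fun _ => μ) = g 0 := by
      rw [Measure.pi_of_empty _ 0, lintegral_dirac]
    simpa [h_eval] using h 0 0
  | succ k ih =>
    refine (hμ.prod ih).of_measurePreserving
      (measurePreserving_piFinSuccAbove (fun _ : Fin (k + 1) => μ) 0).symm (fun x y => ?_)
      fun x y => ?_
    · ext i
      refine Fin.cases ?_ (fun j => ?_) i <;> simp [MeasurableEquiv.piFinSuccAbove]
    · rw [Fin.sum_univ_succ]
      simp [MeasurableEquiv.piFinSuccAbove]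

theorem withDensity (hμ : MidpointPrekopaLeindler μ 0) {g : E → ℝ} (hg_meas : Measurable g)
    (hg_nonneg : ∀ x, 0 ≤ g x)
    (hg : ∀ x y, g x * g y * exp (c x y) ≤ g ((1 / 2 : ℝ) • (x + y)) ^ 2) :
    MidpointPrekopaLeindler (μ.withDensity fun x => ENNReal.ofReal (g x)) c := by
  intro u v w hu hv hw h
  simp only [lintegral_withDensity_eq_lintegral_mul _ hg_meas.ennreal_ofReal, hu, hv, hw]
  refine hμ _ _ _ (by fun_prop) (by fun_prop) (by fun_prop) fun x y => ?_
  simp only [Pi.mul_apply, Pi.zero_apply, exp_zero, ENNReal.ofReal_one, mul_one]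
  set m := (1 / 2 : ℝ) • (x + y)
  calc ENNReal.ofReal (g x) * u x * (ENNReal.ofReal (g y) * v y)
      = ENNReal.ofReal (g x) * ENNReal.ofReal (g y) * (u x * v y) := by ring
    _ ≤ ENNReal.ofReal (g x) * ENNReal.ofReal (g y) *
        (w m ^ 2 * ENNReal.ofReal (exp (c x y))) := by gcongr _ * ?_; exact h x y
    _ = ENNReal.ofReal (g x * g y * exp (c x y)) * w m ^ 2 := by
      rw [ENNReal.ofReal_mul (mul_nonneg (hg_nonneg x) (hg_nonneg y)),
        ENNReal.ofReal_mul (hg_nonneg x)]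
      ring
    _ ≤ ENNReal.ofReal (g m ^ 2) * w m ^ 2 := by gcongr; exact hg x y
    _ = (ENNReal.ofReal (g m) * w m) ^ 2 := by
      rw [ENNReal.ofReal_pow (hg_nonneg _), mul_pow]

end Transfer

theorem volume {E : Type*} [NormedAddCommGroup E] [InnerProductSpace ℝ E] [FiniteDimensional ℝ E]
    [MeasurableSpace E] [BorelSpace E] : MidpointPrekopaLeindler (volume : Measure E) 0 :=
  (volume_real.pi (Module.finrank ℝ E)).of_measurePreserving
    ((stdOrthonormalBasis ℝ E).measurePreserving_repr_symm.comp
      (PiLp.volume_preserving_toLp (Fin (Module.finrank ℝ E))))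
    (fun _ _ => by simp) fun _ _ => by simp

end MidpointPrekopaLeindler

end MidpointPrekopaLeindler

section Gaussian

/-- The density of the standard Gaussian measure on `F` with respect to Lebesgue measure. -/
def stdGaussianDensity (F : Type*) [NormedAddCommGroup F] [NormedSpace ℝ F] (x : F) : ℝ :=
  (2 * π) ^ (-(Module.finrank ℝ F : ℝ) / 2) * exp (-‖x‖ ^ 2 / 2)

theorem stdGaussianDensity_nonneg {F : Type*} [NormedAddCommGroup F] [NormedSpace ℝ F] (x : F) :
    0 ≤ stdGaussianDensity F x := by
  unfold stdGaussianDensity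
  positivity

@[fun_prop]
theorem measurable_stdGaussianDensity {F : Type*} [NormedAddCommGroup F] [NormedSpace ℝ F]
    [MeasurableSpace F] [OpensMeasurableSpace F] : Measurable (stdGaussianDensity F) := by
  unfold stdGaussianDensity
  fun_prop

variable {F : Type*} [NormedAddCommGroup F] [InnerProductSpace ℝ F] [FiniteDimensional ℝ F]
  [MeasurableSpace F] [BorelSpace F]

theorem lintegral_exp_neg_mul_sq_norm_add_inner {b : ℝ} (hb : 0 < b) (w : F) :
    ∫⁻ x : F, ENNReal.ofReal (exp (-b * ‖x‖ ^ 2 + ⟪w, x⟫)) =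
      ENNReal.ofReal ((π / b) ^ (Module.finrank ℝ F / 2 : ℝ) * exp (‖w‖ ^ 2 / (4 * b))) := by
  have h_centered : ∫⁻ x : F, ENNReal.ofReal (exp (-b * ‖x‖ ^ 2)) =
      ENNReal.ofReal ((π / b) ^ (Module.finrank ℝ F / 2 : ℝ)) := by
    have h_integral := GaussianFourier.integral_rexp_neg_mul_sq_norm (V := F) hb
    have h_pos : 0 < (π / b) ^ (Module.finrank ℝ F / 2 : ℝ) := by positivity
    rw [← h_integral, ofReal_integral_eq_lintegral_ofReal
      (.of_integral_ne_zero (h_integral.trans_ne h_pos.ne')) (ae_of_all _ fun x => (exp_pos _).le)]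
  rw [← lintegral_add_right_eq_self _ ((1 / (2 * b)) • w), ENNReal.ofReal_mul (by positivity),
    ← h_centered, ← lintegral_mul_const _ (by fun_prop)]
  congr with x
  rw [← ENNReal.ofReal_mul (exp_pos _).le, ← Real.exp_add]
  congr 2
  rw [norm_add_sq_real, inner_add_right, inner_smul_right, inner_smul_right, norm_smul,
    real_inner_self_eq_norm_sq, real_inner_comm, mul_pow, Real.norm_eq_abs, sq_abs]
  field_simp
  ring

instance : IsProbabilityMeasure
    ((volume : Measure F).withDensity fun x => ENNReal.ofReal (stdGaussianDensity F x)) where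
  measure_univ := by
    have h_exp (x : F) : -‖x‖ ^ 2 / 2 = -(1 / 2) * ‖x‖ ^ 2 + ⟪(0 : F), x⟫ := by
      rw [inner_zero_left]
      ring
    simp only [withDensity_apply _ MeasurableSet.univ, Measure.restrict_univ, stdGaussianDensity,
      ENNReal.ofReal_mul (rpow_nonneg two_pi_pos.le _), h_exp]
    rw [lintegral_const_mul _ (by fun_prop), lintegral_exp_neg_mul_sq_norm_add_inner one_half_pos,
      ← ENNReal.ofReal_mul (by positivity), div_div_eq_mul_div, div_one, mul_comm π, norm_zero,
      ← mul_assoc, ← Real.rpow_add two_pi_pos]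
    simp [neg_div]

theorem stdGaussian_eq_withDensity :
    stdGaussian F = volume.withDensity fun x => ENNReal.ofReal (stdGaussianDensity F x) := by
  refine Measure.ext_of_charFun (funext fun t => ?_)
  have h_real (x : F) : ((stdGaussianDensity F x : ℝ) : ℂ) =
      (2 * π) ^ (-(Module.finrank ℝ F : ℂ) / 2) * Complex.exp (-(1 / 2) * ‖x‖ ^ 2) := by
    rw [stdGaussianDensity, Complex.ofReal_mul, Complex.ofReal_cpow two_pi_pos.le,
      Complex.ofReal_exp]
    push_cast
    ring_nf
  calc charFun (stdGaussian F) t = Complex.exp (-‖t‖ ^ 2 / 2) := charFun_stdGaussian t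
    _ = (2 * π) ^ (-(Module.finrank ℝ F : ℂ) / 2) * ∫ x : F,
          Complex.exp (-(1 / 2) * ‖x‖ ^ 2 + Complex.I * ⟪t, x⟫) := by
      rw [GaussianFourier.integral_cexp_neg_mul_sq_norm_add (by norm_num), div_div_eq_mul_div,
        div_one, mul_comm (π : ℂ), ← mul_assoc, ← Complex.cpow_add _ _ (by simp [pi_ne_zero]),
        Complex.I_sq]
      norm_num [neg_div]
    _ = charFun (volume.withDensity fun x => ENNReal.ofReal (stdGaussianDensity F x)) t := by
      rw [charFun_apply, integral_withDensity_eq_integral_toReal_smul (by fun_prop) (by simp),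
        ← integral_const_mul]
      congr with x
      rw [ENNReal.toReal_ofReal (stdGaussianDensity_nonneg x), Complex.real_smul, h_real,
        Complex.exp_add, real_inner_comm, mul_comm Complex.I, mul_assoc]

theorem lintegral_stdGaussian {f : F → ℝ≥0∞} (hf : Measurable f) :
    ∫⁻ x, f x ∂stdGaussian F = ∫⁻ x, ENNReal.ofReal (stdGaussianDensity F x) * f x := by
  rw [stdGaussian_eq_withDensity, lintegral_withDensity_eq_lintegral_mul _ (by fun_prop) hf]
  rfl

theorem midpointPrekopaLeindler_stdGaussian :
    MidpointPrekopaLeindler (stdGaussian F) fun x y => ‖x - y‖ ^ 2 / 4 := by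
  rw [stdGaussian_eq_withDensity]
  refine MidpointPrekopaLeindler.volume.withDensity (by fun_prop) stdGaussianDensity_nonneg
    fun x y => le_of_eq ?_
  have h_exp : exp (-‖x‖ ^ 2 / 2) * exp (-‖y‖ ^ 2 / 2) * exp (‖x - y‖ ^ 2 / 4) =
      exp (-‖(1 / 2 : ℝ) • (x + y)‖ ^ 2 / 2) ^ 2 := by
    rw [← Real.exp_add, ← Real.exp_add, ← Real.exp_nat_mul, norm_smul, mul_pow, norm_add_sq_real,
      norm_sub_sq_real]
    norm_num
    ring
  unfold stdGaussianDensity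
  rw [mul_pow, ← h_exp]
  ring

theorem lintegral_exp_mul_sq_norm_add_stdGaussian {l : ℝ} (hl : l < 1 / 2) (v : F) :
    ∫⁻ x, ENNReal.ofReal (exp (l * ‖v + x‖ ^ 2)) ∂stdGaussian F =
      ENNReal.ofReal ((1 - 2 * l) ^ (-(Module.finrank ℝ F : ℝ) / 2) *
        exp (l * ‖v‖ ^ 2 / (1 - 2 * l))) := by
  have hl' : 0 < 1 - 2 * l := by linarith
  have h_integrand (x : F) : ENNReal.ofReal (stdGaussianDensity F x) *
      ENNReal.ofReal (exp (l * ‖v + x‖ ^ 2)) =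
      ENNReal.ofReal ((2 * π) ^ (-(Module.finrank ℝ F : ℝ) / 2) * exp (l * ‖v‖ ^ 2)) *
        ENNReal.ofReal (exp (-((1 - 2 * l) / 2) * ‖x‖ ^ 2 + ⟪(2 * l) • v, x⟫)) := by
    rw [← ENNReal.ofReal_mul (stdGaussianDensity_nonneg x), ← ENNReal.ofReal_mul (by positivity),
      stdGaussianDensity, mul_assoc, mul_assoc, ← Real.exp_add, ← Real.exp_add, norm_add_sq_real,
      real_inner_smul_left]
    ring_nf
  have h_exp : exp (l * ‖v‖ ^ 2) * exp (‖(2 * l) • v‖ ^ 2 / (4 * ((1 - 2 * l) / 2))) =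
      exp (l * ‖v‖ ^ 2 / (1 - 2 * l)) := by
    rw [← Real.exp_add, norm_smul, mul_pow, Real.norm_eq_abs, sq_abs]
    congr 1
    rw [eq_div_iff hl'.ne', show 4 * ((1 - 2 * l) / 2) = 2 * (1 - 2 * l) by ring, add_mul,
      ← div_div, div_mul_cancel₀ _ hl'.ne']
    ring
  rw [lintegral_stdGaussian (by fun_prop)]
  simp_rw [h_integrand]
  rw [lintegral_const_mul _ (by fun_prop), lintegral_exp_neg_mul_sq_norm_add_inner (by positivity),
    ← ENNReal.ofReal_mul (by positivity), mul_mul_mul_comm, h_exp, div_div_eq_mul_div,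
    mul_comm π, div_rpow two_pi_pos.le hl'.le, neg_div, rpow_neg two_pi_pos.le, rpow_neg hl'.le]
  congr 2
  field_simp

theorem lintegral_mul_exp_inner_stdGaussian {f : F → ℝ≥0∞} (hf : Measurable f) (w : F) :
    ∫⁻ x, f x * ENNReal.ofReal (exp ⟪x, w⟫) ∂stdGaussian F =
      ENNReal.ofReal (exp (‖w‖ ^ 2 / 2)) * ∫⁻ x, f (x + w) ∂stdGaussian F := by
  have h_density (x : F) : stdGaussianDensity F (x + w) * exp ⟪x + w, w⟫ =
      exp (‖w‖ ^ 2 / 2) * stdGaussianDensity F x := by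
    rw [stdGaussianDensity, stdGaussianDensity, mul_assoc, ← Real.exp_add, mul_left_comm,
      ← Real.exp_add, norm_add_sq_real, inner_add_left, real_inner_self_eq_norm_sq]
    ring_nf
  rw [lintegral_stdGaussian (by fun_prop), lintegral_stdGaussian (by fun_prop),
    ← lintegral_add_right_eq_self _ w, ← lintegral_const_mul _ (by fun_prop)]
  congr with x
  rw [mul_left_comm, ← ENNReal.ofReal_mul (stdGaussianDensity_nonneg _), h_density,
    ENNReal.ofReal_mul (exp_pos _).le]
  ring

theorem map_inner_stdGaussian (y : F) :
    (stdGaussian F).map (fun x => ⟪x, y⟫) = gaussianReal 0 (‖y‖₊ ^ 2) := by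
  have h := IsGaussian.map_eq_gaussianReal (μ := stdGaussian F) (innerSL ℝ y)
  rw [variance_dual_stdGaussian, integral_strongDual_stdGaussian, innerSL_apply_norm] at h
  rw [Real.toNNReal_pow (norm_nonneg y), norm_toNNReal] at h
  simp_rw [real_inner_comm y]
  exact h

theorem lintegral_exp_neg_sq_sub_inner_stdGaussian (y : F) (a : ℝ) :
    ∫⁻ x, ENNReal.ofReal (exp (-(a - ⟪x, y⟫) ^ 2 / 2)) ∂stdGaussian F =
      ENNReal.ofReal ((√(1 + ‖y‖ ^ 2))⁻¹ * exp (-a ^ 2 / (2 * (1 + ‖y‖ ^ 2)))) := by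
  rcases eq_or_ne y 0 with rfl | hy
  · simp
  have hy' : ‖y‖ ≠ 0 := norm_ne_zero_iff.2 hy
  have h_law : (stdGaussian F).map (fun x => ⟪x, y⟫) =
      (stdGaussian ℝ).map (fun x => ⟪x, ‖y‖⟫) := by
    simp only [map_inner_stdGaussian, nnnorm_norm]
  calc ∫⁻ x, ENNReal.ofReal (exp (-(a - ⟪x, y⟫) ^ 2 / 2)) ∂stdGaussian F
      = ∫⁻ x : ℝ, ENNReal.ofReal (exp (-(a - ⟪x, ‖y‖⟫) ^ 2 / 2)) ∂stdGaussian ℝ := by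
        rw [← lintegral_map (f := fun z => ENNReal.ofReal (exp (-(a - z) ^ 2 / 2)))
          (g := fun x : F => ⟪x, y⟫) (by fun_prop) (by fun_prop), h_law,
          lintegral_map (by fun_prop) (by fun_prop)]
    _ = ∫⁻ x : ℝ, ENNReal.ofReal (exp (-‖y‖ ^ 2 / 2 * ‖-(a / ‖y‖) + x‖ ^ 2)) ∂stdGaussian ℝ := by
        congr with x
        rw [Real.norm_eq_abs (-(a / ‖y‖) + x), sq_abs]
        simp only [RCLike.inner_apply, conj_trivial]
        congr 2
        field_simp
        ring
    _ = _ := by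
        rw [lintegral_exp_mul_sq_norm_add_stdGaussian (by linarith [sq_nonneg ‖y‖]),
          Module.finrank_self, norm_neg, Real.norm_eq_abs, sq_abs, Real.sqrt_eq_rpow,
          ← rpow_neg (by positivity)]
        have h_one : 1 - 2 * (-‖y‖ ^ 2 / 2) = 1 + ‖y‖ ^ 2 := by ring
        rw [h_one]
        congr 3
        · norm_num
        · field_simp

theorem neg_sq_sub_div_two_mul_le {a m r s : ℝ} (hr : 0 < r) (hm : m ^ 2 ≤ s * r) :
    -(a - m) ^ 2 / (2 * r) ≤ -a ^ 2 / (4 * r) + s / 2 := by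
  have h_diff : -a ^ 2 / (4 * r) + s / 2 - -(a - m) ^ 2 / (2 * r) =
      (2 * (s * r - m ^ 2) + (a - 2 * m) ^ 2) / (4 * r) := by
    field_simp
    ring
  have h_nonneg : 0 ≤ (2 * (s * r - m ^ 2) + (a - 2 * m) ^ 2) / (4 * r) :=
    div_nonneg (by nlinarith [sq_nonneg (a - 2 * m)]) (by positivity)
  linarith

theorem sq_norm_half_smul_add_neg_sq_sub_inner_div_le {F : Type*} [NormedAddCommGroup F]
    [InnerProductSpace ℝ F] (y : F) {θ : F} (hθ : ‖θ‖ ≤ 1) (a g : ℝ) :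
    ‖(g / 2) • θ‖ ^ 2 / 2 + -(a - ⟪(g / 2) • θ, y⟫) ^ 2 / (2 * (1 + ‖y‖ ^ 2)) ≤
      -a ^ 2 / (4 * (1 + ‖y‖ ^ 2)) + g ^ 2 / 4 := by
  have h_norm : ‖(g / 2) • θ‖ ^ 2 ≤ g ^ 2 / 4 := by
    rw [norm_smul, mul_pow, Real.norm_eq_abs, sq_abs]
    nlinarith [mul_le_mul_of_nonneg_left (pow_le_one₀ (n := 2) (norm_nonneg θ) hθ)
      (sq_nonneg (g / 2))]
  have h_inner : ⟪(g / 2) • θ, y⟫ ^ 2 ≤ g ^ 2 / 4 * (1 + ‖y‖ ^ 2) := by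
    calc ⟪(g / 2) • θ, y⟫ ^ 2 ≤ (‖(g / 2) • θ‖ * ‖y‖) ^ 2 := sq_le_sq' (neg_le_of_abs_le
          (abs_real_inner_le_norm _ _)) (real_inner_le_norm _ _)
      _ = ‖(g / 2) • θ‖ ^ 2 * ‖y‖ ^ 2 := mul_pow _ _ _
      _ ≤ g ^ 2 / 4 * (1 + ‖y‖ ^ 2) := by gcongr; linarith
  linarith [neg_sq_sub_div_two_mul_le (a := a) (by positivity : 0 < 1 + ‖y‖ ^ 2) h_inner]

theorem ofReal_exp_sq_div_eight_eq_lintegral_stdGaussian (w : ℝ) :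
    ENNReal.ofReal (exp (w ^ 2 / 8)) =
      ∫⁻ g : ℝ, ENNReal.ofReal (exp (g / 2 * w)) ∂stdGaussian ℝ := by
  have h := lintegral_mul_exp_inner_stdGaussian (F := ℝ) (f := 1) measurable_one (w / 2)
  simp only [Pi.one_apply, one_mul, lintegral_const, measure_univ, mul_one, Real.norm_eq_abs,
    sq_abs, RCLike.inner_apply, conj_trivial] at h
  rw [show w ^ 2 / 8 = (w / 2) ^ 2 / 2 by ring, ← h]
  congr with g
  ring_nf

/-- The linearisation `exp (w ^ 2 / 8) = 𝔼 exp (w * g / 2)` reduces this to Gaussian shifts. -/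
theorem lintegral_exp_neg_sq_sub_inner_mul_exp_sq_inner_stdGaussian_le (y θ : F) (hθ : ‖θ‖ ≤ 1)
    (a : ℝ) :
    ∫⁻ x, ENNReal.ofReal (exp (-(a - ⟪x, y⟫) ^ 2 / 2)) * ENNReal.ofReal (exp (⟪x, θ⟫ ^ 2 / 8))
        ∂stdGaussian F ≤
      ENNReal.ofReal (√2 * (√(1 + ‖y‖ ^ 2))⁻¹ * exp (-a ^ 2 / (4 * (1 + ‖y‖ ^ 2)))) := by
  set r := 1 + ‖y‖ ^ 2 with hr
  calc ∫⁻ x, ENNReal.ofReal (exp (-(a - ⟪x, y⟫) ^ 2 / 2)) * ENNReal.ofReal (exp (⟪x, θ⟫ ^ 2 / 8))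
        ∂stdGaussian F
      = ∫⁻ x, ∫⁻ g : ℝ, ENNReal.ofReal (exp (-(a - ⟪x, y⟫) ^ 2 / 2)) *
          ENNReal.ofReal (exp ⟪x, (g / 2) • θ⟫) ∂stdGaussian ℝ ∂stdGaussian F := by
        simp_rw [inner_smul_right, ofReal_exp_sq_div_eight_eq_lintegral_stdGaussian]
        congr with x
        rw [lintegral_const_mul _ (by fun_prop)]
    _ = ∫⁻ g : ℝ, ENNReal.ofReal (exp (‖(g / 2) • θ‖ ^ 2 / 2)) * ENNReal.ofReal ((√r)⁻¹ *
          exp (-(a - ⟪(g / 2) • θ, y⟫) ^ 2 / (2 * r))) ∂stdGaussian ℝ := by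
        rw [lintegral_lintegral_swap (Measurable.aemeasurable (by fun_prop))]
        congr with g
        rw [lintegral_mul_exp_inner_stdGaussian (by fun_prop), hr,
          ← lintegral_exp_neg_sq_sub_inner_stdGaussian]
        simp only [inner_add_left, sub_sub, add_comm]
    _ ≤ ∫⁻ g : ℝ, ENNReal.ofReal ((√r)⁻¹ * exp (-a ^ 2 / (4 * r))) *
          ENNReal.ofReal (exp (1 / 4 * ‖0 + g‖ ^ 2)) ∂stdGaussian ℝ := by
        refine lintegral_mono fun g => ?_
        rw [← ENNReal.ofReal_mul (by positivity), ← ENNReal.ofReal_mul (by positivity),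
          mul_left_comm, mul_assoc, ← Real.exp_add, ← Real.exp_add, zero_add, Real.norm_eq_abs,
          sq_abs, one_div_mul_eq_div]
        exact ENNReal.ofReal_le_ofReal (mul_le_mul_of_nonneg_left
          (Real.exp_le_exp.2 (sq_norm_half_smul_add_neg_sq_sub_inner_div_le y hθ a g))
          (by positivity))
    _ = ENNReal.ofReal (√2 * (√r)⁻¹ * exp (-a ^ 2 / (4 * r))) := by
        have h_sqrt : (1 - 2 * (1 / 4 : ℝ)) ^ (-(1 : ℝ) / 2) = √2 := by
          rw [Real.sqrt_eq_rpow, show 1 - 2 * (1 / 4 : ℝ) = 2⁻¹ by norm_num,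
            Real.inv_rpow zero_le_two, ← Real.rpow_neg zero_le_two]
          norm_num
        rw [lintegral_const_mul _ (by fun_prop), lintegral_exp_mul_sq_norm_add_stdGaussian
          (by norm_num), ← ENNReal.ofReal_mul (by positivity), Module.finrank_self, Nat.cast_one,
          h_sqrt, norm_zero]
        congr 1
        norm_num
        ring

end Gaussian

section LogConcave

variable {E : Type*}

theorem IsLogConcaveFn.mul_le_midpoint_sq [AddCommGroup E] [Module ℝ E] {f : E → ℝ}
    (hf : IsLogConcaveFn f) (x y : E) : f x * f y ≤ f ((1 / 2 : ℝ) • (x + y)) ^ 2 := by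
  have h := hf.2 x y (1 / 2) (by norm_num) (by norm_num)
  rw [sub_half, ← Real.sqrt_eq_rpow, ← Real.sqrt_eq_rpow, ← smul_add] at h
  calc f x * f y = (√(f x) * √(f y)) ^ 2 := by
        rw [mul_pow, Real.sq_sqrt (hf.1 x), Real.sq_sqrt (hf.1 y)]
    _ ≤ f ((1 / 2 : ℝ) • (x + y)) ^ 2 := by gcongr

theorem IsLogConcaveFn.convex_setOf_pos [AddCommGroup E] [Module ℝ E] {f : E → ℝ}
    (hf : IsLogConcaveFn f) : Convex ℝ {x | 0 < f x} := by
  intro x (hx : 0 < f x) y (hy : 0 < f y) a b ha hb hab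
  obtain rfl : b = 1 - a := by linarith
  exact (by positivity : 0 < f x ^ a * f y ^ (1 - a)).trans_le (hf.2 x y a ha (by linarith))

theorem IsLogConcaveFn.concaveOn_log [AddCommGroup E] [Module ℝ E] {f : E → ℝ}
    (hf : IsLogConcaveFn f) : ConcaveOn ℝ {x | 0 < f x} fun x => Real.log (f x) := by
  refine ⟨hf.convex_setOf_pos, fun x (hx : 0 < f x) y (hy : 0 < f y) a b ha hb hab => ?_⟩
  obtain rfl : b = 1 - a := by linarith
  have h := Real.log_le_log (by positivity) (hf.2 x y a ha (by linarith))
  rwa [Real.log_mul (by positivity) (by positivity), Real.log_rpow hx, Real.log_rpow hy] at h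

variable [NormedAddCommGroup E] [InnerProductSpace ℝ E] [FiniteDimensional ℝ E]

theorem IsLogConcaveFn.continuousOn_interior {f : E → ℝ} (hf : IsLogConcaveFn f) :
    ContinuousOn f (interior {x | 0 < f x}) := by
  have h_log := (hf.concaveOn_log.subset interior_subset
    hf.convex_setOf_pos.interior).continuousOn isOpen_interior
  refine h_log.rexp.congr fun x hx => ?_
  have hx_pos : x ∈ {x | 0 < f x} := interior_subset hx
  exact (Real.exp_log hx_pos).symm

variable [MeasurableSpace E] [BorelSpace E]

theorem IsLogConcaveFn.indicator_interior_ae_eq {f : E → ℝ} (hf : IsLogConcaveFn f) :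
    (interior {x | 0 < f x}).indicator f =ᵐ[volume] f := by
  filter_upwards [measure_eq_zero_iff_ae_notMem.1 (hf.convex_setOf_pos.addHaar_frontier volume)]
    with x hx
  by_cases hx_int : x ∈ interior {x | 0 < f x}
  · exact Set.indicator_of_mem hx_int f
  · rw [Set.indicator_of_notMem hx_int]
    exact le_antisymm (hf.1 x) (not_lt.1 fun hx_pos => hx ⟨subset_closure hx_pos, hx_int⟩)

theorem IsLogConcaveFn.midpointPrekopaLeindler {f : E → ℝ} (hf : IsLogConcaveFn f) :
    MidpointPrekopaLeindler (volume.withDensity fun x => ENNReal.ofReal (f x)) 0 := by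
  set S := interior {x | 0 < f x}
  have h_ae : (fun x => ENNReal.ofReal (f x)) =ᵐ[volume]
      fun x => ENNReal.ofReal (S.indicator f x) := by
    filter_upwards [hf.indicator_interior_ae_eq] with x hx
    rw [hx]
  have h_meas : Measurable (S.indicator f) := by
    classical
    rw [← Set.piecewise_eq_indicator]
    exact hf.continuousOn_interior.measurable_piecewise continuousOn_const
      isOpen_interior.measurableSet
  have h_nonneg (x : E) : 0 ≤ S.indicator f x := Set.indicator_nonneg (fun y _ => hf.1 y) x
  rw [withDensity_congr_ae h_ae]
  refine MidpointPrekopaLeindler.volume.withDensity h_meas h_nonneg fun x y => ?_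
  rw [Pi.zero_apply, Pi.zero_apply, Real.exp_zero, mul_one]
  by_cases hx : x ∈ S
  · by_cases hy : y ∈ S
    · have h_mid : (1 / 2 : ℝ) • (x + y) ∈ S := by
        rw [smul_add]
        exact hf.convex_setOf_pos.interior hx hy (by norm_num) (by norm_num) (by norm_num)
      simpa only [Set.indicator_of_mem, hx, hy, h_mid] using hf.mul_le_midpoint_sq x y
    · simp only [Set.indicator_of_notMem hy, mul_zero, sq_nonneg]
  · simp only [Set.indicator_of_notMem hx, zero_mul, sq_nonneg]

end LogConcave

section Isotropic

variable {E : Type*} [NormedAddCommGroup E] [InnerProductSpace ℝ E] [MeasurableSpace E]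

/-- The law of an isotropic random vector: centred, with identity covariance. -/
structure IsIsotropicLaw (μ : Measure E) : Prop where
  integral_id : ∫ x, x ∂μ = 0
  integral_inner_mul_inner (θ η : E) : ∫ x, ⟪x, θ⟫ * ⟪x, η⟫ ∂μ = ⟪θ, η⟫

namespace IsIsotropicLaw

variable {μ : Measure E}

theorem integral_sq_inner (h : IsIsotropicLaw μ) (v : E) : ∫ x, ⟪x, v⟫ ^ 2 ∂μ = ‖v‖ ^ 2 := by
  simpa only [sq, real_inner_self_eq_norm_mul_norm] using h.integral_inner_mul_inner v v

theorem integrable_sq_inner (h : IsIsotropicLaw μ) (v : E) :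
    Integrable (fun x => ⟪x, v⟫ ^ 2) μ := by
  rcases eq_or_ne v 0 with rfl | hv
  · simp
  · exact .of_integral_ne_zero (by simpa [h.integral_sq_inner] using hv)

theorem lintegral_sq_inner (h : IsIsotropicLaw μ) (v : E) :
    ∫⁻ x, ENNReal.ofReal (⟪x, v⟫ ^ 2) ∂μ = ENNReal.ofReal (‖v‖ ^ 2) := by
  rw [← ofReal_integral_eq_lintegral_ofReal (h.integrable_sq_inner v)
    (ae_of_all _ fun x => sq_nonneg _), h.integral_sq_inner]

variable [BorelSpace E] [FiniteDimensional ℝ E] [IsFiniteMeasure μ]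

theorem integrable_inner (h : IsIsotropicLaw μ) (v : E) : Integrable (fun x => ⟪x, v⟫) μ :=
  MemLp.integrable one_le_two
    ((memLp_two_iff_integrable_sq (by fun_prop)).2 (h.integrable_sq_inner v))

theorem integral_inner (h : IsIsotropicLaw μ) (v : E) : ∫ x, ⟪x, v⟫ ∂μ = 0 := by
  have h_int : Integrable (fun x : E => x) μ := by
    have h_sum := integrable_finsetSum Finset.univ fun i _ =>
      (h.integrable_inner (stdOrthonormalBasis ℝ E i)).smul_const (stdOrthonormalBasis ℝ E i)
    refine h_sum.congr (ae_of_all _ fun x => ?_)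
    simp_rw [real_inner_comm _ x]
    exact (stdOrthonormalBasis ℝ E).sum_repr' x
  simp_rw [real_inner_comm v]
  rw [_root_.integral_inner h_int v, h.integral_id, inner_zero_right]

theorem measure_pos_inner_ne_zero (h : IsIsotropicLaw μ) {v : E} (hv : v ≠ 0) :
    μ {x | 0 < ⟪x, v⟫} ≠ 0 := by
  intro h_null
  have h_nonpos : ∀ᵐ x ∂μ, 0 ≤ -⟪x, v⟫ := by
    filter_upwards [measure_eq_zero_iff_ae_notMem.1 h_null] with x hx
    simpa using hx
  have h_zero : (fun x => -⟪x, v⟫) =ᵐ[μ] 0 := by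
    rw [← integral_eq_zero_iff_of_nonneg_ae h_nonpos (h.integrable_inner v).neg, integral_neg,
      h.integral_inner, neg_zero]
  have h_sq : ∫ x, ⟪x, v⟫ ^ 2 ∂μ = 0 := integral_eq_zero_of_ae <| by
    filter_upwards [h_zero] with x hx
    simp [neg_eq_zero.1 hx]
  exact hv (by simpa [h.integral_sq_inner] using h_sq)

end IsIsotropicLaw

end Isotropic

section Moments

variable {E : Type*} [NormedAddCommGroup E] [InnerProductSpace ℝ E] [MeasurableSpace E]
  {μ : Measure E}

/-- A law with `ψ_α` one-dimensional marginals of constant `b`. -/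
def IsPsiAlphaLaw (μ : Measure E) (α b : ℝ) : Prop :=
  ∀ p : ℝ, 2 ≤ p → ∀ v : E, (∫ x, |⟪x, v⟫| ^ p ∂μ) ^ (1 / p) ≤
    b * p ^ (1 / α) * (∫ x, ⟪x, v⟫ ^ 2 ∂μ) ^ ((1 : ℝ) / 2)

theorem IsPsiAlphaLaw.half_le [Nontrivial E] {α b : ℝ} (hψ : IsPsiAlphaLaw μ α b)
    (h : IsIsotropicLaw μ) (hα : 1 ≤ α) : 1 / 2 ≤ b := by
  obtain ⟨v, hv⟩ := exists_norm_eq E zero_le_one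
  have h_two := hψ 2 le_rfl v
  simp only [rpow_two, sq_abs, h.integral_sq_inner, hv, one_pow, one_rpow, mul_one] at h_two
  have h_rpow : (2 : ℝ) ^ (1 / α) ≤ 2 := by
    simpa using rpow_le_rpow_of_exponent_le one_le_two ((div_le_one (by linarith)).2 hα)
  nlinarith [rpow_pos_of_pos two_pos (1 / α)]

variable [BorelSpace E] [FiniteDimensional ℝ E]

theorem MidpointPrekopaLeindler.lintegral_posPart_inner_pow_mul_measure_le
    (hμ : MidpointPrekopaLeindler μ 0) (v : E) (q : ℕ) :
    (∫⁻ x, ENNReal.ofReal (⟪x, v⟫⁺ ^ (2 * q)) ∂μ) * μ {x | 0 < ⟪x, v⟫} ≤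
      (2 ^ q * ∫⁻ x, ENNReal.ofReal (⟪x, v⟫⁺ ^ q) ∂μ) ^ 2 := by
  have h_meas : MeasurableSet {x : E | 0 < ⟪x, v⟫} := measurableSet_lt (by fun_prop) (by fun_prop)
  have : Measurable fun x : E => ⟪x, v⟫⁺ := by simp only [posPart_def]; fun_prop
  rw [← lintegral_indicator_one h_meas, ← lintegral_const_mul (2 ^ q) (by fun_prop)]
  refine hμ _ _ _ (by fun_prop) (measurable_one.indicator h_meas) (by fun_prop) fun x y => ?_
  rw [Pi.zero_apply, Pi.zero_apply, exp_zero, ENNReal.ofReal_one, mul_one]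
  by_cases hy : 0 < ⟪y, v⟫
  · have h_mid : ⟪x, v⟫⁺ ≤ 2 * ⟪(1 / 2 : ℝ) • (x + y), v⟫⁺ := by
      have h_le := le_posPart ⟪(1 / 2 : ℝ) • (x + y), v⟫
      rw [real_inner_smul_left, inner_add_left] at h_le ⊢
      exact max_le (by linarith) (by positivity)
    rw [Set.indicator_of_mem (s := {y | 0 < ⟪y, v⟫}) hy, Pi.one_apply, mul_one,
      ← ENNReal.ofReal_ofNat 2, ← ENNReal.ofReal_pow zero_le_two,
      ← ENNReal.ofReal_mul (by positivity), ← ENNReal.ofReal_pow (by positivity), ← mul_pow,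
      ← pow_mul, mul_comm q 2]
    gcongr
  · simp [hy]

theorem lintegral_posPart_inner_two_pow_ne_top (hμ : MidpointPrekopaLeindler μ 0)
    [IsFiniteMeasure μ] (h : IsIsotropicLaw μ) {v : E} (hv : v ≠ 0) (j : ℕ) :
    ∫⁻ x, ENNReal.ofReal (⟪x, v⟫⁺ ^ 2 ^ (j + 1)) ∂μ ≠ ∞ := by
  induction j with
  | zero =>
    refine ne_top_of_le_ne_top (h.lintegral_sq_inner v ▸ ENNReal.ofReal_ne_top)
      (lintegral_mono fun x => ENNReal.ofReal_le_ofReal ?_)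
    rw [zero_add, pow_one, ← sq_abs ⟪x, v⟫]
    gcongr
    exact max_le (le_abs_self _) (abs_nonneg _)
  | succ j ih =>
    intro h_top
    have h_bound := hμ.lintegral_posPart_inner_pow_mul_measure_le v (2 ^ (j + 1))
    rw [← pow_succ', h_top, ENNReal.top_mul (h.measure_pos_inner_ne_zero hv), top_le_iff] at h_bound
    exact ENNReal.pow_ne_top (ENNReal.mul_ne_top (by simp) ih) h_bound

theorem memLp_inner (hμ : MidpointPrekopaLeindler μ 0) [IsFiniteMeasure μ]
    (h : IsIsotropicLaw μ) (v : E) (p : ℕ) : MemLp (fun x => ⟪x, v⟫) p μ := by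
  rcases eq_or_ne v 0 with rfl | hv
  · simp
  have h_pos {w : E} (hw : w ≠ 0) : MemLp (fun x => ⟪x, w⟫⁺) ((2 ^ (p + 1) : ℕ) : ℝ≥0∞) μ := by
    have h_meas : Measurable fun x : E => ⟪x, w⟫⁺ := by simp only [posPart_def]; fun_prop
    refine ⟨h_meas.aestronglyMeasurable, ?_⟩
    rw [eLpNorm_lt_top_iff_lintegral_rpow_enorm_lt_top (by simp) (by simp)]
    refine lt_top_iff_ne_top.2 ?_
    convert lintegral_posPart_inner_two_pow_ne_top hμ h hw p using 3 with x
    rw [ENNReal.toReal_natCast, ENNReal.rpow_natCast, Real.enorm_of_nonneg (posPart_nonneg _),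
      ENNReal.ofReal_pow (posPart_nonneg _)]
  have h_sub := (h_pos hv).sub (h_pos (neg_ne_zero.2 hv))
  simp only [Pi.sub_def, inner_neg_right, posPart_neg, posPart_sub_negPart] at h_sub
  refine h_sub.mono_exponent ?_
  exact_mod_cast (Nat.lt_two_pow_self.le.trans (Nat.pow_le_pow_right two_pos p.le_succ))

theorem IsPsiAlphaLaw.lintegral_inner_pow_le {α b : ℝ} (hψ : IsPsiAlphaLaw μ α b)
    (hμ : MidpointPrekopaLeindler μ 0) [IsFiniteMeasure μ] (h : IsIsotropicLaw μ) (v : E)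
    {m : ℕ} (hm : m ≠ 0) :
    ∫⁻ x, ENNReal.ofReal (⟪x, v⟫ ^ (2 * m)) ∂μ ≤
      ENNReal.ofReal ((b * (2 * m) ^ (1 / α) * ‖v‖) ^ (2 * m)) := by
  have h_abs (x : E) : |⟪x, v⟫| ^ (2 * (m : ℝ)) = ⟪x, v⟫ ^ (2 * m) := by
    rw [← (even_two_mul m).pow_abs, ← rpow_natCast]
    push_cast
    rfl
  have h_nonneg (x : E) : 0 ≤ ⟪x, v⟫ ^ (2 * m) := (even_two_mul m).pow_nonneg _
  have h_int : Integrable (fun x => ⟪x, v⟫ ^ (2 * m)) μ := by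
    refine ((memLp_inner hμ h v (2 * m)).integrable_norm_pow (by positivity)).congr
      (ae_of_all _ fun x => ?_)
    simp only [Real.norm_eq_abs, (even_two_mul m).pow_abs]
  have h_psi := hψ (2 * m) (by exact_mod_cast Nat.le_mul_of_pos_right 2 (by positivity)) v
  rw [h.integral_sq_inner, ← Real.sqrt_eq_rpow, Real.sqrt_sq (norm_nonneg v)] at h_psi
  simp_rw [h_abs] at h_psi
  rw [← ofReal_integral_eq_lintegral_ofReal h_int (ae_of_all _ h_nonneg)]
  refine ENNReal.ofReal_le_ofReal ?_
  have h_integral_nonneg := integral_nonneg (μ := μ) (f := fun x => ⟪x, v⟫ ^ (2 * m)) h_nonneg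
  calc ∫ x, ⟪x, v⟫ ^ (2 * m) ∂μ
      = ((∫ x, ⟪x, v⟫ ^ (2 * m) ∂μ) ^ (1 / (2 * m : ℝ))) ^ (2 * m) := by
        rw [← rpow_natCast, ← rpow_mul h_integral_nonneg]
        push_cast
        rw [one_div_mul_cancel (by positivity), rpow_one]
    _ ≤ (b * (2 * m) ^ (1 / α) * ‖v‖) ^ (2 * m) := by gcongr

end Moments

section ProdHalfLine

variable {E : Type*} [MeasurableSpace E]

/-- The product of `μ` with Lebesgue measure on the open half-line. -/
def prodHalfLine (μ : Measure E) : Measure (E × ℝ) :=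
  μ.prod (volume.restrict (Set.Ioi 0))

instance (μ : Measure E) [SFinite μ] : SFinite (prodHalfLine μ) := by
  unfold prodHalfLine
  infer_instance

theorem ae_prodHalfLine_pos (μ : Measure E) : ∀ᵐ z ∂prodHalfLine μ, 0 < z.2 :=
  Measure.quasiMeasurePreserving_snd.ae (ae_restrict_mem measurableSet_Ioi)

theorem lintegral_prodHalfLine {μ : Measure E} {f : E × ℝ → ℝ≥0∞} (hf : Measurable f) :
    ∫⁻ z, f z ∂prodHalfLine μ = ∫⁻ x, ∫⁻ t in Set.Ioi (0 : ℝ), f (x, t) ∂volume ∂μ :=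
  lintegral_prod _ hf.aemeasurable

theorem MidpointPrekopaLeindler.lintegral_prodHalfLine_mul_le [AddCommGroup E]
    [Module ℝ E] {μ : Measure E} [SFinite μ] (hμ : MidpointPrekopaLeindler μ 0)
    {u v w : E × ℝ → ℝ≥0∞} (hu : Measurable u) (hv : Measurable v) (hw : Measurable w)
    (h : ∀ y z, 0 < y.2 → 0 < z.2 → u y * v z ≤ w ((1 / 2 : ℝ) • (y + z)) ^ 2) :
    (∫⁻ z, u z ∂prodHalfLine μ) * ∫⁻ z, v z ∂prodHalfLine μ ≤
      (∫⁻ z, w z ∂prodHalfLine μ) ^ 2 := by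
  have h_restrict : prodHalfLine μ =
      (μ.prod MeasureTheory.volume).restrict (Set.univ ×ˢ Set.Ioi (0 : ℝ)) := by
    rw [prodHalfLine, ← Measure.prod_restrict, Measure.restrict_univ]
  have h_meas : MeasurableSet ((Set.univ : Set E) ×ˢ Set.Ioi (0 : ℝ)) :=
    MeasurableSet.univ.prod measurableSet_Ioi
  simp only [h_restrict, ← lintegral_indicator h_meas]
  refine hμ.prod .volume_real _ _ _ (hu.indicator h_meas) (hv.indicator h_meas)
    (hw.indicator h_meas) fun y z => ?_
  by_cases hy : 0 < y.2
  · by_cases hz : 0 < z.2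
    · have h_mid : 0 < ((1 / 2 : ℝ) • (y + z)).2 := mul_pos one_half_pos (add_pos hy hz)
      simpa only [Set.indicator, Set.mem_prod, Set.mem_univ, Set.mem_Ioi, hy, hz, h_mid, and_self,
        if_true, Pi.zero_apply, add_zero, exp_zero, ENNReal.ofReal_one, mul_one] using h y z hy hz
    · simp [Set.indicator, hz]
  · simp [Set.indicator, hy]

end ProdHalfLine

section RayMoment

variable {E F : Type*} [NormedAddCommGroup E] [NormedSpace ℝ E] [NormedAddCommGroup F]
  [InnerProductSpace ℝ F] {k : ℕ}

/-- The squared distance `|t e - Γ L x|²` in `ℝᵏ`, where `z = (x, t)` and `Γ` is the operator with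
rows `Γ i`. -/
def residualSq (L : E →L[ℝ] F) (e : Fin k → ℝ) (Γ : Fin k → F) (z : E × ℝ) : ℝ :=
  ∑ i, (z.2 * e i - ⟪Γ i, L z.1⟫) ^ 2

theorem residualSq_nonneg (L : E →L[ℝ] F) (e : Fin k → ℝ) (Γ : Fin k → F) (z : E × ℝ) :
    0 ≤ residualSq L e Γ z :=
  Finset.sum_nonneg fun _ _ => sq_nonneg _

theorem two_mul_residualSq_midpoint_le (L : E →L[ℝ] F) (e : Fin k → ℝ) (Γ : Fin k → F)
    (z w : E × ℝ) :
    2 * residualSq L e Γ ((1 / 2 : ℝ) • (z + w)) ≤ residualSq L e Γ z + residualSq L e Γ w := by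
  unfold residualSq
  rw [Finset.mul_sum, ← Finset.sum_add_distrib]
  refine Finset.sum_le_sum fun i _ => ?_
  simp only [Prod.smul_snd, Prod.snd_add, Prod.smul_fst, Prod.fst_add, map_smul, map_add,
    inner_smul_right, inner_add_right, smul_eq_mul]
  nlinarith [sq_nonneg ((z.2 * e i - ⟪Γ i, L z.1⟫) - (w.2 * e i - ⟪Γ i, L w.1⟫))]

variable [MeasurableSpace E]

/-- The `q`-th moment, along the ray spanned by `e`, of the (unnormalised) density of
`Γ L X + G`, where `X` has law `μ` and `G` is a standard Gaussian vector in `ℝᵏ`. -/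
def rayMoment (μ : Measure E) (L : E →L[ℝ] F) (e : Fin k → ℝ) (q : ℝ) (Γ : Fin k → F) : ℝ≥0∞ :=
  ∫⁻ z, ENNReal.ofReal (z.2 ^ q * exp (-residualSq L e Γ z / 2)) ∂prodHalfLine μ

variable [OpensMeasurableSpace E] [FiniteDimensional ℝ F] [MeasurableSpace F] [BorelSpace F]

@[fun_prop]
theorem measurable_residualSq_uncurry (L : E →L[ℝ] F) (e : Fin k → ℝ) :
    Measurable fun p : (Fin k → F) × (E × ℝ) => residualSq L e p.1 p.2 := by
  unfold residualSq
  fun_prop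

@[fun_prop]
theorem measurable_residualSq (L : E →L[ℝ] F) (e : Fin k → ℝ) (Γ : Fin k → F) :
    Measurable (residualSq L e Γ) := by
  unfold residualSq
  fun_prop

@[fun_prop]
theorem measurable_rayMoment (μ : Measure E) [SFinite μ] (L : E →L[ℝ] F) (e : Fin k → ℝ) (q : ℝ) :
    Measurable (rayMoment μ L e q) :=
  Measurable.lintegral_prod_right' (f := fun p : (Fin k → F) × (E × ℝ) =>
    ENNReal.ofReal (p.2.2 ^ q * exp (-residualSq L e p.1 p.2 / 2))) (by fun_prop)

theorem rayMoment_mul_rayMoment_le {μ : Measure E} [SFinite μ] (hμ : MidpointPrekopaLeindler μ 0)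
    (L : E →L[ℝ] F) (e : Fin k → ℝ) (Γ : Fin k → F) {a b q K : ℝ} (hK : 0 ≤ K)
    (h : ∀ t s : ℝ, 0 < t → 0 < s → t ^ a * s ^ b ≤ K * ((1 / 2) * (t + s)) ^ (2 * q)) :
    rayMoment μ L e a Γ * rayMoment μ L e b Γ ≤ ENNReal.ofReal K * rayMoment μ L e q Γ ^ 2 := by
  have h_sqrt : ENNReal.ofReal K * rayMoment μ L e q Γ ^ 2 = (∫⁻ z, ENNReal.ofReal (√K) *
      ENNReal.ofReal (z.2 ^ q * exp (-residualSq L e Γ z / 2)) ∂prodHalfLine μ) ^ 2 := by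
    rw [lintegral_const_mul _ (by fun_prop), mul_pow, ← ENNReal.ofReal_pow (Real.sqrt_nonneg _),
      Real.sq_sqrt hK]
    rfl
  rw [h_sqrt]
  refine hμ.lintegral_prodHalfLine_mul_le (by fun_prop) (by fun_prop) (by fun_prop)
    fun y z hy hz => ?_
  have h_mid : 0 < (1 / 2) * (y.2 + z.2) := by positivity
  have h_snd : ((1 / 2 : ℝ) • (y + z)).2 = (1 / 2) * (y.2 + z.2) := rfl
  rw [← ENNReal.ofReal_mul (by positivity), ← ENNReal.ofReal_mul (by positivity),
    ← ENNReal.ofReal_pow (by positivity), h_snd]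
  refine ENNReal.ofReal_le_ofReal ?_
  calc _ = y.2 ^ a * z.2 ^ b * exp (-residualSq L e Γ y / 2 + -residualSq L e Γ z / 2) := by
        rw [Real.exp_add]
        ring
    _ ≤ K * ((1 / 2) * (y.2 + z.2)) ^ (2 * q) *
          exp ((2 : ℕ) * (-residualSq L e Γ ((1 / 2 : ℝ) • (y + z)) / 2)) := by
        refine mul_le_mul (h _ _ hy hz) (Real.exp_le_exp.2 ?_) (by positivity) (by positivity)
        push_cast
        linarith [two_mul_residualSq_midpoint_le L e Γ y z]
    _ = _ := by
        rw [mul_pow, mul_pow, Real.sq_sqrt hK, Real.exp_nat_mul, ← Real.rpow_natCast (_ ^ q),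
          ← Real.rpow_mul h_mid.le, Nat.cast_ofNat, mul_comm q, mul_assoc]

end RayMoment

theorem rpow_mul_log_le_of_midpoint {c q m t : ℝ} (hc : 0 < c) (hq : 0 < q) (hm : 0 < m)
    (ht : 0 < t) :
    c * Real.log t ≤ c * Real.log m + c * (c / q - 1) + (t * q / m - c) := by
  have h_t := Real.log_le_sub_one_of_pos (x := t * q / (m * c)) (by positivity)
  have h_c := Real.log_le_sub_one_of_pos (x := c / q) (by positivity)
  rw [Real.log_div (by positivity) (by positivity), Real.log_mul (by positivity) (by positivity),
    Real.log_mul (by positivity) (by positivity)] at h_t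
  rw [Real.log_div (by positivity) (by positivity)] at h_c
  have h_cancel : c * (t * q / (m * c)) = t * q / m := by field_simp
  nlinarith [mul_le_mul_of_nonneg_left h_t hc.le, mul_le_mul_of_nonneg_left h_c hc.le]

theorem rpow_sub_mul_rpow_add_le {q a t s : ℝ} (ha : 0 ≤ a) (haq : a < q) (ht : 0 < t)
    (hs : 0 < s) :
    t ^ (q - a) * s ^ (q + a) ≤ exp (2 * a ^ 2 / q) * ((1 / 2) * (t + s)) ^ (2 * q) := by
  have hq : 0 < q := by linarith
  have hm : 0 < (1 / 2) * (t + s) := by positivity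
  rw [Real.rpow_def_of_pos ht, Real.rpow_def_of_pos hs, Real.rpow_def_of_pos hm, ← Real.exp_add,
    ← Real.exp_add]
  refine Real.exp_le_exp.2 ?_
  set m := (1 / 2) * (t + s) with hm_def
  have h_t := rpow_mul_log_le_of_midpoint (sub_pos.2 haq) hq hm ht
  have h_s := rpow_mul_log_le_of_midpoint (by linarith : 0 < q + a) hq hm hs
  have h_weights : t * q / m + s * q / m = 2 * q := by
    rw [← add_div, div_eq_iff hm.ne', hm_def]
    ring
  have h_error : (q - a) * ((q - a) / q - 1) + (q + a) * ((q + a) / q - 1) = 2 * a ^ 2 / q := by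
    field_simp
    ring
  linarith

theorem rpow_two_mul_mul_rpow_zero_le {q t s : ℝ} (hq : 0 ≤ q) (ht : 0 < t) (hs : 0 < s) :
    t ^ (2 * q) * s ^ (0 : ℝ) ≤ 4 ^ q * ((1 / 2) * (t + s)) ^ (2 * q) := by
  have h_four : (4 : ℝ) ^ q = 2 ^ (2 * q) := by
    rw [Real.rpow_mul zero_le_two]
    norm_num
  rw [Real.rpow_zero, mul_one, h_four, ← Real.mul_rpow zero_le_two (by positivity)]
  gcongr
  linarith

section GaussianRows

theorem lintegral_prod_pi {E : Type*} [MeasurableSpace E] {μ : Measure E} [IsProbabilityMeasure μ]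
    {k : ℕ} {f : Fin k → E → ℝ≥0∞} (hf : ∀ i, Measurable (f i)) :
    ∫⁻ x, ∏ i, f i (x i) ∂Measure.pi (fun _ => μ) = ∏ i, ∫⁻ x, f i x ∂μ := by
  rw [lintegral_prod_eq_prod_lintegral_of_indepFun _ _
    (iIndepFun_pi fun i => (hf i).aemeasurable) fun i => (hf i).comp (measurable_pi_apply i)]
  refine Finset.prod_congr rfl fun i _ => ?_
  rw [← lintegral_map (hf i) (measurable_pi_apply i), (measurePreserving_eval _ i).map_eq]

/-- The half-line Gaussian moment `∫₀^∞ t ^ q * exp (-t ^ 2 / 2) dt`. -/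
def halfGaussianMoment (q : ℝ) : ℝ≥0∞ :=
  ∫⁻ t in Set.Ioi (0 : ℝ), ENNReal.ofReal (t ^ q * exp (-t ^ 2 / 2))

theorem setLIntegral_rpow_mul_exp_neg_sq_div {s : ℝ} (hs : 0 < s) (q : ℝ) :
    ∫⁻ t in Set.Ioi (0 : ℝ), ENNReal.ofReal (t ^ q * exp (-t ^ 2 / (2 * s ^ 2))) =
      ENNReal.ofReal (s ^ (q + 1)) * halfGaussianMoment q := by
  have h_image : (s * ·) '' Set.Ioi (0 : ℝ) = Set.Ioi 0 := by
    simpa using Set.image_mul_left_Ioi hs 0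
  have h_subst := lintegral_image_eq_lintegral_abs_deriv_mul (s := Set.Ioi (0 : ℝ))
    measurableSet_Ioi
    (fun x _ => ((hasDerivAt_id x).const_mul s).hasDerivWithinAt)
    (mul_right_injective₀ hs.ne').injOn
    (fun t => ENNReal.ofReal (t ^ q * exp (-t ^ 2 / (2 * s ^ 2))))
  simp only [id_eq, h_image, mul_one, abs_of_pos hs] at h_subst
  rw [h_subst, halfGaussianMoment, ← lintegral_const_mul' _ _ ENNReal.ofReal_ne_top]
  refine setLIntegral_congr_fun measurableSet_Ioi fun t (ht : 0 < t) => ?_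
  have h_exponent : -(s * t) ^ 2 / (2 * s ^ 2) = -t ^ 2 / 2 := by field_simp
  rw [← ENNReal.ofReal_mul (by positivity), ← ENNReal.ofReal_mul (by positivity),
    Real.mul_rpow hs.le ht.le, Real.rpow_add hs, Real.rpow_one, h_exponent]
  ring_nf

variable {E F : Type*} [NormedAddCommGroup E] [NormedSpace ℝ E] [NormedAddCommGroup F]

/-- The standard deviation `(1 + |L x|²)^{1/2}` of `⟪Γ, L x⟫ + g` for independent standard Gaussian
`Γ` and `g`. -/
def noisyStdDev [NormedSpace ℝ F] (L : E →L[ℝ] F) (x : E) : ℝ := √(1 + ‖L x‖ ^ 2)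

theorem noisyStdDev_pos [NormedSpace ℝ F] (L : E →L[ℝ] F) (x : E) : 0 < noisyStdDev L x := by
  unfold noisyStdDev
  positivity

theorem sq_noisyStdDev [NormedSpace ℝ F] (L : E →L[ℝ] F) (x : E) :
    noisyStdDev L x ^ 2 = 1 + ‖L x‖ ^ 2 := by
  rw [noisyStdDev, Real.sq_sqrt (by positivity)]

variable [InnerProductSpace ℝ F] {k : ℕ}

theorem ofReal_exp_neg_residualSq_div_two (L : E →L[ℝ] F) (e : Fin k → ℝ) (Γ : Fin k → F)
    (z : E × ℝ) :
    ENNReal.ofReal (exp (-residualSq L e Γ z / 2)) =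
      ∏ i, ENNReal.ofReal (exp (-(z.2 * e i - ⟪Γ i, L z.1⟫) ^ 2 / 2)) := by
  rw [← ENNReal.ofReal_prod_of_nonneg fun _ _ => (exp_pos _).le, ← Real.exp_sum, residualSq,
    ← Finset.sum_div, Finset.sum_neg_distrib]

theorem prod_mul_exp_neg_sq_div (L : E →L[ℝ] F) {e : Fin k → ℝ} (he : ∑ i, e i ^ 2 = 1)
    (x : E) (t b c : ℝ) :
    ∏ i, c * (√(1 + ‖L x‖ ^ 2))⁻¹ * exp (-(t * e i) ^ 2 / (b * (1 + ‖L x‖ ^ 2))) =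
      c ^ k * noisyStdDev L x ^ (-(k : ℝ)) * exp (-t ^ 2 / (b * noisyStdDev L x ^ 2)) := by
  rw [Finset.prod_mul_distrib, Finset.prod_const, ← Real.exp_sum, ← Finset.sum_div,
    Finset.sum_neg_distrib]
  simp_rw [mul_pow]
  rw [← Finset.mul_sum, he, mul_one, sq_noisyStdDev, Finset.card_univ, Fintype.card_fin,
    Real.rpow_neg (noisyStdDev_pos L x).le, Real.rpow_natCast, inv_pow, noisyStdDev]

variable [MeasurableSpace E]

@[fun_prop]
theorem measurable_noisyStdDev [OpensMeasurableSpace E] (L : E →L[ℝ] F) :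
    Measurable (noisyStdDev L) :=
  (by unfold noisyStdDev; fun_prop : Continuous (noisyStdDev L)).measurable

/-- The `s`-th moment of `noisyStdDev L` under `μ`. -/
def noisyMoment (μ : Measure E) (L : E →L[ℝ] F) (s : ℝ) : ℝ≥0∞ :=
  ∫⁻ x, ENNReal.ofReal (noisyStdDev L x ^ s) ∂μ

variable [OpensMeasurableSpace E] [FiniteDimensional ℝ F] [MeasurableSpace F] [BorelSpace F]
  {μ : Measure E} [SFinite μ]

theorem lintegral_rayMoment_mul_prod_stdGaussian (L : E →L[ℝ] F) (e : Fin k → ℝ) (q : ℝ)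
    {f : Fin k → F → ℝ≥0∞} (hf : ∀ i, Measurable (f i)) :
    ∫⁻ Γ, rayMoment μ L e q Γ * ∏ i, f i (Γ i) ∂Measure.pi (fun _ => stdGaussian F) =
      ∫⁻ x, ∫⁻ t in Set.Ioi (0 : ℝ), ENNReal.ofReal (t ^ q) * ∏ i,
        ∫⁻ g, ENNReal.ofReal (exp (-(t * e i - ⟪g, L x⟫) ^ 2 / 2)) * f i g ∂stdGaussian F
          ∂volume ∂μ := by
  have h_integrand (Γ : Fin k → F) : rayMoment μ L e q Γ * ∏ i, f i (Γ i) =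
      ∫⁻ z, ENNReal.ofReal (z.2 ^ q) * ∏ i,
        (ENNReal.ofReal (exp (-(z.2 * e i - ⟪Γ i, L z.1⟫) ^ 2 / 2)) * f i (Γ i))
          ∂prodHalfLine μ := by
    rw [rayMoment, ← lintegral_mul_const _ (by fun_prop)]
    congr with z
    rw [ENNReal.ofReal_mul' (exp_pos _).le, ofReal_exp_neg_residualSq_div_two,
      Finset.prod_mul_distrib, mul_assoc]
  simp_rw [h_integrand]
  rw [lintegral_lintegral_swap (Measurable.aemeasurable (by fun_prop))]
  rw [← lintegral_prodHalfLine (f := fun z => ENNReal.ofReal (z.2 ^ q) * ∏ i, ∫⁻ g,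
    ENNReal.ofReal (exp (-(z.2 * e i - ⟪g, L z.1⟫) ^ 2 / 2)) * f i g ∂stdGaussian F)]
  · congr with z
    rw [lintegral_const_mul _ (by fun_prop), lintegral_prod_pi (f := fun i g =>
      ENNReal.ofReal (exp (-(z.2 * e i - ⟪g, L z.1⟫) ^ 2 / 2)) * f i g) (by fun_prop)]
  · refine Measurable.mul (by fun_prop) (Finset.measurable_fun_prod _ fun i _ => ?_)
    exact Measurable.lintegral_prod_right' (f := fun p : (E × ℝ) × F =>
      ENNReal.ofReal (exp (-(p.1.2 * e i - ⟪p.2, L p.1.1⟫) ^ 2 / 2)) * f i p.2) (by fun_prop)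

theorem lintegral_rayMoment_stdGaussian (L : E →L[ℝ] F) {e : Fin k → ℝ} (he : ∑ i, e i ^ 2 = 1)
    (q : ℝ) :
    ∫⁻ Γ, rayMoment μ L e q Γ ∂Measure.pi (fun _ => stdGaussian F) =
      halfGaussianMoment q * noisyMoment μ L (q + 1 - k) := by
  have h_swap := lintegral_rayMoment_mul_prod_stdGaussian (μ := μ) L e q (f := fun _ _ => 1)
    fun _ => measurable_const
  simp only [Finset.prod_const_one, mul_one] at h_swap
  rw [h_swap, noisyMoment, ← lintegral_const_mul _ (by fun_prop)]
  congr with x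
  have hr := noisyStdDev_pos L x
  have h_split : ENNReal.ofReal (noisyStdDev L x ^ (q + 1 - k)) =
      ENNReal.ofReal (noisyStdDev L x ^ (-(k : ℝ))) *
        ENNReal.ofReal (noisyStdDev L x ^ (q + 1)) := by
    rw [← ENNReal.ofReal_mul (by positivity), ← Real.rpow_add hr]
    ring_nf
  rw [mul_comm, h_split, mul_assoc, ← setLIntegral_rpow_mul_exp_neg_sq_div hr,
    ← lintegral_const_mul' _ _ ENNReal.ofReal_ne_top]
  refine setLIntegral_congr_fun measurableSet_Ioi fun t (ht : 0 < t) => ?_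
  have h_prod := prod_mul_exp_neg_sq_div L he x t 2 1
  simp only [one_mul, one_pow] at h_prod
  simp only [lintegral_exp_neg_sq_sub_inner_stdGaussian]
  rw [← ENNReal.ofReal_prod_of_nonneg fun _ _ => by positivity,
    ← ENNReal.ofReal_mul (by positivity), ← ENNReal.ofReal_mul (by positivity), h_prod,
    mul_left_comm]

theorem lintegral_rayMoment_mul_exp_sq_inner_stdGaussian_le (L : E →L[ℝ] F) {e : Fin k → ℝ}
    (he : ∑ i, e i ^ 2 = 1) (q : ℝ) {θ : F} (hθ : ‖θ‖ ≤ 1) :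
    ∫⁻ Γ, rayMoment μ L e q Γ * ENNReal.ofReal (exp (∑ i, ⟪Γ i, θ⟫ ^ 2 / 8))
        ∂Measure.pi (fun _ => stdGaussian F) ≤
      ENNReal.ofReal (√2 ^ k * √2 ^ (q + 1)) *
        (halfGaussianMoment q * noisyMoment μ L (q + 1 - k)) := by
  have h_swap := lintegral_rayMoment_mul_prod_stdGaussian (μ := μ) L e q
    (f := fun _ g => ENNReal.ofReal (exp (⟪g, θ⟫ ^ 2 / 8))) fun _ => by fun_prop
  simp only [← ENNReal.ofReal_prod_of_nonneg fun _ _ => (exp_pos _).le, ← Real.exp_sum] at h_swap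
  rw [h_swap, noisyMoment, ← lintegral_const_mul _ (by fun_prop),
    ← lintegral_const_mul _ (by fun_prop)]
  refine lintegral_mono fun x => ?_
  have hr := noisyStdDev_pos L x
  have h_split : ENNReal.ofReal (√2 ^ k * √2 ^ (q + 1)) *
      (halfGaussianMoment q * ENNReal.ofReal (noisyStdDev L x ^ (q + 1 - k))) =
      ENNReal.ofReal (√2 ^ k * noisyStdDev L x ^ (-(k : ℝ))) *
        (ENNReal.ofReal ((√2 * noisyStdDev L x) ^ (q + 1)) * halfGaussianMoment q) := by
    rw [mul_comm (halfGaussianMoment q), ← mul_assoc, ← mul_assoc,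
      ← ENNReal.ofReal_mul (by positivity), ← ENNReal.ofReal_mul (by positivity),
      Real.mul_rpow (by positivity) hr.le, sub_eq_add_neg, Real.rpow_add hr (q + 1)]
    ring_nf
  rw [h_split, ← setLIntegral_rpow_mul_exp_neg_sq_div (by positivity),
    ← lintegral_const_mul' _ _ ENNReal.ofReal_ne_top]
  refine setLIntegral_mono' measurableSet_Ioi fun t (ht : 0 < t) => ?_
  calc _ ≤ ENNReal.ofReal (t ^ q) * ∏ i, ENNReal.ofReal (√2 * (√(1 + ‖L x‖ ^ 2))⁻¹ *
        exp (-(t * e i) ^ 2 / (4 * (1 + ‖L x‖ ^ 2)))) := by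
        gcongr with i
        exact lintegral_exp_neg_sq_sub_inner_mul_exp_sq_inner_stdGaussian_le (L x) θ hθ (t * e i)
    _ = _ := by
        rw [← ENNReal.ofReal_prod_of_nonneg fun _ _ => by positivity,
          ← ENNReal.ofReal_mul (by positivity), ← ENNReal.ofReal_mul (by positivity),
          prod_mul_exp_neg_sq_div L he, mul_pow, Real.sq_sqrt zero_le_two]
        ring_nf

end GaussianRows

section RowsEnergy

open ContinuousLinearMap (adjoint adjoint_inner_left adjoint_inner_right)

variable {E F : Type*} [NormedAddCommGroup E] [InnerProductSpace ℝ E] [FiniteDimensional ℝ E]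
  [NormedAddCommGroup F] [InnerProductSpace ℝ F] [FiniteDimensional ℝ F]

/-- The squared Hilbert–Schmidt norm of `L`, defined without a choice of basis as the trace of
`L† L`. -/
def hilbertSchmidtSq (L : E →L[ℝ] F) : ℝ :=
  LinearMap.trace ℝ E (adjoint L ∘L L : E →L[ℝ] E)

theorem hilbertSchmidtSq_eq_sum {ι : Type*} [Fintype ι] (L : E →L[ℝ] F)
    (b : OrthonormalBasis ι ℝ E) : hilbertSchmidtSq L = ∑ j, ‖L (b j)‖ ^ 2 := by
  rw [hilbertSchmidtSq, LinearMap.trace_eq_sum_inner _ b]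
  exact Finset.sum_congr rfl fun j _ =>
    (adjoint_inner_right L _ _).trans (real_inner_self_eq_norm_sq _)

theorem hilbertSchmidtSq_smul (c : ℝ) (L : E →L[ℝ] F) :
    hilbertSchmidtSq (c • L) = c ^ 2 * hilbertSchmidtSq L := by
  simp only [hilbertSchmidtSq_eq_sum _ (stdOrthonormalBasis ℝ E), _root_.smul_apply,
    norm_smul, mul_pow, norm_eq_abs, sq_abs, Finset.mul_sum]

theorem hilbertSchmidtSq_adjoint (L : E →L[ℝ] F) :
    hilbertSchmidtSq (adjoint L) = hilbertSchmidtSq L := by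
  rw [hilbertSchmidtSq, hilbertSchmidtSq, ContinuousLinearMap.adjoint_adjoint]
  exact LinearMap.trace_comp_comm' (adjoint L : F →ₗ[ℝ] E) (L : E →ₗ[ℝ] F)

theorem hilbertSchmidtSq_le (L : E →L[ℝ] F) :
    hilbertSchmidtSq L ≤ ‖L‖ ^ 2 * Module.finrank ℝ F := by
  let b := stdOrthonormalBasis ℝ F
  calc hilbertSchmidtSq L = ∑ j, ‖adjoint L (b j)‖ ^ 2 := by
        rw [← hilbertSchmidtSq_adjoint, hilbertSchmidtSq_eq_sum _ b]
    _ ≤ ∑ _ : Fin (Module.finrank ℝ F), ‖L‖ ^ 2 := by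
        gcongr with j
        simpa using (adjoint L).le_opNorm (b j)
    _ = ‖L‖ ^ 2 * Module.finrank ℝ F := by
        rw [Finset.sum_const, Finset.card_univ, Fintype.card_fin, nsmul_eq_mul, mul_comm]

variable {k : ℕ}

/-- The squared Hilbert–Schmidt norm of `Γ L`, where `Γ` is the operator with rows `Γ i`. -/
def rowsEnergy (L : E →L[ℝ] F) (Γ : Fin k → F) : ℝ :=
  ∑ i, ‖adjoint L (Γ i)‖ ^ 2

theorem rowsEnergy_nonneg (L : E →L[ℝ] F) (Γ : Fin k → F) : 0 ≤ rowsEnergy L Γ :=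
  Finset.sum_nonneg fun _ _ => sq_nonneg _

theorem rowsEnergy_eq_sum {ι : Type*} [Fintype ι] (L : E →L[ℝ] F) (b : OrthonormalBasis ι ℝ E)
    (Γ : Fin k → F) : rowsEnergy L Γ = ∑ j, ∑ i, ⟪Γ i, L (b j)⟫ ^ 2 := by
  rw [rowsEnergy, Finset.sum_comm]
  refine Finset.sum_congr rfl fun i _ => ?_
  simp only [← b.sum_sq_inner_left, adjoint_inner_left]

theorem exp_rowsEnergy_div_le {ι : Type*} [Fintype ι] {L : E →L[ℝ] F}
    (hL : hilbertSchmidtSq L = 1) (b : OrthonormalBasis ι ℝ E) (Γ : Fin k → F) (c : ℝ) :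
    exp (rowsEnergy L Γ / c) ≤
      ∑ j, ‖L (b j)‖ ^ 2 * exp (∑ i, ⟪Γ i, ‖L (b j)‖⁻¹ • L (b j)⟫ ^ 2 / c) := by
  rw [hilbertSchmidtSq_eq_sum L b] at hL
  have h_convex : rowsEnergy L Γ / c =
      ∑ j, ‖L (b j)‖ ^ 2 • ∑ i, ⟪Γ i, ‖L (b j)‖⁻¹ • L (b j)⟫ ^ 2 / c := by
    rw [rowsEnergy_eq_sum L b, Finset.sum_div]
    refine Finset.sum_congr rfl fun j _ => ?_
    rw [Finset.sum_div, Finset.smul_sum]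
    refine Finset.sum_congr rfl fun i _ => ?_
    rw [inner_smul_right, smul_eq_mul]
    obtain h_zero | h_ne := eq_or_ne (L (b j)) 0
    · simp [h_zero]
    · field_simp
  rw [h_convex]
  exact convexOn_exp.map_sum_le (fun _ _ => by positivity) hL fun _ _ => Set.mem_univ _

theorem IsIsotropicLaw.lintegral_sum_sq_inner [MeasurableSpace E] [BorelSpace E] {μ : Measure E}
    (h : IsIsotropicLaw μ) (L : E →L[ℝ] F) (Γ : Fin k → F) :
    ∫⁻ x, ENNReal.ofReal (∑ i, ⟪Γ i, L x⟫ ^ 2) ∂μ = ENNReal.ofReal (rowsEnergy L Γ) := by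
  have h_adjoint (i : Fin k) (x : E) : ⟪Γ i, L x⟫ = ⟪x, adjoint L (Γ i)⟫ := by
    rw [adjoint_inner_right, real_inner_comm]
  simp_rw [h_adjoint, ENNReal.ofReal_sum_of_nonneg fun _ _ => sq_nonneg _]
  rw [lintegral_finsetSum _ fun i _ => by fun_prop]
  simp_rw [h.lintegral_sq_inner]
  rw [← ENNReal.ofReal_sum_of_nonneg fun _ _ => sq_nonneg _, rowsEnergy]

variable [MeasurableSpace F] [BorelSpace F]

@[fun_prop]
theorem measurable_rowsEnergy (L : E →L[ℝ] F) : Measurable (rowsEnergy (k := k) L) :=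
  (by unfold rowsEnergy; fun_prop : Continuous (rowsEnergy (k := k) L)).measurable

theorem lintegral_rayMoment_mul_exp_rowsEnergy_stdGaussian_le [MeasurableSpace E]
    [OpensMeasurableSpace E] {μ : Measure E} [SFinite μ] {L : E →L[ℝ] F}
    (hL : hilbertSchmidtSq L = 1) {e : Fin k → ℝ} (he : ∑ i, e i ^ 2 = 1) (q : ℝ) :
    ∫⁻ Γ, rayMoment μ L e q Γ * ENNReal.ofReal (exp (rowsEnergy L Γ / 8))
        ∂Measure.pi (fun _ => stdGaussian F) ≤
      ENNReal.ofReal (√2 ^ k * √2 ^ (q + 1)) *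
        (halfGaussianMoment q * noisyMoment μ L (q + 1 - k)) := by
  let b := stdOrthonormalBasis ℝ E
  let θ j : F := ‖L (b j)‖⁻¹ • L (b j)
  have hθ j : ‖θ j‖ ≤ 1 := by
    rw [norm_smul, norm_inv, norm_norm]
    exact inv_mul_le_one
  calc _ ≤ ∫⁻ Γ, ∑ j, ENNReal.ofReal (‖L (b j)‖ ^ 2) * (rayMoment μ L e q Γ *
          ENNReal.ofReal (exp (∑ i, ⟪Γ i, θ j⟫ ^ 2 / 8))) ∂Measure.pi (fun _ => stdGaussian F) := by
        refine lintegral_mono fun Γ => ?_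
        simp only [mul_left_comm _ (rayMoment μ L e q Γ), ← Finset.mul_sum,
          ← ENNReal.ofReal_mul (sq_nonneg _)]
        rw [← ENNReal.ofReal_sum_of_nonneg fun _ _ => by positivity]
        gcongr
        exact exp_rowsEnergy_div_le hL b Γ 8
    _ = ∑ j, ENNReal.ofReal (‖L (b j)‖ ^ 2) * ∫⁻ Γ, rayMoment μ L e q Γ *
          ENNReal.ofReal (exp (∑ i, ⟪Γ i, θ j⟫ ^ 2 / 8)) ∂Measure.pi (fun _ => stdGaussian F) := by
        rw [lintegral_finsetSum _ fun _ _ => by fun_prop]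
        exact Finset.sum_congr rfl fun _ _ => lintegral_const_mul _ (by fun_prop)
    _ ≤ ∑ j, ENNReal.ofReal (‖L (b j)‖ ^ 2) * (ENNReal.ofReal (√2 ^ k * √2 ^ (q + 1)) *
          (halfGaussianMoment q * noisyMoment μ L (q + 1 - k))) := by
        gcongr with j
        exact lintegral_rayMoment_mul_exp_sq_inner_stdGaussian_le L he q (hθ j)
    _ = _ := by
        rw [← Finset.sum_mul, ← ENNReal.ofReal_sum_of_nonneg fun _ _ => sq_nonneg _,
          ← hilbertSchmidtSq_eq_sum L b, hL, ENNReal.ofReal_one, one_mul]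

end RowsEnergy

section ExpNeg

theorem measure_univ_le_exp_mul_lintegral_exp_neg {β : Type*} [MeasurableSpace β] {ν : Measure β}
    [IsFiniteMeasure ν] {ψ : β → ℝ} (hψ : Measurable ψ) (h_nonneg : ∀ z, 0 ≤ ψ z) {m : ℝ}
    (hm : 0 ≤ m) (h : ∫⁻ z, ENNReal.ofReal (ψ z) ∂ν ≤ ENNReal.ofReal m * ν Set.univ) :
    ν Set.univ ≤ ENNReal.ofReal (exp m) * ∫⁻ z, ENNReal.ofReal (exp (-ψ z)) ∂ν := by
  have h_tangent (z : β) : ENNReal.ofReal (1 + m) ≤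
      ENNReal.ofReal (exp m) * ENNReal.ofReal (exp (-ψ z)) + ENNReal.ofReal (ψ z) := by
    rw [← ENNReal.ofReal_mul (exp_pos _).le, ← Real.exp_add,
      ← ENNReal.ofReal_add (exp_pos _).le (h_nonneg z)]
    exact ENNReal.ofReal_le_ofReal (by linarith [Real.add_one_le_exp (m + -ψ z)])
  have h_integrated : ν Set.univ + ENNReal.ofReal m * ν Set.univ ≤
      ENNReal.ofReal (exp m) * ∫⁻ z, ENNReal.ofReal (exp (-ψ z)) ∂ν +
        ENNReal.ofReal m * ν Set.univ := by
    calc _ = ∫⁻ _, ENNReal.ofReal (1 + m) ∂ν := by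
          rw [lintegral_const, ENNReal.ofReal_add zero_le_one hm, add_mul, ENNReal.ofReal_one,
            one_mul]
      _ ≤ _ := lintegral_mono h_tangent
      _ = ENNReal.ofReal (exp m) * ∫⁻ z, ENNReal.ofReal (exp (-ψ z)) ∂ν +
            ∫⁻ z, ENNReal.ofReal (ψ z) ∂ν := by
          rw [lintegral_add_left (by fun_prop), lintegral_const_mul _ (by fun_prop)]
      _ ≤ _ := by gcongr
  exact (ENNReal.add_le_add_iff_right (by finiteness)).1 h_integrated

theorem lintegral_le_of_le_add_mul {β : Type*} [MeasurableSpace β] {ν : Measure β} {φ ψ : β → ℝ}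
    (hψ : Measurable ψ) (hψ_nonneg : ∀ z, 0 ≤ ψ z) {a b c : ℝ} (ha : 0 ≤ a) (hb : 0 ≤ b)
    (hc : 0 ≤ c) (hφ : ∀ z, φ z ≤ a + b * ψ z)
    (h : ∫⁻ z, ENNReal.ofReal (ψ z) ∂ν ≤ ENNReal.ofReal c * ν Set.univ) :
    ∫⁻ z, ENNReal.ofReal (φ z) ∂ν ≤ ENNReal.ofReal (a + b * c) * ν Set.univ := by
  calc _ ≤ ∫⁻ z, (ENNReal.ofReal a + ENNReal.ofReal b * ENNReal.ofReal (ψ z)) ∂ν := by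
        refine lintegral_mono fun z => (ENNReal.ofReal_le_ofReal (hφ z)).trans_eq ?_
        rw [← ENNReal.ofReal_mul hb, ENNReal.ofReal_add ha (mul_nonneg hb (hψ_nonneg z))]
    _ = ENNReal.ofReal a * ν Set.univ + ENNReal.ofReal b * ∫⁻ z, ENNReal.ofReal (ψ z) ∂ν := by
        rw [lintegral_add_left measurable_const, lintegral_const,
          lintegral_const_mul _ (by fun_prop)]
    _ ≤ ENNReal.ofReal a * ν Set.univ + ENNReal.ofReal b * (ENNReal.ofReal c * ν Set.univ) := by
        gcongr
    _ = _ := by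
        rw [← mul_assoc, ← ENNReal.ofReal_mul hb, ← add_mul,
          ← ENNReal.ofReal_add ha (mul_nonneg hb hc)]

theorem sq_lintegral_mul_le_lintegral_sq_mul_lintegral_sq {β : Type*} [MeasurableSpace β]
    {ν : Measure β} {f g : β → ℝ≥0∞} (hf : AEMeasurable f ν) (hg : AEMeasurable g ν) :
    (∫⁻ z, f z * g z ∂ν) ^ 2 ≤ (∫⁻ z, f z ^ 2 ∂ν) * ∫⁻ z, g z ^ 2 ∂ν := by
  have h_holder := ENNReal.lintegral_mul_le_Lp_mul_Lq ν Real.HolderConjugate.two_two hf hg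
  simp only [Pi.mul_apply, ENNReal.rpow_two] at h_holder
  calc _ ≤ ((∫⁻ z, f z ^ 2 ∂ν) ^ (1 / 2 : ℝ) * (∫⁻ z, g z ^ 2 ∂ν) ^ (1 / 2 : ℝ)) ^ 2 := by gcongr
    _ = _ := by
      rw [mul_pow, ← ENNReal.rpow_natCast, ← ENNReal.rpow_natCast, ← ENNReal.rpow_mul,
        ← ENNReal.rpow_mul]
      norm_num

end ExpNeg

section RayMeasure

variable {E F : Type*} [NormedAddCommGroup E] [NormedSpace ℝ E] [NormedAddCommGroup F]
  [InnerProductSpace ℝ F] {k : ℕ}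

theorem sum_sq_sub_sq_le_residualSq (L : E →L[ℝ] F) {e : Fin k → ℝ} (he : ∑ i, e i ^ 2 = 1)
    (Γ : Fin k → F) (x : E) (t : ℝ) :
    (t - ∑ i, e i * ⟪Γ i, L x⟫) ^ 2 ≤ residualSq L e Γ (x, t) := by
  have h_proj : ∑ i, e i * (t * e i - ⟪Γ i, L x⟫) = t - ∑ i, e i * ⟪Γ i, L x⟫ := by
    simp_rw [mul_sub, Finset.sum_sub_distrib, mul_left_comm _ t, ← Finset.mul_sum, ← sq, he,
      mul_one]
  simpa only [h_proj, he, one_mul, residualSq] using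
    Finset.sum_mul_sq_le_sq_mul_sq Finset.univ e fun i => t * e i - ⟪Γ i, L x⟫

theorem residualSq_le_two_mul_sq_add (L : E →L[ℝ] F) {e : Fin k → ℝ} (he : ∑ i, e i ^ 2 = 1)
    (Γ : Fin k → F) (x : E) (t : ℝ) :
    residualSq L e Γ (x, t) ≤ 2 * t ^ 2 + 2 * ∑ i, ⟪Γ i, L x⟫ ^ 2 := by
  rw [← mul_one (2 * t ^ 2), ← he, Finset.mul_sum, Finset.mul_sum, ← Finset.sum_add_distrib]
  refine Finset.sum_le_sum fun i _ => ?_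
  nlinarith [sq_nonneg (t * e i + ⟪Γ i, L x⟫)]

variable [MeasurableSpace E]

/-- The measure on pairs `(x, t)` with total mass `rayMoment μ L e q Γ`. -/
def rayMeasure (μ : Measure E) (L : E →L[ℝ] F) (e : Fin k → ℝ) (q : ℝ) (Γ : Fin k → F) :
    Measure (E × ℝ) :=
  (prodHalfLine μ).withDensity fun z =>
    ENNReal.ofReal (z.2 ^ q * exp (-residualSq L e Γ z / 2))

theorem rayMeasure_univ (μ : Measure E) (L : E →L[ℝ] F) (e : Fin k → ℝ) (q : ℝ) (Γ : Fin k → F) :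
    rayMeasure μ L e q Γ Set.univ = rayMoment μ L e q Γ := by
  rw [rayMeasure, withDensity_apply _ MeasurableSet.univ, Measure.restrict_univ, rayMoment]

variable [OpensMeasurableSpace E] [FiniteDimensional ℝ F] [MeasurableSpace F] [BorelSpace F]

theorem lintegral_rayMeasure (μ : Measure E) (L : E →L[ℝ] F) (e : Fin k → ℝ) (q : ℝ)
    (Γ : Fin k → F) {f : E × ℝ → ℝ≥0∞} (hf : Measurable f) :
    ∫⁻ z, f z ∂rayMeasure μ L e q Γ =
      ∫⁻ z, f z * ENNReal.ofReal (z.2 ^ q * exp (-residualSq L e Γ z / 2)) ∂prodHalfLine μ := by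
  rw [rayMeasure, lintegral_withDensity_eq_lintegral_mul _ (by fun_prop) hf]
  simp only [Pi.mul_apply, mul_comm]

variable {μ : Measure E}

theorem lintegral_mul_exp_rayMeasure_zero_le (L : E →L[ℝ] F) {e : Fin k → ℝ}
    (he : ∑ i, e i ^ 2 = 1) (Γ : Fin k → F) {f : E → ℝ≥0∞} (hf : Measurable f) :
    ∫⁻ z, f z.1 * ENNReal.ofReal (exp (residualSq L e Γ z / 4)) ∂rayMeasure μ L e 0 Γ ≤
      4 * ∫⁻ x, f x ∂μ := by
  rw [lintegral_rayMeasure μ L e 0 Γ (by fun_prop), lintegral_prodHalfLine (by fun_prop),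
    ← lintegral_const_mul _ hf]
  refine lintegral_mono fun x => ?_
  set m := ∑ i, e i * ⟪Γ i, L x⟫
  calc _ ≤ ∫⁻ t, f x * ENNReal.ofReal (exp (-(1 / 4) * (t - m) ^ 2)) := by
        refine (setLIntegral_le_lintegral _ _).trans (lintegral_mono fun t => ?_)
        rw [Real.rpow_zero, one_mul, mul_assoc, ← ENNReal.ofReal_mul (exp_pos _).le, ← Real.exp_add]
        gcongr
        linarith [sum_sq_sub_sq_le_residualSq L he Γ x t]
    _ = f x * ENNReal.ofReal √(π / (1 / 4)) := by
        rw [lintegral_const_mul _ (by fun_prop), lintegral_sub_right_eq_self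
          (fun t => ENNReal.ofReal (exp (-(1 / 4) * t ^ 2))) m,
          ← ofReal_integral_eq_lintegral_ofReal (integrable_exp_neg_mul_sq (by norm_num))
          (.of_forall fun _ => (exp_pos _).le), integral_gaussian]
    _ ≤ 4 * f x := by
        rw [mul_comm]
        gcongr
        refine ENNReal.ofReal_le_of_le_toReal ((Real.sqrt_le_left (by norm_num)).2 ?_)
        norm_num
        linarith [Real.pi_lt_four]

variable [SFinite μ]

theorem sq_lintegral_rayMeasure_mul_le (hμ : MidpointPrekopaLeindler μ 0) (L : E →L[ℝ] F)
    (e : Fin k → ℝ) (Γ : Fin k → F) {q : ℝ} (hq : 0 ≤ q) {f : E × ℝ → ℝ≥0∞} (hf : Measurable f) :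
    (∫⁻ z, f z ∂rayMeasure μ L e q Γ) ^ 2 * rayMoment μ L e 0 Γ ≤
      ENNReal.ofReal (4 ^ q) * (∫⁻ z, f z ^ 2 ∂rayMeasure μ L e 0 Γ) *
        rayMoment μ L e q Γ ^ 2 := by
  let w (z : E × ℝ) : ℝ≥0∞ := ENNReal.ofReal (exp (-residualSq L e Γ z / 4))
  have : Measurable w := by fun_prop
  have hw_sq (z : E × ℝ) : ENNReal.ofReal (exp (-residualSq L e Γ z / 2)) = w z ^ 2 := by
    rw [← ENNReal.ofReal_pow (exp_pos _).le, ← Real.exp_nat_mul]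
    push_cast
    ring_nf
  have h_left : ∫⁻ z, f z ∂rayMeasure μ L e q Γ =
      ∫⁻ z, f z * w z * (ENNReal.ofReal (z.2 ^ q) * w z) ∂prodHalfLine μ := by
    rw [lintegral_rayMeasure μ L e q Γ hf]
    congr with z
    rw [ENNReal.ofReal_mul' (exp_pos _).le, hw_sq]
    ring
  have h_zero : ∫⁻ z, f z ^ 2 ∂rayMeasure μ L e 0 Γ = ∫⁻ z, (f z * w z) ^ 2 ∂prodHalfLine μ := by
    rw [lintegral_rayMeasure μ L e 0 Γ (by fun_prop)]
    congr with z
    rw [Real.rpow_zero, one_mul, mul_pow, hw_sq]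
  have h_double : rayMoment μ L e (2 * q) Γ =
      ∫⁻ z, (ENNReal.ofReal (z.2 ^ q) * w z) ^ 2 ∂prodHalfLine μ := by
    refine lintegral_congr_ae ?_
    filter_upwards [ae_prodHalfLine_pos μ] with z hz
    rw [ENNReal.ofReal_mul' (exp_pos _).le, hw_sq, mul_pow,
      ← ENNReal.ofReal_pow (Real.rpow_nonneg hz.le _), ← Real.rpow_mul_natCast hz.le,
      mul_comm q, Nat.cast_two]
  calc _ ≤ (∫⁻ z, f z ^ 2 ∂rayMeasure μ L e 0 Γ) * rayMoment μ L e (2 * q) Γ *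
        rayMoment μ L e 0 Γ := by
        rw [h_left, h_zero, h_double]
        gcongr
        exact sq_lintegral_mul_le_lintegral_sq_mul_lintegral_sq (by fun_prop) (by fun_prop)
    _ ≤ (∫⁻ z, f z ^ 2 ∂rayMeasure μ L e 0 Γ) *
          (ENNReal.ofReal (4 ^ q) * rayMoment μ L e q Γ ^ 2) := by
        rw [mul_assoc]
        exact mul_le_mul_right (rayMoment_mul_rayMoment_le hμ L e Γ (by positivity)
          fun t s => rpow_two_mul_mul_rpow_zero_le hq) _
    _ = _ := by ring

end RayMeasure

section GoodRows

theorem sq_le_sq_add_sq_mul_div_pow {k : ℕ} (hk : 1 ≤ k) {T : ℝ} (hT : 0 < T) (w : ℝ) :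
    w ^ 2 ≤ T ^ 2 + T ^ 2 * (w / T) ^ (2 * k) := by
  have h_ratio : (w / T) ^ 2 ≤ 1 + (w / T) ^ (2 * k) := by
    rw [pow_mul]
    obtain h_le | h_ge := le_total ((w / T) ^ 2) 1
    · exact le_add_of_le_of_nonneg h_le (by positivity)
    · exact (le_self_pow₀ h_ge (by omega)).trans (le_add_of_nonneg_left zero_le_one)
  calc w ^ 2 = T ^ 2 * (w / T) ^ 2 := by field_simp
    _ ≤ T ^ 2 * (1 + (w / T) ^ (2 * k)) := by gcongr
    _ = _ := by ring

variable {E F : Type*} [NormedAddCommGroup F] [InnerProductSpace ℝ F] {k : ℕ}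

theorem residualSq_add_le [NormedAddCommGroup E] [NormedSpace ℝ E] (L : E →L[ℝ] F) (e : Fin k → ℝ)
    (Γ Δ : Fin k → F) (z : E × ℝ) {ρ : ℝ} (hρ : 0 < ρ) :
    residualSq L e (Γ + Δ) z ≤
      (1 + 2 * ρ) * residualSq L e Γ z + (1 / (2 * ρ) + 1) * ∑ i, ⟪Δ i, L z.1⟫ ^ 2 := by
  unfold residualSq
  rw [Finset.mul_sum, Finset.mul_sum, ← Finset.sum_add_distrib]
  refine Finset.sum_le_sum fun i _ => ?_
  rw [Pi.add_apply, inner_add_left]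
  rw [← sub_sub]
  generalize z.2 * e i - ⟪Γ i, L z.1⟫ = s, ⟪Δ i, L z.1⟫ = d
  have h_square : 0 ≤ (2 * ρ * s + d) ^ 2 / (2 * ρ) := by positivity
  have h_expand : (2 * ρ * s + d) ^ 2 / (2 * ρ) =
      2 * ρ * s ^ 2 + 2 * s * d + 1 / (2 * ρ) * d ^ 2 := by
    field_simp
    ring
  linarith

variable [NormedAddCommGroup E] [InnerProductSpace ℝ E] [FiniteDimensional ℝ E]
  [MeasurableSpace E] [BorelSpace E] [FiniteDimensional ℝ F] [MeasurableSpace F] [BorelSpace F]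
  {μ : Measure E} [IsProbabilityMeasure μ]

theorem exp_neg_rowsEnergy_le_lintegral (h : IsIsotropicLaw μ) (L : E →L[ℝ] F) (Γ : Fin k → F) :
    ENNReal.ofReal (exp (-rowsEnergy L Γ)) ≤
      ∫⁻ x, ENNReal.ofReal (exp (-∑ i, ⟪Γ i, L x⟫ ^ 2)) ∂μ := by
  have h_jensen := measure_univ_le_exp_mul_lintegral_exp_neg (ν := μ)
    (ψ := fun x => ∑ i, ⟪Γ i, L x⟫ ^ 2) (by fun_prop)
    (fun x => Finset.sum_nonneg fun _ _ => sq_nonneg _) (rowsEnergy_nonneg L Γ)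
    (by rw [h.lintegral_sum_sq_inner, measure_univ, mul_one])
  rw [measure_univ] at h_jensen
  calc _ ≤ ENNReal.ofReal (exp (-rowsEnergy L Γ)) * (ENNReal.ofReal (exp (rowsEnergy L Γ)) *
        ∫⁻ x, ENNReal.ofReal (exp (-∑ i, ⟪Γ i, L x⟫ ^ 2)) ∂μ) := le_mul_of_one_le_right' h_jensen
    _ = _ := by
      rw [← mul_assoc, ← ENNReal.ofReal_mul (exp_pos _).le, ← Real.exp_add, neg_add_cancel,
        Real.exp_zero, ENNReal.ofReal_one, one_mul]

theorem exp_neg_rowsEnergy_le_rayMoment_zero (h : IsIsotropicLaw μ) (L : E →L[ℝ] F)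
    {e : Fin k → ℝ} (he : ∑ i, e i ^ 2 = 1) (Γ : Fin k → F) :
    ENNReal.ofReal (exp (-1 - rowsEnergy L Γ)) ≤ rayMoment μ L e 0 Γ := by
  rw [rayMoment, lintegral_prodHalfLine (by fun_prop), sub_eq_add_neg, Real.exp_add,
    ENNReal.ofReal_mul (exp_pos _).le]
  refine (mul_le_mul_right (exp_neg_rowsEnergy_le_lintegral h L Γ) _).trans ?_
  rw [← lintegral_const_mul _ (by fun_prop)]
  refine lintegral_mono fun x => ?_
  calc _ = ∫⁻ _ in Set.Ioc (0 : ℝ) 1, ENNReal.ofReal (exp (-1)) *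
        ENNReal.ofReal (exp (-∑ i, ⟪Γ i, L x⟫ ^ 2)) := by simp
    _ ≤ ∫⁻ t in Set.Ioc (0 : ℝ) 1,
        ENNReal.ofReal (t ^ (0 : ℝ) * exp (-residualSq L e Γ (x, t) / 2)) := by
      refine setLIntegral_mono' measurableSet_Ioc fun t ht => ?_
      rw [Real.rpow_zero, one_mul, ← ENNReal.ofReal_mul (exp_pos _).le, ← Real.exp_add]
      gcongr
      have h_sq : t ^ 2 ≤ 1 := pow_le_one₀ ht.1.le ht.2
      linarith [residualSq_le_two_mul_sq_add L he Γ x t]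
    _ ≤ _ := lintegral_mono_set Set.Ioc_subset_Ioi_self

theorem sq_lintegral_rayMeasure_le (hμ : MidpointPrekopaLeindler μ 0) (h : IsIsotropicLaw μ)
    (L : E →L[ℝ] F) {e : Fin k → ℝ} (he : ∑ i, e i ^ 2 = 1) (Γ : Fin k → F) {q : ℝ} (hq : 0 ≤ q)
    {f : E × ℝ → ℝ≥0∞} (hf : Measurable f) :
    (∫⁻ z, f z ∂rayMeasure μ L e q Γ) ^ 2 ≤ ENNReal.ofReal (exp (1 + rowsEnergy L Γ + 2 * q)) *
      (∫⁻ z, f z ^ 2 ∂rayMeasure μ L e 0 Γ) * rayMoment μ L e q Γ ^ 2 := by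
  have h_four : (4 : ℝ) ^ q ≤ exp (2 * q) := by
    have h_exp : (4 : ℝ) ≤ exp 2 := by
      have h_sq : exp 2 = exp 1 ^ 2 := by rw [← Real.exp_nat_mul, Nat.cast_two, mul_one]
      nlinarith [Real.add_one_le_exp (1 : ℝ)]
    rw [Real.exp_mul]
    exact Real.rpow_le_rpow (by norm_num) h_exp hq
  calc _ = ENNReal.ofReal (exp (1 + rowsEnergy L Γ)) * ((∫⁻ z, f z ∂rayMeasure μ L e q Γ) ^ 2 *
        ENNReal.ofReal (exp (-1 - rowsEnergy L Γ))) := by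
        rw [mul_left_comm, ← ENNReal.ofReal_mul (exp_pos _).le, ← Real.exp_add]
        ring_nf
        simp
    _ ≤ ENNReal.ofReal (exp (1 + rowsEnergy L Γ)) * ((∫⁻ z, f z ∂rayMeasure μ L e q Γ) ^ 2 *
        rayMoment μ L e 0 Γ) := by
        gcongr
        exact exp_neg_rowsEnergy_le_rayMoment_zero h L he Γ
    _ ≤ ENNReal.ofReal (exp (1 + rowsEnergy L Γ)) * (ENNReal.ofReal (exp (2 * q)) *
        (∫⁻ z, f z ^ 2 ∂rayMeasure μ L e 0 Γ) * rayMoment μ L e q Γ ^ 2) := by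
        refine mul_le_mul_right ((sq_lintegral_rayMeasure_mul_le hμ L e Γ hq hf).trans ?_) _
        gcongr
    _ = _ := by
        rw [Real.exp_add (1 + _), ENNReal.ofReal_mul (exp_pos _).le]
        ring

theorem lintegral_rayMeasure_le_third_mul (hμ : MidpointPrekopaLeindler μ 0)
    (h : IsIsotropicLaw μ) (L : E →L[ℝ] F) {e : Fin k → ℝ} (he : ∑ i, e i ^ 2 = 1) (hk : 1 ≤ k)
    {Γ : Fin k → F} (hΓ : rowsEnergy L Γ ≤ 24 * k) {q : ℝ} (hq : 0 ≤ q) (hqk : q ≤ 3 * k)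
    {f : E × ℝ → ℝ≥0∞} (hf : Measurable f) {g : E → ℝ≥0∞} (hg : Measurable g)
    (hfg : ∀ z, f z ^ 2 ≤ g z.1 * ENNReal.ofReal (exp (residualSq L e Γ z / 4)))
    (hg_small : ∫⁻ x, g x ∂μ ≤ ENNReal.ofReal (exp (-(36 * k)))) :
    ∫⁻ z, f z ∂rayMeasure μ L e q Γ ≤ ENNReal.ofReal (1 / 3) * rayMoment μ L e q Γ := by
  have hk' : (1 : ℝ) ≤ k := by exact_mod_cast hk
  have h_const : exp (1 + rowsEnergy L Γ + 2 * q) * (4 * exp (-(36 * k))) ≤ (1 / 3) ^ 2 := by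
    calc _ = 4 * exp (1 + rowsEnergy L Γ + 2 * q - 36 * k) := by
          rw [mul_left_comm, ← Real.exp_add, sub_eq_add_neg]
      _ ≤ 4 * exp (-4) := by
          gcongr
          linarith
      _ ≤ 4 * (2.7182818283 ^ 4)⁻¹ := by
          rw [Real.exp_neg, show (4 : ℝ) = (4 : ℕ) * 1 by norm_num, Real.exp_nat_mul]
          gcongr
          exact Real.exp_one_gt_d9.le
      _ ≤ _ := by norm_num
  rw [← ENNReal.pow_le_pow_left_iff two_ne_zero, mul_pow]
  refine (sq_lintegral_rayMeasure_le hμ h L he Γ hq hf).trans ?_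
  gcongr
  calc _ ≤ ENNReal.ofReal (exp (1 + rowsEnergy L Γ + 2 * q)) *
        (4 * ENNReal.ofReal (exp (-(36 * k)))) := by
        gcongr
        refine (lintegral_mono hfg).trans
          ((lintegral_mul_exp_rayMeasure_zero_le L he Γ hg).trans ?_)
        gcongr
    _ ≤ _ := by
        rw [← ENNReal.ofReal_ofNat, ← ENNReal.ofReal_mul (by norm_num),
          ← ENNReal.ofReal_mul (exp_pos _).le, ← ENNReal.ofReal_pow (by norm_num)]
        exact ENNReal.ofReal_le_ofReal h_const

theorem lintegral_residualSq_rayMeasure_le (hμ : MidpointPrekopaLeindler μ 0)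
    (h : IsIsotropicLaw μ) (L : E →L[ℝ] F) {e : Fin k → ℝ} (he : ∑ i, e i ^ 2 = 1) (hk : 1 ≤ k)
    {Γ : Fin k → F} (hΓ : rowsEnergy L Γ ≤ 24 * k) {q : ℝ} (hq : 0 ≤ q) (hqk : q ≤ 3 * k) :
    ∫⁻ z, ENNReal.ofReal (residualSq L e Γ z) ∂rayMeasure μ L e q Γ ≤
      ENNReal.ofReal (163 * k) * rayMoment μ L e q Γ := by
  have hk' : (1 : ℝ) ≤ k := by exact_mod_cast hk
  have h_third := lintegral_rayMeasure_le_third_mul hμ h L he hk hΓ hq hqk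
    (f := fun z => ENNReal.ofReal (exp ((residualSq L e Γ z - 160 * k) / 8))) (by fun_prop)
    (g := fun _ => ENNReal.ofReal (exp (-(40 * k)))) (by fun_prop)
    (fun z => by
      rw [← ENNReal.ofReal_pow (exp_pos _).le, ← ENNReal.ofReal_mul (exp_pos _).le,
        ← Real.exp_nat_mul, ← Real.exp_add]
      refine (congrArg (fun s => ENNReal.ofReal (exp s)) ?_).le
      push_cast
      ring)
    (by
      rw [lintegral_const, measure_univ, mul_one]
      gcongr
      norm_num)
  rw [← rayMeasure_univ] at h_third ⊢
  refine (lintegral_le_of_le_add_mul (a := 160 * k) (b := 8) (by fun_prop)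
    (fun _ => (exp_pos _).le) (by positivity) (by norm_num) (by norm_num) (fun z => ?_)
    h_third).trans (mul_le_mul_left (ENNReal.ofReal_le_ofReal (by linarith)) _)
  linarith [Real.add_one_le_exp ((residualSq L e Γ z - 160 * k) / 8)]

theorem lintegral_sq_inner_rayMeasure_le (hμ : MidpointPrekopaLeindler μ 0)
    (h : IsIsotropicLaw μ) (L : E →L[ℝ] F) {e : Fin k → ℝ} (he : ∑ i, e i ^ 2 = 1) (hk : 1 ≤ k)
    {Γ : Fin k → F} (hΓ : rowsEnergy L Γ ≤ 24 * k) {q : ℝ} (hq : 0 ≤ q) (hqk : q ≤ 3 * k)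
    {τ : ℝ} (hτ : 0 < τ) {v : F}
    (hv : ∫⁻ x, ENNReal.ofReal (⟪v, L x⟫ ^ (4 * k)) ∂μ ≤ ENNReal.ofReal ((τ * ‖v‖) ^ (4 * k))) :
    ∫⁻ z, ENNReal.ofReal (⟪v, L z.1⟫ ^ 2) ∂rayMeasure μ L e q Γ ≤
      ENNReal.ofReal (2 * (exp 9 * τ) ^ 2 * ‖v‖ ^ 2) * rayMoment μ L e q Γ := by
  obtain rfl | hv_ne := eq_or_ne v 0
  · simp
  set T := exp 9 * (τ * ‖v‖) with hT
  have hT_pos : 0 < T := by positivity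
  have h_nonneg (w : ℝ) : 0 ≤ (w / T) ^ (2 * k) := (even_two_mul k).pow_nonneg _
  have h_small : ∫⁻ x, ENNReal.ofReal ((⟪v, L x⟫ / T) ^ (4 * k)) ∂μ ≤
      ENNReal.ofReal (exp (-(36 * k))) := by
    calc _ = ENNReal.ofReal ((T⁻¹) ^ (4 * k)) *
          ∫⁻ x, ENNReal.ofReal (⟪v, L x⟫ ^ (4 * k)) ∂μ := by
          rw [← lintegral_const_mul _ (by fun_prop)]
          simp_rw [div_eq_inv_mul, mul_pow,
            ENNReal.ofReal_mul (pow_nonneg (inv_nonneg.2 hT_pos.le) _)]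
      _ ≤ ENNReal.ofReal ((T⁻¹) ^ (4 * k)) * ENNReal.ofReal ((τ * ‖v‖) ^ (4 * k)) := by gcongr
      _ = ENNReal.ofReal (exp (-9) ^ (4 * k)) := by
          rw [← ENNReal.ofReal_mul (by positivity), ← mul_pow, hT, Real.exp_neg]
          field_simp
      _ = _ := by
          rw [← Real.exp_nat_mul]
          push_cast
          ring_nf
  have h_third := lintegral_rayMeasure_le_third_mul hμ h L he hk hΓ hq hqk
    (f := fun z => ENNReal.ofReal ((⟪v, L z.1⟫ / T) ^ (2 * k))) (by fun_prop)
    (g := fun x => ENNReal.ofReal ((⟪v, L x⟫ / T) ^ (4 * k))) (by fun_prop)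
    (fun z => by
      rw [← ENNReal.ofReal_pow (h_nonneg _), ← pow_mul, show 2 * k * 2 = 4 * k by ring]
      refine le_mul_of_one_le_right' (ENNReal.one_le_ofReal.2 (Real.one_le_exp ?_))
      exact div_nonneg (residualSq_nonneg L e Γ z) (by norm_num))
    h_small
  rw [← rayMeasure_univ] at h_third ⊢
  refine (lintegral_le_of_le_add_mul (a := T ^ 2) (b := T ^ 2) (by fun_prop)
    (fun _ => h_nonneg _) (by positivity) (by positivity) (by norm_num)
    (fun z => sq_le_sq_add_sq_mul_div_pow hk hT_pos _) h_third).trans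
    (mul_le_mul_left (ENNReal.ofReal_le_ofReal ?_) _)
  rw [hT]
  nlinarith [sq_nonneg (exp 9 * (τ * ‖v‖))]

theorem lintegral_residualSq_add_rayMeasure_le (hμ : MidpointPrekopaLeindler μ 0)
    (h : IsIsotropicLaw μ) (L : E →L[ℝ] F) {e : Fin k → ℝ} (he : ∑ i, e i ^ 2 = 1) (hk : 1 ≤ k)
    {Γ : Fin k → F} (hΓ : rowsEnergy L Γ ≤ 24 * k) {q : ℝ} (hq : 0 ≤ q) (hqk : q ≤ 3 * k)
    {τ : ℝ} (hτ : 0 < τ) (hL : ∀ v, ∫⁻ x, ENNReal.ofReal (⟪v, L x⟫ ^ (4 * k)) ∂μ ≤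
      ENNReal.ofReal ((τ * ‖v‖) ^ (4 * k))) (Δ : Fin k → F) {a b : ℝ} (ha : 0 ≤ a) (hb : 0 ≤ b) :
    ∫⁻ z, ENNReal.ofReal (a * residualSq L e Γ z + b * ∑ i, ⟪Δ i, L z.1⟫ ^ 2)
        ∂rayMeasure μ L e q Γ ≤
      ENNReal.ofReal (a * (163 * k) + b * (2 * (exp 9 * τ) ^ 2 * ∑ i, ‖Δ i‖ ^ 2)) *
        rayMoment μ L e q Γ := by
  have h_split (z : E × ℝ) :
      ENNReal.ofReal (a * residualSq L e Γ z + b * ∑ i, ⟪Δ i, L z.1⟫ ^ 2) =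
        ENNReal.ofReal a * ENNReal.ofReal (residualSq L e Γ z) +
          ENNReal.ofReal b * ∑ i, ENNReal.ofReal (⟪Δ i, L z.1⟫ ^ 2) := by
    rw [ENNReal.ofReal_add (mul_nonneg ha (residualSq_nonneg L e Γ z)) (by positivity),
      ENNReal.ofReal_mul ha, ENNReal.ofReal_mul hb,
      ENNReal.ofReal_sum_of_nonneg fun _ _ => sq_nonneg _]
  calc _ = ENNReal.ofReal a * ∫⁻ z, ENNReal.ofReal (residualSq L e Γ z) ∂rayMeasure μ L e q Γ +
        ENNReal.ofReal b *
          ∑ i, ∫⁻ z, ENNReal.ofReal (⟪Δ i, L z.1⟫ ^ 2) ∂rayMeasure μ L e q Γ := by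
        simp_rw [h_split]
        rw [lintegral_add_left (by fun_prop), lintegral_const_mul _ (by fun_prop),
          lintegral_const_mul _ (by fun_prop), lintegral_finsetSum _ fun _ _ => by fun_prop]
    _ ≤ ENNReal.ofReal a * (ENNReal.ofReal (163 * k) * rayMoment μ L e q Γ) +
        ENNReal.ofReal b *
          ∑ i, ENNReal.ofReal (2 * (exp 9 * τ) ^ 2 * ‖Δ i‖ ^ 2) * rayMoment μ L e q Γ := by
        gcongr with i
        · exact lintegral_residualSq_rayMeasure_le hμ h L he hk hΓ hq hqk
        · exact lintegral_sq_inner_rayMeasure_le hμ h L he hk hΓ hq hqk hτ (hL (Δ i))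
    _ = _ := by
        rw [← Finset.sum_mul, ← ENNReal.ofReal_sum_of_nonneg fun _ _ => by positivity,
          ← Finset.mul_sum, ← mul_assoc, ← mul_assoc, ← ENNReal.ofReal_mul ha,
          ← ENNReal.ofReal_mul hb, ← add_mul,
          ← ENNReal.ofReal_add (by positivity) (by positivity)]

theorem rayMoment_le_exp_mul_rayMoment_add (hμ : MidpointPrekopaLeindler μ 0)
    (h : IsIsotropicLaw μ) (L : E →L[ℝ] F) {e : Fin k → ℝ} (he : ∑ i, e i ^ 2 = 1) (hk : 1 ≤ k)
    {Γ : Fin k → F} (hΓ : rowsEnergy L Γ ≤ 24 * k) {q : ℝ} (hq : 0 ≤ q) (hqk : q ≤ 3 * k)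
    {τ : ℝ} (hτ : 0 < τ) (hL : ∀ v, ∫⁻ x, ENNReal.ofReal (⟪v, L x⟫ ^ (4 * k)) ∂μ ≤
      ENNReal.ofReal ((τ * ‖v‖) ^ (4 * k))) (hτ_small : 2 * (exp 9 * τ) ^ 2 ≤ 1 / 2)
    (h_fin : rayMoment μ L e q Γ ≠ ⊤) (Δ : Fin k → F) :
    rayMoment μ L e q Γ ≤
      ENNReal.ofReal (exp (163 * (2 * (exp 9 * τ) ^ 2) * k + (∑ i, ‖Δ i‖ ^ 2) / 2)) *
        rayMoment μ L e q (Γ + Δ) := by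
  set ρ := 2 * (exp 9 * τ) ^ 2 with hρ
  have hρ_pos : 0 < ρ := by positivity
  set ψ : E × ℝ → ℝ := fun z =>
    ρ * residualSq L e Γ z + (1 / (4 * ρ) + 1 / 2) * ∑ i, ⟪Δ i, L z.1⟫ ^ 2 with hψ
  have hψ_nonneg (z : E × ℝ) : 0 ≤ ψ z :=
    add_nonneg (mul_nonneg hρ_pos.le (residualSq_nonneg L e Γ z)) (by positivity)
  have h_mean : ∫⁻ z, ENNReal.ofReal (ψ z) ∂rayMeasure μ L e q Γ ≤
      ENNReal.ofReal (163 * ρ * k + (∑ i, ‖Δ i‖ ^ 2) / 2) * rayMoment μ L e q Γ := by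
    refine (lintegral_residualSq_add_rayMeasure_le hμ h L he hk hΓ hq hqk hτ hL Δ hρ_pos.le
      (by positivity)).trans (mul_le_mul_left (ENNReal.ofReal_le_ofReal ?_) _)
    have h_coeff : (1 / (4 * ρ) + 1 / 2) * ρ ≤ 1 / 2 := by
      have h_cancel : (1 / (4 * ρ) + 1 / 2) * ρ = 1 / 4 + ρ / 2 := by field_simp
      linarith
    rw [← hρ, ← mul_assoc (1 / (4 * ρ) + 1 / 2)]
    linarith [mul_le_mul_of_nonneg_right h_coeff (show 0 ≤ ∑ i, ‖Δ i‖ ^ 2 by positivity)]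
  have h_shift : ∫⁻ z, ENNReal.ofReal (exp (-ψ z)) ∂rayMeasure μ L e q Γ ≤
      rayMoment μ L e q (Γ + Δ) := by
    rw [lintegral_rayMeasure μ L e q Γ (by fun_prop)]
    refine lintegral_mono_ae ?_
    filter_upwards [ae_prodHalfLine_pos μ] with z hz
    rw [← ENNReal.ofReal_mul (exp_pos _).le, mul_left_comm, ← Real.exp_add]
    gcongr
    have h_coeff : 1 / (2 * ρ) + 1 = 2 * (1 / (4 * ρ) + 1 / 2) := by
      field_simp
      ring
    have h_residual := residualSq_add_le L e Γ Δ z hρ_pos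
    rw [h_coeff] at h_residual
    simp only [hψ]
    linarith
  have h_finite : IsFiniteMeasure (rayMeasure μ L e q Γ) :=
    ⟨by rw [rayMeasure_univ]; exact h_fin.lt_top⟩
  rw [← rayMeasure_univ] at h_mean ⊢
  refine (measure_univ_le_exp_mul_lintegral_exp_neg (by fun_prop) hψ_nonneg (by positivity)
    h_mean).trans ?_
  gcongr

end GoodRows

section HalfGaussianMoment

theorem halfGaussianMoment_ne_top {q : ℝ} (hq : -1 < q) : halfGaussianMoment q ≠ ∞ := by
  have h_int :=
    (integrableOn_rpow_mul_exp_neg_mul_sq (b := 1 / 2) (by norm_num) hq).lintegral_lt_top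
  have h_exponent (t : ℝ) : -(1 / 2) * t ^ 2 = -t ^ 2 / 2 := by ring
  simp only [h_exponent] at h_int
  exact h_int.ne

theorem halfGaussianMoment_ne_zero (q : ℝ) : halfGaussianMoment q ≠ 0 := by
  refine ((setLIntegral_pos_iff (by fun_prop)).2 ?_).ne'
  have h_support : Set.Ioi (0 : ℝ) ⊆
      Function.support fun t : ℝ => ENNReal.ofReal (t ^ q * exp (-t ^ 2 / 2)) :=
    fun t (ht : 0 < t) => (ENNReal.ofReal_pos.2 (by positivity)).ne'
  rw [Set.inter_eq_self_of_subset_right h_support, Real.volume_Ioi]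
  exact ENNReal.zero_lt_top

theorem sq_halfGaussianMoment_le (q a : ℝ) :
    halfGaussianMoment q ^ 2 ≤ halfGaussianMoment (q - a) * halfGaussianMoment (q + a) := by
  have h_sq (s : ℝ) {t : ℝ} (ht : 0 < t) :
      (t ^ (s / 2) * exp (-t ^ 2 / 4)) ^ 2 = t ^ s * exp (-t ^ 2 / 2) := by
    rw [mul_pow, ← Real.rpow_mul_natCast ht.le, ← Real.exp_nat_mul]
    ring_nf
  have h_mul {t : ℝ} (ht : 0 < t) : t ^ ((q - a) / 2) * exp (-t ^ 2 / 4) *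
      (t ^ ((q + a) / 2) * exp (-t ^ 2 / 4)) = t ^ q * exp (-t ^ 2 / 2) := by
    rw [mul_mul_mul_comm, ← Real.rpow_add ht, ← Real.exp_add]
    ring_nf
  convert sq_lintegral_mul_le_lintegral_sq_mul_lintegral_sq
    (ν := volume.restrict (Set.Ioi (0 : ℝ)))
    (f := fun t => ENNReal.ofReal (t ^ ((q - a) / 2) * exp (-t ^ 2 / 4)))
    (g := fun t => ENNReal.ofReal (t ^ ((q + a) / 2) * exp (-t ^ 2 / 4)))
    (by fun_prop) (by fun_prop) using 2
  · refine setLIntegral_congr_fun measurableSet_Ioi fun t (ht : 0 < t) => ?_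
    rw [← ENNReal.ofReal_mul (by positivity), h_mul ht]
  all_goals
    refine setLIntegral_congr_fun measurableSet_Ioi fun t (ht : 0 < t) => ?_
    rw [← ENNReal.ofReal_pow (by positivity), h_sq _ ht]

end HalfGaussianMoment

theorem le_exp_mul_of_le_add_mul {a b : ℝ≥0∞} (ha : a ≠ ∞) {x : ℝ} (hx : 0 ≤ x)
    (hx_half : x ≤ 1 / 2) (h : a ≤ b + ENNReal.ofReal x * a) :
    a ≤ ENNReal.ofReal (exp (2 * x)) * b := by
  have h_split : ENNReal.ofReal (1 - x) * a + ENNReal.ofReal x * a = a := by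
    rw [← add_mul, ← ENNReal.ofReal_add (by linarith) hx, sub_add_cancel, ENNReal.ofReal_one,
      one_mul]
  have h_main : ENNReal.ofReal (1 - x) * a ≤ b :=
    (ENNReal.add_le_add_iff_right (ENNReal.mul_ne_top ENNReal.ofReal_ne_top ha)).1
      (h_split.trans_le h)
  have h_factor : 1 ≤ exp (2 * x) * (1 - x) := by
    nlinarith [Real.add_one_le_exp (2 * x)]
  calc a ≤ ENNReal.ofReal (exp (2 * x) * (1 - x)) * a :=
        le_mul_of_one_le_left' (ENNReal.one_le_ofReal.2 h_factor)
    _ = ENNReal.ofReal (exp (2 * x)) * (ENNReal.ofReal (1 - x) * a) := by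
        rw [ENNReal.ofReal_mul (exp_pos _).le, mul_assoc]
    _ ≤ _ := by gcongr

section NoisyMoment

theorem noisyStdDev_rpow_le {E F : Type*} [NormedAddCommGroup E] [NormedSpace ℝ E]
    [NormedAddCommGroup F] [NormedSpace ℝ F] (L : E →L[ℝ] F) (x : E) {s : ℝ} {m : ℕ}
    (hm : s ≤ m) : noisyStdDev L x ^ s ≤ (1 + ‖L x‖) ^ m := by
  have h_one : 1 ≤ noisyStdDev L x :=
    Real.one_le_sqrt.2 (le_add_of_nonneg_right (sq_nonneg _))
  have h_le : noisyStdDev L x ≤ 1 + ‖L x‖ :=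
    Real.sqrt_le_iff.2 ⟨by positivity, by nlinarith [norm_nonneg (L x)]⟩
  calc noisyStdDev L x ^ s ≤ noisyStdDev L x ^ (m : ℝ) :=
        Real.rpow_le_rpow_of_exponent_le h_one hm
    _ = noisyStdDev L x ^ m := Real.rpow_natCast _ _
    _ ≤ _ := by gcongr

variable {E F : Type*} [NormedAddCommGroup E] [InnerProductSpace ℝ E] [FiniteDimensional ℝ E]
  [NormedAddCommGroup F] [InnerProductSpace ℝ F] [MeasurableSpace E] [BorelSpace E] {μ : Measure E}

theorem memLp_continuousLinearMap [IsProbabilityMeasure μ] (hμ : MidpointPrekopaLeindler μ 0)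
    (h : IsIsotropicLaw μ) (L : E →L[ℝ] F) (p : ℕ) : MemLp L p μ := by
  have h_id : MemLp (fun x : E => x) p μ := by
    have h_sum := memLp_finsetSum Finset.univ fun i _ =>
      (ContinuousLinearMap.toSpanSingleton ℝ (stdOrthonormalBasis ℝ E i)).comp_memLp'
        (memLp_inner hμ h (stdOrthonormalBasis ℝ E i) p)
    refine h_sum.ae_eq (ae_of_all _ fun x => ?_)
    simp_rw [Function.comp_apply, ContinuousLinearMap.toSpanSingleton_apply, real_inner_comm _ x]
    exact (stdOrthonormalBasis ℝ E).sum_repr' x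
  exact L.comp_memLp' h_id

theorem noisyMoment_ne_top [IsProbabilityMeasure μ] (hμ : MidpointPrekopaLeindler μ 0)
    (h : IsIsotropicLaw μ) (L : E →L[ℝ] F) (s : ℝ) : noisyMoment μ L s ≠ ∞ := by
  obtain ⟨m, hm⟩ := exists_nat_ge s
  have h_int : Integrable (fun x => (1 + ‖L x‖) ^ m) μ := by
    have h_memLp := (memLp_const (1 : ℝ)).add (memLp_continuousLinearMap hμ h L m).norm
    refine h_memLp.integrable_norm_pow'.congr (ae_of_all _ fun x => ?_)
    simp [abs_of_nonneg, add_nonneg]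
  exact ne_top_of_le_ne_top h_int.lintegral_lt_top.ne
    (lintegral_mono fun x => ENNReal.ofReal_le_ofReal (noisyStdDev_rpow_le L x hm))

variable [FiniteDimensional ℝ F]

theorem IsIsotropicLaw.lintegral_sq_norm_map (h : IsIsotropicLaw μ) (L : E →L[ℝ] F) :
    ∫⁻ x, ENNReal.ofReal (‖L x‖ ^ 2) ∂μ = ENNReal.ofReal (hilbertSchmidtSq L) := by
  let b := stdOrthonormalBasis ℝ F
  simp_rw [← b.sum_sq_inner_right]
  rw [h.lintegral_sum_sq_inner L b, rowsEnergy, ← hilbertSchmidtSq_eq_sum _ b,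
    hilbertSchmidtSq_adjoint]

theorem noisyMoment_two [IsProbabilityMeasure μ] (h : IsIsotropicLaw μ) {L : E →L[ℝ] F}
    (hL : hilbertSchmidtSq L = 1) : noisyMoment μ L 2 = 2 := by
  have h_split (x : E) : ENNReal.ofReal (noisyStdDev L x ^ (2 : ℝ)) =
      1 + ENNReal.ofReal (‖L x‖ ^ 2) := by
    rw [Real.rpow_two, sq_noisyStdDev, ENNReal.ofReal_add zero_le_one (sq_nonneg _),
      ENNReal.ofReal_one]
  simp_rw [noisyMoment, h_split]
  rw [lintegral_add_left measurable_const, h.lintegral_sq_norm_map, hL, lintegral_one,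
    measure_univ, ENNReal.ofReal_one, one_add_one_eq_two]

end NoisyMoment

section GoodRowsIntegral

variable {E F : Type*} [NormedAddCommGroup E] [InnerProductSpace ℝ E] [FiniteDimensional ℝ E]
  [NormedAddCommGroup F] [InnerProductSpace ℝ F] [FiniteDimensional ℝ F] [MeasurableSpace E]
  {k : ℕ}

/-- The rows for which `rayMoment_le_exp_mul_rayMoment_add` applies: small energy, finite ray
moment. -/
def goodRows (μ : Measure E) (L : E →L[ℝ] F) (e : Fin k → ℝ) (q : ℝ) : Set (Fin k → F) :=
  {Γ | rowsEnergy L Γ ≤ 24 * k ∧ rayMoment μ L e q Γ ≠ ∞}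

theorem rayMoment_le_indicator_goodRows_add (μ : Measure E) (L : E →L[ℝ] F) (e : Fin k → ℝ) (q : ℝ)
    {Γ : Fin k → F} (hΓ : rayMoment μ L e q Γ ≠ ∞) :
    rayMoment μ L e q Γ ≤ (goodRows μ L e q).indicator (rayMoment μ L e q) Γ +
      ENNReal.ofReal (exp (-(3 * k))) *
        (rayMoment μ L e q Γ * ENNReal.ofReal (exp (rowsEnergy L Γ / 8))) := by
  by_cases h_good : Γ ∈ goodRows μ L e q
  · rw [Set.indicator_of_mem h_good]
    exact le_self_add
  · have h_energy : 24 * k < rowsEnergy L Γ := not_le.1 fun h_le => h_good ⟨h_le, hΓ⟩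
    rw [Set.indicator_of_notMem h_good, zero_add, mul_left_comm,
      ← ENNReal.ofReal_mul (exp_pos _).le, ← Real.exp_add]
    refine le_mul_of_one_le_right' ?_
    rw [ENNReal.one_le_ofReal, Real.one_le_exp_iff]
    linarith

variable [BorelSpace E] [MeasurableSpace F] [BorelSpace F]

theorem measurableSet_goodRows (μ : Measure E) [SFinite μ] (L : E →L[ℝ] F) (e : Fin k → ℝ)
    (q : ℝ) : MeasurableSet (goodRows μ L e q) := by
  have h_moment : Measurable (rayMoment μ L e q) := by fun_prop
  exact (measurableSet_le (measurable_rowsEnergy L) measurable_const).inter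
    (h_moment (measurableSet_singleton _).compl)

variable {μ : Measure E} [IsProbabilityMeasure μ]

theorem exp_neg_mul_sqrt_two_pow_le {k : ℕ} {q : ℝ} (hq : 0 ≤ q) (hqk : q + 1 ≤ 3 * k) :
    exp (-(3 * k)) * (√2 ^ k * √2 ^ (q + 1)) ≤ exp (-k) := by
  have h_sqrt : √2 ≤ exp (1 / 2) := by
    rw [Real.sqrt_le_left (exp_pos _).le, ← Real.exp_nat_mul]
    norm_num
    linarith [Real.add_one_le_exp (1 : ℝ)]
  calc _ ≤ exp (-(3 * k)) * (exp (1 / 2) ^ k * exp (1 / 2) ^ (q + 1)) := by gcongr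
    _ = exp (-(3 * k) + (k * (1 / 2) + 1 / 2 * (q + 1))) := by
        rw [← Real.exp_nat_mul, ← Real.exp_mul, ← Real.exp_add, ← Real.exp_add]
    _ ≤ _ := Real.exp_le_exp.2 (by linarith)

theorem exp_neg_natCast_le_half {k : ℕ} (hk : 1 ≤ k) : exp (-(k : ℝ)) ≤ 1 / 2 := by
  have hk' : (1 : ℝ) ≤ k := by exact_mod_cast hk
  rw [Real.exp_neg, one_div]
  exact inv_anti₀ two_pos (by linarith [Real.add_one_le_exp (k : ℝ)])

theorem halfGaussianMoment_mul_noisyMoment_le (hμ : MidpointPrekopaLeindler μ 0)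
    (h : IsIsotropicLaw μ) {L : E →L[ℝ] F} (hL : hilbertSchmidtSq L = 1) {e : Fin k → ℝ}
    (he : ∑ i, e i ^ 2 = 1) (hk : 1 ≤ k) {q : ℝ} (hq : 0 ≤ q) (hqk : q + 1 ≤ 3 * k) :
    halfGaussianMoment q * noisyMoment μ L (q + 1 - k) ≤ ENNReal.ofReal (exp (2 * exp (-k))) *
      ∫⁻ Γ in goodRows μ L e q, rayMoment μ L e q Γ ∂Measure.pi (fun _ => stdGaussian F) := by
  have h_avg := lintegral_rayMoment_stdGaussian (μ := μ) L he q
  have h_fin : halfGaussianMoment q * noisyMoment μ L (q + 1 - k) ≠ ∞ :=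
    ENNReal.mul_ne_top (halfGaussianMoment_ne_top (by linarith)) (noisyMoment_ne_top hμ h L _)
  refine le_exp_mul_of_le_add_mul h_fin (exp_pos _).le (exp_neg_natCast_le_half hk) ?_
  have h_good := measurableSet_goodRows μ L e q
  rw [← lintegral_indicator h_good]
  calc halfGaussianMoment q * noisyMoment μ L (q + 1 - k)
      = ∫⁻ Γ, rayMoment μ L e q Γ ∂Measure.pi (fun _ => stdGaussian F) := h_avg.symm
    _ ≤ ∫⁻ Γ, ((goodRows μ L e q).indicator (rayMoment μ L e q) Γ +
          ENNReal.ofReal (exp (-(3 * k))) * (rayMoment μ L e q Γ *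
            ENNReal.ofReal (exp (rowsEnergy L Γ / 8)))) ∂Measure.pi (fun _ => stdGaussian F) := by
        refine lintegral_mono_ae ?_
        filter_upwards [ae_lt_top (measurable_rayMoment μ L e q) (h_avg ▸ h_fin)] with Γ hΓ
        exact rayMoment_le_indicator_goodRows_add μ L e q hΓ.ne
    _ = (∫⁻ Γ, (goodRows μ L e q).indicator (rayMoment μ L e q) Γ
          ∂Measure.pi (fun _ => stdGaussian F)) + ENNReal.ofReal (exp (-(3 * k))) *
          ∫⁻ Γ, rayMoment μ L e q Γ * ENNReal.ofReal (exp (rowsEnergy L Γ / 8))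
            ∂Measure.pi (fun _ => stdGaussian F) := by
        rw [lintegral_add_left (.indicator (by fun_prop) h_good),
          lintegral_const_mul _ (by fun_prop)]
    _ ≤ _ := by
        refine add_le_add le_rfl ?_
        refine (mul_le_mul_right
          (lintegral_rayMoment_mul_exp_rowsEnergy_stdGaussian_le hL he q) _).trans ?_
        rw [← mul_assoc, ← ENNReal.ofReal_mul (exp_pos _).le]
        exact mul_le_mul_left (ENNReal.ofReal_le_ofReal (exp_neg_mul_sqrt_two_pow_le hq hqk)) _

theorem sum_sq_norm_midpoint_sub {F : Type*} [NormedAddCommGroup F] [NormedSpace ℝ F] {k : ℕ}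
    (Γ Δ : Fin k → F) :
    ∑ i, ‖((1 / 2 : ℝ) • (Γ + Δ) - Γ) i‖ ^ 2 = ∑ i, ‖Γ i - Δ i‖ ^ 2 / 4 := by
  refine Finset.sum_congr rfl fun i _ => ?_
  have h_half : ((1 / 2 : ℝ) • (Γ + Δ) - Γ) i = (1 / 2 : ℝ) • (Δ i - Γ i) := by
    simp only [Pi.sub_apply, Pi.smul_apply, Pi.add_apply]
    module
  rw [h_half, norm_smul, mul_pow, norm_sub_rev, Real.norm_of_nonneg (by norm_num)]
  ring

theorem rayMoment_mul_rayMoment_le_midpoint (hμ : MidpointPrekopaLeindler μ 0)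
    (h : IsIsotropicLaw μ) (L : E →L[ℝ] F) {e : Fin k → ℝ} (he : ∑ i, e i ^ 2 = 1) (hk : 1 ≤ k)
    {τ : ℝ} (hτ : 0 < τ) (hL : ∀ v, ∫⁻ x, ENNReal.ofReal (⟪v, L x⟫ ^ (4 * k)) ∂μ ≤
      ENNReal.ofReal ((τ * ‖v‖) ^ (4 * k))) (hτ_small : 2 * (exp 9 * τ) ^ 2 ≤ 1 / 2) {q a : ℝ}
    (ha : 0 ≤ a) (haq : a < q) (hqk : q + a ≤ 3 * k) {Γ Δ : Fin k → F}
    (hΓ : Γ ∈ goodRows μ L e (q - a)) (hΔ : Δ ∈ goodRows μ L e (q + a)) :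
    rayMoment μ L e (q - a) Γ * rayMoment μ L e (q + a) Δ ≤
      ENNReal.ofReal (exp (326 * (2 * (exp 9 * τ) ^ 2) * k + 2 * a ^ 2 / q)) *
        rayMoment μ L e q ((1 / 2 : ℝ) • (Γ + Δ)) ^ 2 *
          ENNReal.ofReal (exp (∑ i, ‖Γ i - Δ i‖ ^ 2 / 4)) := by
  have h_left := rayMoment_le_exp_mul_rayMoment_add hμ h L he hk hΓ.1 (q := q - a) (by linarith)
    (by linarith) hτ hL hτ_small hΓ.2 ((1 / 2 : ℝ) • (Γ + Δ) - Γ)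
  have h_right := rayMoment_le_exp_mul_rayMoment_add hμ h L he hk hΔ.1 (q := q + a) (by linarith)
    (by linarith) hτ hL hτ_small hΔ.2 ((1 / 2 : ℝ) • (Γ + Δ) - Δ)
  rw [sum_sq_norm_midpoint_sub, add_sub_cancel] at h_left
  rw [add_comm Γ Δ, sum_sq_norm_midpoint_sub, add_sub_cancel, add_comm Δ Γ] at h_right
  simp_rw [norm_sub_rev (Δ _)] at h_right
  set M := (1 / 2 : ℝ) • (Γ + Δ)
  set D := ∑ i, ‖Γ i - Δ i‖ ^ 2 / 4
  set ρ := 2 * (exp 9 * τ) ^ 2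
  calc _ ≤ ENNReal.ofReal (exp (163 * ρ * k + D / 2)) * rayMoment μ L e (q - a) M *
        (ENNReal.ofReal (exp (163 * ρ * k + D / 2)) * rayMoment μ L e (q + a) M) :=
        mul_le_mul' h_left h_right
    _ = ENNReal.ofReal (exp (326 * ρ * k + D)) *
          (rayMoment μ L e (q - a) M * rayMoment μ L e (q + a) M) := by
        rw [mul_mul_mul_comm, ← ENNReal.ofReal_mul (exp_pos _).le, ← Real.exp_add]
        ring_nf
    _ ≤ ENNReal.ofReal (exp (326 * ρ * k + D)) *
          (ENNReal.ofReal (exp (2 * a ^ 2 / q)) * rayMoment μ L e q M ^ 2) :=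
        mul_le_mul_right (rayMoment_mul_rayMoment_le hμ L e M (exp_pos _).le
          fun t s ht hs => rpow_sub_mul_rpow_add_le ha haq ht hs) _
    _ = _ := by
        rw [← mul_assoc, mul_right_comm (ENNReal.ofReal (exp (326 * ρ * k + 2 * a ^ 2 / q))),
          ← ENNReal.ofReal_mul (exp_pos _).le, ← ENNReal.ofReal_mul (exp_pos _).le, ← Real.exp_add,
          ← Real.exp_add]
        ring_nf

theorem setLIntegral_goodRows_mul_le (hμ : MidpointPrekopaLeindler μ 0)
    (h : IsIsotropicLaw μ) (L : E →L[ℝ] F) {e : Fin k → ℝ} (he : ∑ i, e i ^ 2 = 1) (hk : 1 ≤ k)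
    {τ : ℝ} (hτ : 0 < τ) (hL : ∀ v, ∫⁻ x, ENNReal.ofReal (⟪v, L x⟫ ^ (4 * k)) ∂μ ≤
      ENNReal.ofReal ((τ * ‖v‖) ^ (4 * k))) (hτ_small : 2 * (exp 9 * τ) ^ 2 ≤ 1 / 2) {q a : ℝ}
    (ha : 0 ≤ a) (haq : a < q) (hqk : q + a ≤ 3 * k) :
    (∫⁻ Γ in goodRows μ L e (q - a), rayMoment μ L e (q - a) Γ
        ∂Measure.pi (fun _ => stdGaussian F)) *
      (∫⁻ Γ in goodRows μ L e (q + a), rayMoment μ L e (q + a) Γ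
        ∂Measure.pi (fun _ => stdGaussian F)) ≤
      ENNReal.ofReal (exp (326 * (2 * (exp 9 * τ) ^ 2) * k + 2 * a ^ 2 / q)) *
        (∫⁻ Γ, rayMoment μ L e q Γ ∂Measure.pi (fun _ => stdGaussian F)) ^ 2 := by
  set c := 326 * (2 * (exp 9 * τ) ^ 2) * k + 2 * a ^ 2 / q
  have h_const (y : ℝ≥0∞) :
      ENNReal.ofReal (exp c) * y ^ 2 = (ENNReal.ofReal (exp (c / 2)) * y) ^ 2 := by
    rw [mul_pow, ← ENNReal.ofReal_pow (exp_pos _).le, ← Real.exp_nat_mul]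
    ring_nf
  rw [← lintegral_indicator (measurableSet_goodRows ..),
    ← lintegral_indicator (measurableSet_goodRows ..), h_const,
    ← lintegral_const_mul _ (measurable_rayMoment μ L e q)]
  refine midpointPrekopaLeindler_stdGaussian.pi k _ _ _
    ((measurable_rayMoment ..).indicator (measurableSet_goodRows ..))
    ((measurable_rayMoment ..).indicator (measurableSet_goodRows ..))
    ((measurable_rayMoment ..).const_mul _) fun Γ Δ => ?_
  by_cases hΓ : Γ ∈ goodRows μ L e (q - a)
  · by_cases hΔ : Δ ∈ goodRows μ L e (q + a)
    · rw [Set.indicator_of_mem hΓ, Set.indicator_of_mem hΔ, ← h_const]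
      exact rayMoment_mul_rayMoment_le_midpoint hμ h L he hk hτ hL hτ_small ha haq hqk hΓ hΔ
    · simp [Set.indicator_of_notMem hΔ]
  · simp [Set.indicator_of_notMem hΓ]

theorem noisyMoment_sub_mul_noisyMoment_add_le (hμ : MidpointPrekopaLeindler μ 0)
    (h : IsIsotropicLaw μ) {L : E →L[ℝ] F} (hHS : hilbertSchmidtSq L = 1) {τ : ℝ} (hτ : 0 < τ)
    (hL : ∀ v, ∫⁻ x, ENNReal.ofReal (⟪v, L x⟫ ^ (4 * k)) ∂μ ≤
      ENNReal.ofReal ((τ * ‖v‖) ^ (4 * k))) (hτ_small : 2 * (exp 9 * τ) ^ 2 ≤ 1 / 2) {a : ℝ}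
    (ha : 1 ≤ a) (hak : 2 * a ≤ k) :
    noisyMoment μ L (2 - a) * noisyMoment μ L (2 + a) ≤ ENNReal.ofReal (4 *
      exp (326 * (2 * (exp 9 * τ) ^ 2) * k + 2 * a ^ 2 / (k + 1) + 4 * exp (-k))) := by
  have hk_pos : (0 : ℝ) < k := by linarith
  have hk : 1 ≤ k := by exact_mod_cast hk_pos
  set e : Fin k → ℝ := fun _ => (√k)⁻¹ with he_def
  have he : ∑ i, e i ^ 2 = 1 := by simp [he_def, hk_pos.ne']
  set q : ℝ := k + 1 with hq
  have h_low := halfGaussianMoment_mul_noisyMoment_le hμ h hHS he hk (q := q - a) (by linarith)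
    (by linarith)
  have h_high := halfGaussianMoment_mul_noisyMoment_le hμ h hHS he hk (q := q + a) (by linarith)
    (by linarith)
  have h_prod := setLIntegral_goodRows_mul_le hμ h L he hk hτ hL hτ_small (q := q) (a := a)
    (by linarith) (by linarith) (by linarith)
  rw [lintegral_rayMoment_stdGaussian L he, show q + 1 - k = 2 by rw [hq]; ring,
    noisyMoment_two h hHS] at h_prod
  rw [show q - a + 1 - k = 2 - a by rw [hq]; ring] at h_low
  rw [show q + a + 1 - k = 2 + a by rw [hq]; ring] at h_high
  set c := 326 * (2 * (exp 9 * τ) ^ 2) * k + 2 * a ^ 2 / q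
  have h_scaled : halfGaussianMoment q ^ 2 * (noisyMoment μ L (2 - a) * noisyMoment μ L (2 + a)) ≤
      halfGaussianMoment q ^ 2 * ENNReal.ofReal (4 * exp (c + 4 * exp (-k))) := by
    calc _ ≤ (halfGaussianMoment (q - a) * halfGaussianMoment (q + a)) *
          (noisyMoment μ L (2 - a) * noisyMoment μ L (2 + a)) :=
          mul_le_mul_left (sq_halfGaussianMoment_le q a) _
      _ = (halfGaussianMoment (q - a) * noisyMoment μ L (2 - a)) *
          (halfGaussianMoment (q + a) * noisyMoment μ L (2 + a)) := mul_mul_mul_comm _ _ _ _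
      _ ≤ _ := mul_le_mul' h_low h_high
      _ ≤ ENNReal.ofReal (exp (2 * exp (-k))) * ENNReal.ofReal (exp (2 * exp (-k))) *
          (ENNReal.ofReal (exp c) * (halfGaussianMoment q * 2) ^ 2) := by
          rw [mul_mul_mul_comm]
          exact mul_le_mul_right h_prod _
      _ = halfGaussianMoment q ^ 2 * (ENNReal.ofReal (2 ^ 2) * ENNReal.ofReal
          (exp (2 * exp (-k)) * exp (2 * exp (-k)) * exp c)) := by
          rw [ENNReal.ofReal_mul (by positivity), ENNReal.ofReal_mul (by positivity),
            ENNReal.ofReal_pow zero_le_two, ENNReal.ofReal_ofNat]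
          ring
      _ = _ := by
          rw [← ENNReal.ofReal_mul (by positivity), ← Real.exp_add, ← Real.exp_add]
          ring_nf
  exact (ENNReal.mul_le_mul_iff_right (pow_ne_zero 2 (halfGaussianMoment_ne_zero q))
    (ENNReal.pow_ne_top (halfGaussianMoment_ne_top (by linarith)))).1 h_scaled

end GoodRowsIntegral

/-- Ratio of the moment order `P` to the scale `N = ñ^{α/2}` up to which products of symmetric
moments are controlled; the cube makes `(P / N) ^ (1 / (α + 1))` at most `1 / (16 e⁹)`. -/
def momentRangeConst : ℝ := (1 / (16 * exp 9)) ^ 3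

/-- Constant in the exponent controlling products of symmetric moments of `noisyStdDev`:
`326 · 128 · 2 · e¹⁸` comes from the shift of the rows, `2` from the interpolation of powers along a
ray, and `1` from the discarded rows. -/
def noisyMomentConst : ℝ := 83456 * exp 18 + 3

theorem momentRangeConst_pos : 0 < momentRangeConst := by
  unfold momentRangeConst
  positivity

theorem rpow_one_div_add_one_le_of_le_cube {α x s : ℝ} (hα₀ : 0 ≤ α) (hα₂ : α ≤ 2) (hx : 0 ≤ x)
    (hs : 0 < s) (hs_one : s ≤ 1) (hxs : x ≤ s ^ 3) : x ^ (1 / (α + 1)) ≤ s := by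
  calc x ^ (1 / (α + 1)) ≤ (s ^ 3) ^ (1 / (α + 1)) := rpow_le_rpow hx hxs (by positivity)
    _ ≤ (s ^ 3) ^ (1 / 3 : ℝ) :=
        rpow_le_rpow_of_exponent_ge (by positivity) (pow_le_one₀ hs.le hs_one)
          (one_div_le_one_div_of_le (by positivity) (by linarith))
    _ = s := by rw [← rpow_natCast, ← rpow_mul hs.le]; norm_num

theorem four_mul_div_rpow_le {α P N κ : ℝ} (hα : 1 ≤ α) (hP : 0 < P) (hN : 0 < N) (hκ₀ : 0 ≤ κ)
    (hκ : κ ≤ 2 * (P / (P / N) ^ (1 / (α + 1)))) :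
    (4 * κ / N) ^ (1 / α) ≤ 8 * (P / N) ^ (1 / (α + 1)) := by
  have hα₀ : 0 < α := by linarith
  set ε := (P / N) ^ (1 / (α + 1)) with hε
  have hε₀ : 0 < ε := by positivity
  have h_ratio : ε ^ α * ε = P / N := by
    rw [← rpow_add_one hε₀.ne', hε, ← rpow_mul (by positivity),
      one_div_mul_cancel (by positivity), rpow_one]
  have h_base : 4 * κ / N ≤ 8 * ε ^ α := by
    calc 4 * κ / N ≤ 4 * (2 * (P / ε)) / N := by gcongr
      _ = 8 * (P / N / ε) := by ring
      _ = 8 * ε ^ α := by rw [← h_ratio, mul_div_cancel_right₀ _ hε₀.ne']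
  calc (4 * κ / N) ^ (1 / α) ≤ (8 * ε ^ α) ^ (1 / α) := rpow_le_rpow (by positivity) h_base
        (by positivity)
    _ = 8 ^ (1 / α) * ε := by
        rw [mul_rpow (by norm_num) (by positivity), ← rpow_mul hε₀.le,
          mul_one_div_cancel hα₀.ne', rpow_one]
    _ ≤ 8 ^ (1 : ℝ) * ε := by
        gcongr
        · norm_num
        · exact (div_le_one hα₀).2 hα
    _ = 8 * ε := by rw [rpow_one]

theorem row_exponent_le {P ε κ τ : ℝ} (hP : 4 ≤ P) (hε : 0 < ε) (hτ₀ : 0 ≤ τ) (hτ : τ ≤ 8 * ε)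
    (hκ_ge : P / ε ≤ κ) (hκ_le : κ ≤ 2 * (P / ε)) :
    326 * (2 * (exp 9 * τ) ^ 2) * κ + 2 * P ^ 2 / (κ + 1) + 4 * exp (-κ) ≤
      noisyMomentConst * P * ε := by
  have hκ : 0 < κ := lt_of_lt_of_le (by positivity) hκ_ge
  have hPκ : P ≤ κ * ε := (div_le_iff₀ hε).1 hκ_ge
  have h_shift : 326 * (2 * (exp 9 * τ) ^ 2) * κ ≤ 83456 * exp 18 * P * ε := by
    calc 326 * (2 * (exp 9 * τ) ^ 2) * κ
        ≤ 326 * (2 * (exp 9 * (8 * ε)) ^ 2) * (2 * (P / ε)) := by gcongr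
      _ = 83456 * exp 9 ^ 2 * P * ε := by field_simp; norm_num
      _ = 83456 * exp 18 * P * ε := by rw [← Real.exp_nat_mul]; norm_num
  have h_interpolation : 2 * P ^ 2 / (κ + 1) ≤ 2 * P * ε := by
    rw [div_le_iff₀ (by positivity)]
    nlinarith [mul_pos (by linarith : 0 < P) hε]
  have h_discarded : 4 * exp (-κ) ≤ P * ε := by
    have h_exp : exp (-κ) * κ ≤ 1 := by
      rw [Real.exp_neg, inv_mul_le_one₀ (exp_pos κ)]
      linarith [Real.add_one_le_exp κ]
    nlinarith [exp_pos (-κ), mul_pos (exp_pos (-κ)) hε]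
  calc _ ≤ 83456 * exp 18 * P * ε + 2 * P * ε + P * ε := by linarith
    _ = noisyMomentConst * P * ε := by unfold noisyMomentConst; ring

variable {E F : Type*} [NormedAddCommGroup E] [InnerProductSpace ℝ E] [FiniteDimensional ℝ E]
  [NormedAddCommGroup F] [InnerProductSpace ℝ F] [FiniteDimensional ℝ F] [MeasurableSpace E]
  [BorelSpace E] {μ : Measure E} [IsProbabilityMeasure μ]

theorem IsPsiAlphaLaw.lintegral_inner_map_pow_le {α b : ℝ} (hψ : IsPsiAlphaLaw μ α b)
    (hμ : MidpointPrekopaLeindler μ 0) (h : IsIsotropicLaw μ) (hb : 0 ≤ b) (L : E →L[ℝ] F)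
    {m : ℕ} (hm : m ≠ 0) (v : F) :
    ∫⁻ x, ENNReal.ofReal (⟪v, L x⟫ ^ (2 * m)) ∂μ ≤
      ENNReal.ofReal ((b * ‖L‖ * (2 * m) ^ (1 / α) * ‖v‖) ^ (2 * m)) := by
  have h_adjoint := hψ.lintegral_inner_pow_le hμ h (L.adjoint v) hm
  simp_rw [ContinuousLinearMap.adjoint_inner_right, real_inner_comm v] at h_adjoint
  refine h_adjoint.trans (ENNReal.ofReal_le_ofReal (pow_le_pow_left₀ (by positivity) ?_ _))
  have h_norm : ‖L.adjoint v‖ ≤ ‖L‖ * ‖v‖ := by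
    simpa only [LinearIsometryEquiv.norm_map] using L.adjoint.le_opNorm v
  calc b * (2 * m) ^ (1 / α) * ‖L.adjoint v‖ ≤ b * (2 * m) ^ (1 / α) * (‖L‖ * ‖v‖) := by gcongr
    _ = b * ‖L‖ * (2 * m) ^ (1 / α) * ‖v‖ := by ring

variable [MeasurableSpace F] [BorelSpace F]

theorem noisyMoment_sub_mul_noisyMoment_add_le_exp (hμ : MidpointPrekopaLeindler μ 0)
    (h : IsIsotropicLaw μ) {α b : ℝ} (hψ : IsPsiAlphaLaw μ α b) (hα₁ : 1 ≤ α) (hα₂ : α ≤ 2)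
    (hb : 0 ≤ b) {L : E →L[ℝ] F} (hHS : hilbertSchmidtSq L = 1) {N : ℝ} (hN : 0 < N)
    (hbL : b * ‖L‖ ≤ N ^ (-(1 / α))) {P : ℝ} (hP : 4 ≤ P) (hPN : P ≤ momentRangeConst * N) :
    noisyMoment μ L (2 - P) * noisyMoment μ L (2 + P) ≤
      ENNReal.ofReal (4 * exp (noisyMomentConst * P * (P / N) ^ (1 / (α + 1)))) := by
  have h_exp_nine : 1 ≤ exp 9 := Real.one_le_exp (by norm_num)
  set ε := (P / N) ^ (1 / (α + 1))
  have hε : 0 < ε := by positivity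
  have hε_small : ε ≤ 1 / (16 * exp 9) :=
    rpow_one_div_add_one_le_of_le_cube (by linarith) hα₂ (by positivity) (by positivity)
      ((div_le_one (by positivity)).2 (by linarith)) ((div_le_iff₀ hN).2 hPN)
  have h_sixteen : 16 * P ≤ P / ε := by
    rw [le_div_iff₀ hε]
    rw [le_div_iff₀ (by positivity)] at hε_small
    nlinarith [mul_nonneg hε.le (sub_nonneg.2 h_exp_nine)]
  -- `k ≈ P / ε` balances the shift cost `k (k / N) ^ (2 / α)` against the gain `P ^ 2 / k`.
  set k := ⌈P / ε⌉₊
  have hk_ge : P / ε ≤ k := Nat.le_ceil _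
  have hk_le : (k : ℝ) ≤ 2 * (P / ε) := by
    linarith [Nat.ceil_lt_add_one (by positivity : 0 ≤ P / ε)]
  have hk_pos : (0 : ℝ) < k := by linarith
  set τ := (4 * k / N) ^ (1 / α) with hτ_def
  have hτ : τ ≤ 8 * ε := four_mul_div_rpow_le hα₁ (by linarith) hN hk_pos.le hk_le
  have hτ_small : 2 * (exp 9 * τ) ^ 2 ≤ 1 / 2 := by
    calc 2 * (exp 9 * τ) ^ 2 ≤ 2 * (exp 9 * (8 * (1 / (16 * exp 9)))) ^ 2 := by
          gcongr
          exact hτ.trans (by gcongr)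
      _ = 1 / 2 := by field_simp; norm_num
  have h_moment (v : F) : ∫⁻ x, ENNReal.ofReal (⟪v, L x⟫ ^ (4 * k)) ∂μ ≤
      ENNReal.ofReal ((τ * ‖v‖) ^ (4 * k)) := by
    have h_four : 2 * ((2 * k : ℕ) : ℝ) = 4 * k := by push_cast; ring
    have h_psi := hψ.lintegral_inner_map_pow_le hμ h hb L (m := 2 * k)
      (by simpa using hk_pos.ne') v
    rw [h_four, ← mul_assoc] at h_psi
    refine h_psi.trans (ENNReal.ofReal_le_ofReal (pow_le_pow_left₀ (by positivity) ?_ _))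
    rw [hτ_def, div_rpow (by positivity) hN.le, div_eq_inv_mul (_ ^ _), ← rpow_neg hN.le]
    gcongr
  refine (noisyMoment_sub_mul_noisyMoment_add_le hμ h hHS (by positivity) h_moment hτ_small
    (by linarith) (by linarith)).trans (ENNReal.ofReal_le_ofReal ?_)
  gcongr
  exact row_exponent_le hP hε (by positivity) hτ hk_ge hk_le

theorem one_sub_rpow_neg_le {s t : ℝ} (hs : 0 ≤ s) (ht : t < 1) :
    (1 - t) ^ (-s) ≤ exp (s * (t / (1 - t))) := by
  have ht' : 0 < 1 - t := sub_pos.2 ht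
  have h_base : (1 - t)⁻¹ ≤ exp (t / (1 - t)) := by
    have h_eq : (1 - t)⁻¹ = t / (1 - t) + 1 := by field_simp; ring
    exact h_eq.trans_le (add_one_le_exp _)
  rw [rpow_neg ht'.le, ← inv_rpow ht'.le, mul_comm, Real.exp_mul]
  exact rpow_le_rpow (by positivity) h_base hs

theorem rpow_le_rpow_mul_exp {p r R : ℝ} (hp : 0 ≤ p) (hr : 0 ≤ r) (hR : 0 < R) :
    r ^ p ≤ R ^ p * exp (-(p / 2)) * exp (p / R ^ 2 / 2 * r ^ 2) := by
  have h_ratio : ((r / R) ^ 2) ^ (p / 2) ≤ exp ((r / R) ^ 2 - 1) ^ (p / 2) :=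
    rpow_le_rpow (by positivity) (by linarith [add_one_le_exp ((r / R) ^ 2 - 1)]) (by positivity)
  rw [← rpow_natCast, ← rpow_mul (by positivity), Nat.cast_ofNat, mul_div_cancel₀ p two_ne_zero,
    rpow_two, div_rpow hr hR.le, div_le_iff₀' (by positivity), ← Real.exp_mul] at h_ratio
  rw [mul_assoc, ← Real.exp_add]
  refine h_ratio.trans_eq ?_
  ring_nf

theorem lintegral_rpow_mul_exp_neg_mul_Ioi {s y : ℝ} (hs : 0 < s) (hy : 0 < y) :
    ∫⁻ t in Set.Ioi (0 : ℝ), ENNReal.ofReal (t ^ (s - 1) * exp (-(y * t))) =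
      ENNReal.ofReal (y ^ (-s) * Gamma s) := by
  have h_int : IntegrableOn (fun t : ℝ => t ^ (s - 1) * exp (-(y * t))) (Set.Ioi 0) := by
    simpa using integrableOn_rpow_mul_exp_neg_mul_rpow (s := s - 1) (by linarith) one_pos hy
  rw [← ofReal_integral_eq_lintegral_ofReal h_int, integral_rpow_mul_exp_neg_mul_Ioi hs hy,
    one_div, inv_rpow hy.le, rpow_neg hy.le]
  filter_upwards [ae_restrict_mem measurableSet_Ioi] with t ht
  have ht' : 0 < t := ht
  positivity

theorem setLIntegral_Ioi_le_setLIntegral_Ioo_half (f : ℝ → ℝ≥0∞) :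
    ∫⁻ t in Set.Ioi (0 : ℝ), f t ≤
      ∫⁻ u in Set.Ioo (0 : ℝ) (1 / 2),
        ENNReal.ofReal (1 / (1 - 2 * u) ^ 2) * f (u / (1 - 2 * u)) := by
  have h_denom {u : ℝ} (hu : u ∈ Set.Ioo (0 : ℝ) (1 / 2)) : 1 - 2 * u ≠ 0 := by linarith [hu.2]
  have h_deriv (u : ℝ) (hu : u ∈ Set.Ioo (0 : ℝ) (1 / 2)) :
      HasDerivWithinAt (fun u => u / (1 - 2 * u)) (1 / (1 - 2 * u) ^ 2) (Set.Ioo 0 (1 / 2)) u := by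
    have h_quot := (hasDerivAt_id u).div (((hasDerivAt_id u).const_mul 2).const_sub 1) (h_denom hu)
    refine (h_quot.congr_deriv ?_).hasDerivWithinAt
    simp only [id_eq]
    ring
  have h_inj : Set.InjOn (fun u : ℝ => u / (1 - 2 * u)) (Set.Ioo 0 (1 / 2)) := by
    intro u hu w hw huw
    have h_cross := (div_eq_div_iff (h_denom hu) (h_denom hw)).1 huw
    linarith
  have h_image : Set.Ioi (0 : ℝ) ⊆ (fun u => u / (1 - 2 * u)) '' Set.Ioo 0 (1 / 2) := by
    intro t ht
    have ht' : 0 < t := ht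
    refine ⟨t / (1 + 2 * t), ⟨by positivity, ?_⟩, ?_⟩
    · rw [div_lt_div_iff₀ (by positivity) two_pos]
      linarith
    · simp only
      field_simp
      ring
  calc _ ≤ _ := lintegral_mono_set h_image
    _ = _ := lintegral_image_eq_lintegral_abs_deriv_mul measurableSet_Ioo h_deriv h_inj f
    _ = _ := by simp only [abs_div, abs_one, abs_sq]

theorem rpow_half_line_integrand_le {d s u w : ℝ} (hu : u ∈ Set.Ioo (0 : ℝ) (1 / 2))
    (hs : 2 * s + 2 ≤ d) :
    1 / (1 - 2 * u) ^ 2 * ((u / (1 - 2 * u)) ^ (s - 1) *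
        ((1 - 2 * u) ^ (d / 2) * exp (-(u * w)))) ≤
      u ^ (s - 1) * exp (-((d + w - (2 * s + 2)) * u)) := by
  have hu₀ : 0 < u := hu.1
  have hv : 0 < 1 - 2 * u := by linarith [hu.2]
  have h_exponent : d / 2 - s - 1 = -2 + -(s - 1) + d / 2 := by ring
  calc _ = u ^ (s - 1) * ((1 - 2 * u) ^ (d / 2 - s - 1) * exp (-(u * w))) := by
        rw [h_exponent, rpow_add hv, rpow_add hv, rpow_neg hv.le, rpow_neg hv.le, rpow_two,
          div_rpow hu₀.le hv.le]
        ring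
    _ ≤ u ^ (s - 1) * (exp (-2 * u) ^ (d / 2 - s - 1) * exp (-(u * w))) := by
        gcongr
        · linarith
        · linarith [add_one_le_exp (-2 * u)]
    _ = _ := by
        rw [← Real.exp_mul, ← Real.exp_add]
        ring_nf

theorem ofReal_Gamma_mul_ofReal_rpow_le {s r : ℝ} (hs : 0 < s) (hr : 0 ≤ r) :
    ENNReal.ofReal (Gamma s) * ENNReal.ofReal (r ^ (-(2 * s))) ≤
      ∫⁻ t in Set.Ioi (0 : ℝ), ENNReal.ofReal (t ^ (s - 1)) *
        ENNReal.ofReal (exp (-t * r ^ 2)) := by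
  rcases hr.eq_or_lt with rfl | hr₀
  · -- `0 ^ (-(2 * s)) = 0` in Lean although the right-hand side is infinite here.
    rw [zero_rpow (by linarith)]
    simp
  · have h_integrand (t : ℝ) (ht : t ∈ Set.Ioi (0 : ℝ)) :
        ENNReal.ofReal (t ^ (s - 1)) * ENNReal.ofReal (exp (-t * r ^ 2)) =
          ENNReal.ofReal (t ^ (s - 1) * exp (-(r ^ 2 * t))) := by
      rw [← ENNReal.ofReal_mul (rpow_nonneg (le_of_lt ht) _)]
      ring_nf
    rw [setLIntegral_congr_fun measurableSet_Ioi h_integrand,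
      lintegral_rpow_mul_exp_neg_mul_Ioi hs (by positivity),
      ← ENNReal.ofReal_mul (Gamma_pos_of_pos hs).le, ← rpow_natCast, ← rpow_mul hr, mul_comm,
      Nat.cast_ofNat, mul_neg]

theorem sub_rpow_neg_le {R d s : ℝ} (hs : 0 ≤ s) (hd : 4 * (s + 1) ≤ d) (hR : 0 ≤ R)
    (hdR : d ≤ R ^ 2) :
    (R ^ 2 - (2 * s + 2)) ^ (-s) ≤ R ^ (-(2 * s)) * exp ((2 * s + 2) ^ 2 / d) := by
  have hd₀ : 0 < d := by linarith
  have hR₀ : 0 < R ^ 2 := by linarith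
  set t := (2 * s + 2) / R ^ 2 with ht
  have ht₀ : 0 ≤ t := by positivity
  have htd : t ≤ (2 * s + 2) / d := by rw [ht]; gcongr
  have ht_half : t ≤ 1 / 2 := htd.trans ((div_le_iff₀ hd₀).2 (by linarith))
  have h_double : t / (1 - t) ≤ 2 * t := by
    rw [div_le_iff₀ (by linarith)]
    nlinarith
  have h_factor : R ^ 2 - (2 * s + 2) = R ^ 2 * (1 - t) := by
    rw [ht, mul_one_sub, mul_div_cancel₀ _ hR₀.ne']
  have h_exponent : s * (t / (1 - t)) ≤ (2 * s + 2) ^ 2 / d := by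
    calc s * (t / (1 - t)) ≤ s * (2 * ((2 * s + 2) / d)) := by gcongr; linarith
      _ = 2 * s * (2 * s + 2) / d := by ring
      _ ≤ (2 * s + 2) ^ 2 / d := by gcongr; nlinarith
  have h_sq : (R ^ 2) ^ (-s) = R ^ (-(2 * s)) := by
    rw [← rpow_natCast, ← rpow_mul hR, Nat.cast_ofNat, mul_neg]
  rw [h_factor, mul_rpow hR₀.le (by linarith), h_sq]
  gcongr
  exact (one_sub_rpow_neg_le hs (by linarith)).trans (exp_le_exp.2 h_exponent)

variable {F : Type*} [NormedAddCommGroup F] [InnerProductSpace ℝ F] [FiniteDimensional ℝ F]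
  [MeasurableSpace F] [BorelSpace F]

theorem lintegral_exp_sq_norm_add_stdGaussian_le {t : ℝ} (ht : t < 1) (v : F) :
    ∫⁻ x, ENNReal.ofReal (exp (t / 2 * ‖v + x‖ ^ 2)) ∂stdGaussian F ≤
      ENNReal.ofReal (exp (t / (2 * (1 - t)) * (Module.finrank ℝ F + ‖v‖ ^ 2))) := by
  have ht' : 1 - t ≠ 0 := by linarith
  rw [lintegral_exp_mul_sq_norm_add_stdGaussian (by linarith) v,
    mul_div_cancel₀ t two_ne_zero, neg_div]
  refine ENNReal.ofReal_le_ofReal ?_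
  calc _ ≤ exp (Module.finrank ℝ F / 2 * (t / (1 - t))) * exp (t / 2 * ‖v‖ ^ 2 / (1 - t)) := by
        gcongr
        exact one_sub_rpow_neg_le (by positivity) ht
    _ = _ := by
        rw [← Real.exp_add]
        congr 1
        field_simp

theorem lintegral_norm_add_rpow_stdGaussian_le {p : ℝ} (hp : 0 < p)
    (hpF : 2 * p ≤ Module.finrank ℝ F) (v : F) :
    ∫⁻ x, ENNReal.ofReal (‖v + x‖ ^ p) ∂stdGaussian F ≤
      ENNReal.ofReal (√(Module.finrank ℝ F + ‖v‖ ^ 2) ^ p *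
        exp (p ^ 2 / Module.finrank ℝ F)) := by
  set d := (Module.finrank ℝ F : ℝ)
  have hd : 0 < d := by linarith
  set R := √(d + ‖v‖ ^ 2)
  have hR : 0 < R := by positivity
  have hR_sq : R ^ 2 = d + ‖v‖ ^ 2 := sq_sqrt (by positivity)
  set t := p / R ^ 2 with ht
  have htd : t ≤ p / d := by
    rw [ht, hR_sq]
    gcongr
    exact le_add_of_nonneg_right (sq_nonneg _)
  have ht_half : t ≤ 1 / 2 := htd.trans ((div_le_iff₀ hd).2 (by linarith))
  have ht₀ : 0 < t := by positivity
  have h_exponent : -(p / 2) + t / (2 * (1 - t)) * (d + ‖v‖ ^ 2) ≤ p ^ 2 / d := by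
    calc -(p / 2) + t / (2 * (1 - t)) * (d + ‖v‖ ^ 2) = p * t / (2 * (1 - t)) := by
          have ht_one : 1 - t ≠ 0 := by linarith
          rw [← hR_sq, show p = t * R ^ 2 by rw [ht]; field_simp]
          field_simp
          ring
      _ ≤ p * t := div_le_self (by positivity) (by linarith)
      _ ≤ p * (p / d) := by gcongr
      _ = p ^ 2 / d := by ring
  calc _ ≤ ∫⁻ x, ENNReal.ofReal (R ^ p * exp (-(p / 2))) *
        ENNReal.ofReal (exp (t / 2 * ‖v + x‖ ^ 2)) ∂stdGaussian F := by
        refine lintegral_mono fun x => ?_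
        rw [← ENNReal.ofReal_mul (by positivity)]
        exact ENNReal.ofReal_le_ofReal (rpow_le_rpow_mul_exp hp.le (norm_nonneg _) hR)
    _ ≤ ENNReal.ofReal (R ^ p * exp (-(p / 2))) *
        ENNReal.ofReal (exp (t / (2 * (1 - t)) * (d + ‖v‖ ^ 2))) := by
        rw [lintegral_const_mul _ (by fun_prop)]
        gcongr
        exact lintegral_exp_sq_norm_add_stdGaussian_le (by linarith) v
    _ ≤ _ := by
        rw [← ENNReal.ofReal_mul (by positivity), mul_assoc, ← Real.exp_add]
        gcongr

theorem lintegral_exp_neg_div_mul_sq_norm_add_stdGaussian {u : ℝ}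
    (hu : u ∈ Set.Ioo (0 : ℝ) (1 / 2)) (v : F) :
    ∫⁻ x, ENNReal.ofReal (exp (-(u / (1 - 2 * u)) * ‖v + x‖ ^ 2)) ∂stdGaussian F =
      ENNReal.ofReal ((1 - 2 * u) ^ ((Module.finrank ℝ F : ℝ) / 2) * exp (-(u * ‖v‖ ^ 2))) := by
  have hu' : 0 < 1 - 2 * u := by linarith [hu.2]
  have h_inv : 1 - 2 * -(u / (1 - 2 * u)) = (1 - 2 * u)⁻¹ := by field_simp; ring
  have h_neg : -(u / (1 - 2 * u)) < 1 / 2 := by linarith [div_pos hu.1 hu']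
  rw [lintegral_exp_mul_sq_norm_add_stdGaussian h_neg, h_inv, inv_rpow hu'.le, neg_div,
    rpow_neg hu'.le, inv_inv, div_inv_eq_mul, neg_mul, neg_mul, mul_right_comm,
    div_mul_cancel₀ _ hu'.ne']

theorem lintegral_norm_add_rpow_neg_stdGaussian_le_sub {s : ℝ} (hs : 0 < s)
    (hsF : 2 * s + 2 < Module.finrank ℝ F) (v : F) :
    ∫⁻ x, ENNReal.ofReal (‖v + x‖ ^ (-(2 * s))) ∂stdGaussian F ≤
      ENNReal.ofReal ((Module.finrank ℝ F + ‖v‖ ^ 2 - (2 * s + 2)) ^ (-s)) := by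
  set d := (Module.finrank ℝ F : ℝ)
  have hΓ : 0 < Gamma s := Gamma_pos_of_pos hs
  refine (ENNReal.mul_le_mul_iff_right (by simpa using hΓ) (ENNReal.ofReal_ne_top (r := Gamma s))).1
    ?_
  rw [← lintegral_const_mul _ (by fun_prop)]
  calc _ ≤ ∫⁻ x, (∫⁻ t in Set.Ioi (0 : ℝ), ENNReal.ofReal (t ^ (s - 1)) *
        ENNReal.ofReal (exp (-t * ‖v + x‖ ^ 2))) ∂stdGaussian F :=
        lintegral_mono fun x => ofReal_Gamma_mul_ofReal_rpow_le hs (norm_nonneg _)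
    _ = ∫⁻ t in Set.Ioi (0 : ℝ), ENNReal.ofReal (t ^ (s - 1)) *
        ∫⁻ x, ENNReal.ofReal (exp (-t * ‖v + x‖ ^ 2)) ∂stdGaussian F := by
        rw [lintegral_lintegral_swap (by fun_prop)]
        exact lintegral_congr fun t => lintegral_const_mul _ (by fun_prop)
    _ ≤ ∫⁻ u in Set.Ioo (0 : ℝ) (1 / 2), ENNReal.ofReal (1 / (1 - 2 * u) ^ 2) *
        (ENNReal.ofReal ((u / (1 - 2 * u)) ^ (s - 1)) *
          ∫⁻ x, ENNReal.ofReal (exp (-(u / (1 - 2 * u)) * ‖v + x‖ ^ 2)) ∂stdGaussian F) :=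
        setLIntegral_Ioi_le_setLIntegral_Ioo_half _
    _ ≤ ∫⁻ u in Set.Ioo (0 : ℝ) (1 / 2),
        ENNReal.ofReal (u ^ (s - 1) * exp (-((d + ‖v‖ ^ 2 - (2 * s + 2)) * u))) := by
        refine setLIntegral_mono' measurableSet_Ioo fun u hu => ?_
        have hu' : 0 < 1 - 2 * u := by linarith [hu.2]
        rw [lintegral_exp_neg_div_mul_sq_norm_add_stdGaussian hu v,
          ← ENNReal.ofReal_mul (rpow_nonneg (div_pos hu.1 hu').le _),
          ← ENNReal.ofReal_mul (by positivity)]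
        exact ENNReal.ofReal_le_ofReal (rpow_half_line_integrand_le hu hsF.le)
    _ ≤ ∫⁻ u in Set.Ioi (0 : ℝ),
        ENNReal.ofReal (u ^ (s - 1) * exp (-((d + ‖v‖ ^ 2 - (2 * s + 2)) * u))) :=
        lintegral_mono_set Set.Ioo_subset_Ioi_self
    _ = _ := by
        rw [lintegral_rpow_mul_exp_neg_mul_Ioi hs (by nlinarith [sq_nonneg ‖v‖]), mul_comm,
          ENNReal.ofReal_mul hΓ.le]

theorem lintegral_norm_add_rpow_neg_stdGaussian_le {s : ℝ} (hs : 0 < s)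
    (hsF : 4 * (s + 1) ≤ Module.finrank ℝ F) (v : F) :
    ∫⁻ x, ENNReal.ofReal (‖v + x‖ ^ (-(2 * s))) ∂stdGaussian F ≤
      ENNReal.ofReal (√(Module.finrank ℝ F + ‖v‖ ^ 2) ^ (-(2 * s)) *
        exp ((2 * s + 2) ^ 2 / Module.finrank ℝ F)) := by
  refine (lintegral_norm_add_rpow_neg_stdGaussian_le_sub hs (by linarith) v).trans
    (ENNReal.ofReal_le_ofReal ?_)
  have h_sq : √(Module.finrank ℝ F + ‖v‖ ^ 2) ^ 2 = Module.finrank ℝ F + ‖v‖ ^ 2 :=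
    sq_sqrt (by positivity)
  have h_le := sub_rpow_neg_le hs.le hsF (sqrt_nonneg (Module.finrank ℝ F + ‖v‖ ^ 2))
    (by rw [h_sq]; exact le_add_of_nonneg_right (sq_nonneg _))
  rwa [h_sq] at h_le

theorem isIsotropicLaw_stdGaussian : IsIsotropicLaw (stdGaussian F) where
  integral_id := integral_id_stdGaussian
  integral_inner_mul_inner θ η := by
    have h_cov := covarianceBilin_apply (μ := stdGaussian F) IsGaussian.memLp_two_id θ η
    simp only [covarianceBilin_stdGaussian, id_eq, integral_id_stdGaussian, sub_zero,
      real_inner_comm _ θ, real_inner_comm _ η] at h_cov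
    exact h_cov.symm.trans (innerSL_apply_apply ℝ θ η)

section PowerMeans

/-- The moment `E Vᵖ` of a nonnegative random variable, for any real exponent `p`, as an extended
nonnegative number: no integrability is needed to state moment inequalities for it. -/
def powMoment {Ω : Type*} [MeasurableSpace Ω] (P : Measure Ω) (V : Ω → ℝ) (p : ℝ) : ℝ≥0∞ :=
  ∫⁻ ω, ENNReal.ofReal (V ω ^ p) ∂P

/-- The power mean `(E Vᵖ)^(1/p)`, i.e. the `p`-th moment norm of `V`, for `p ≠ 0`. -/
def powMean {Ω : Type*} [MeasurableSpace Ω] (P : Measure Ω) (V : Ω → ℝ) (p : ℝ) : ℝ :=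
  (∫ ω, V ω ^ p ∂P) ^ (1 / p)

/-- An almost surely positive random variable normalized by `E V² = 1`. -/
structure HasUnitSecondMoment {Ω : Type*} [MeasurableSpace Ω] (P : Measure Ω) (V : Ω → ℝ) :
    Prop where
  measurable : Measurable V
  pos : ∀ᵐ ω ∂P, 0 < V ω
  powMoment_two : powMoment P V 2 = 1

/-- Control of the moments of `V` placed symmetrically around the exponent `2`, at distances `Q`
in the range `[4, c N]`. -/
def SymmetricMomentBound {Ω : Type*} [MeasurableSpace Ω] (P : Measure Ω) (V : Ω → ℝ)
    (N β c K : ℝ) : Prop :=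
  ∀ Q : ℝ, 4 ≤ Q → Q ≤ c * N →
    powMoment P V (2 - Q) * powMoment P V (2 + Q) ≤ ENNReal.ofReal (exp (K * Q * (Q / N) ^ β))

theorem ofReal_exp_le_ofReal_exp {x y : ℝ} (h : x ≤ y) :
    ENNReal.ofReal (exp x) ≤ ENNReal.ofReal (exp y) :=
  ENNReal.ofReal_le_ofReal (exp_le_exp.2 h)

theorem rpow_le_ofReal_exp {m : ℝ≥0∞} {x s : ℝ} (hs : 0 ≤ s) (h : m ≤ ENNReal.ofReal (exp x)) :
    m ^ s ≤ ENNReal.ofReal (exp (s * x)) :=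
  (ENNReal.rpow_le_rpow h hs).trans_eq <| by
    rw [ENNReal.ofReal_rpow_of_pos (exp_pos _), ← exp_mul, mul_comm]

variable {Ω : Type*} [MeasurableSpace Ω] {P : Measure Ω} {V : Ω → ℝ} {p q : ℝ}

theorem powMoment_le_rpow_mul_rpow (hm : Measurable V) (hpos : ∀ᵐ ω ∂P, 0 < V ω) {θ : ℝ}
    (h₀ : 0 ≤ θ) (h₁ : θ ≤ 1) (a b : ℝ) {c : ℝ} (hc : c = θ * a + (1 - θ) * b) :
    powMoment P V c ≤ powMoment P V a ^ θ * powMoment P V b ^ (1 - θ) := by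
  have hθ : 0 ≤ 1 - θ := sub_nonneg.2 h₁
  refine le_trans (le_of_eq (lintegral_congr_ae ?_)) (ENNReal.lintegral_mul_norm_pow_le
    (f := fun ω => ENNReal.ofReal (V ω ^ a)) (g := fun ω => ENNReal.ofReal (V ω ^ b))
    (by fun_prop) (by fun_prop) h₀ hθ (by ring))
  filter_upwards [hpos] with ω hω
  rw [ENNReal.ofReal_rpow_of_nonneg (by positivity) h₀,
    ENNReal.ofReal_rpow_of_nonneg (by positivity) hθ, ← ENNReal.ofReal_mul (by positivity),
    ← rpow_mul hω.le, ← rpow_mul hω.le, ← rpow_add hω, hc, mul_comm a, mul_comm b]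

theorem integral_rpow_eq_toReal_powMoment (hm : Measurable V) (hpos : ∀ᵐ ω ∂P, 0 < V ω) (p : ℝ) :
    ∫ ω, V ω ^ p ∂P = (powMoment P V p).toReal :=
  integral_eq_lintegral_of_nonneg_ae (hpos.mono fun _ hω => (rpow_pos_of_pos hω p).le)
    (hm.pow_const p).aestronglyMeasurable

theorem powMean_eq (hm : Measurable V) (hpos : ∀ᵐ ω ∂P, 0 < V ω) (p : ℝ) :
    powMean P V p = (powMoment P V p).toReal ^ (1 / p) := by
  rw [powMean, integral_rpow_eq_toReal_powMoment hm hpos]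

theorem powMoment_const_mul {c : ℝ} (hc : 0 < c) (hV : ∀ ω, 0 ≤ V ω) (p : ℝ) :
    powMoment P (fun ω => c * V ω) p = ENNReal.ofReal (c ^ p) * powMoment P V p := by
  simp_rw [powMoment, mul_rpow hc.le (hV _), ENNReal.ofReal_mul (rpow_nonneg hc.le p)]
  exact lintegral_const_mul' _ _ ENNReal.ofReal_ne_top

theorem powMean_const_mul {c : ℝ} (hc : 0 < c) (hV : ∀ ω, 0 ≤ V ω) (hp : p ≠ 0) :
    powMean P (fun ω => c * V ω) p = c * powMean P V p := by
  simp_rw [powMean, mul_rpow hc.le (hV _), integral_const_mul]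
  rw [mul_rpow (rpow_nonneg hc.le p) (integral_nonneg fun ω => rpow_nonneg (hV ω) p),
    ← rpow_mul hc.le, mul_one_div_cancel hp, rpow_one]

namespace HasUnitSecondMoment

theorem powMean_two (hV : HasUnitSecondMoment P V) : powMean P V 2 = 1 := by
  rw [powMean_eq hV.measurable hV.pos, hV.powMoment_two, ENNReal.toReal_one, one_rpow]

theorem powMean_le_exp (hV : HasUnitSecondMoment P V) {x : ℝ} (hp : 0 < p)
    (h : powMoment P V p ≤ ENNReal.ofReal (exp (p * x))) : powMean P V p ≤ exp x := by
  rw [powMean_eq hV.measurable hV.pos]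
  calc (powMoment P V p).toReal ^ (1 / p) ≤ exp (p * x) ^ (1 / p) :=
        rpow_le_rpow ENNReal.toReal_nonneg
          (ENNReal.toReal_le_of_le_ofReal (exp_pos _).le h) (by positivity)
    _ = exp x := by rw [← exp_mul, mul_one_div, mul_div_cancel_left₀ _ hp.ne']

end HasUnitSecondMoment

variable [IsProbabilityMeasure P]

theorem powMoment_zero : powMoment P V 0 = 1 := by
  simp [powMoment]

namespace HasUnitSecondMoment

theorem one_le_powMoment (hV : HasUnitSecondMoment P V) (hp : 2 < p ∨ p < 0) :
    1 ≤ powMoment P V p := by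
  by_contra! hlt
  rcases hp with hp | hp
  · have h := powMoment_le_rpow_mul_rpow hV.measurable hV.pos (θ := 2 / p) (by positivity)
      ((div_le_one (by linarith)).2 hp.le) p 0 (c := 2) (by field_simp; ring)
    rw [hV.powMoment_two, powMoment_zero, ENNReal.one_rpow, mul_one] at h
    exact h.not_gt (ENNReal.rpow_lt_one hlt (by positivity))
  · have hp₂ : 0 < 2 - p := by linarith
    have h := powMoment_le_rpow_mul_rpow hV.measurable hV.pos (θ := 2 / (2 - p)) (by positivity)
      ((div_le_one hp₂).2 (by linarith)) p 2 (c := 0) (by field_simp; ring)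
    rw [hV.powMoment_two, powMoment_zero, ENNReal.one_rpow, mul_one] at h
    exact h.not_gt (ENNReal.rpow_lt_one hlt (by positivity))

theorem powMoment_le_one (hV : HasUnitSecondMoment P V) (hp₀ : 0 ≤ p) (hp₂ : p ≤ 2) :
    powMoment P V p ≤ 1 := by
  have h := powMoment_le_rpow_mul_rpow hV.measurable hV.pos (θ := p / 2) (by positivity)
    (by linarith) 2 0 (c := p) (by ring)
  rwa [hV.powMoment_two, powMoment_zero, ENNReal.one_rpow, ENNReal.one_rpow, mul_one] at h

theorem one_le_toReal_powMoment (hV : HasUnitSecondMoment P V) (hp : 2 < p ∨ p < 0)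
    (hfin : powMoment P V p ≠ ⊤) : 1 ≤ (powMoment P V p).toReal := by
  simpa using ENNReal.toReal_mono hfin (hV.one_le_powMoment hp)

theorem powMean_le_one (hV : HasUnitSecondMoment P V) (hp₀ : p ≠ 0) (hp₂ : p < 2) :
    powMean P V p ≤ 1 := by
  rw [powMean_eq hV.measurable hV.pos]
  rcases hp₀.lt_or_gt with hp | hp
  · by_cases hfin : powMoment P V p = ⊤
    · rw [hfin, ENNReal.toReal_top, zero_rpow (one_div_ne_zero hp₀)]
      exact zero_le_one
    · exact rpow_le_one_of_one_le_of_nonpos (hV.one_le_toReal_powMoment (.inr hp) hfin)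
        (one_div_nonpos.2 hp.le)
  · exact rpow_le_one ENNReal.toReal_nonneg
      (ENNReal.toReal_le_of_le_ofReal zero_le_one (by simpa using hV.powMoment_le_one hp.le hp₂.le))
      (by positivity)

theorem one_le_powMean (hV : HasUnitSecondMoment P V) (hp : 2 < p)
    (hfin : powMoment P V p ≠ ⊤) : 1 ≤ powMean P V p := by
  rw [powMean_eq hV.measurable hV.pos]
  exact one_le_rpow (hV.one_le_toReal_powMoment (.inl hp) hfin) (by positivity)

theorem exp_neg_le_powMean_of_neg (hV : HasUnitSecondMoment P V) {x : ℝ} (hp : p < 0)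
    (h : powMoment P V p ≤ ENNReal.ofReal (exp (-p * x))) : exp (-x) ≤ powMean P V p := by
  rw [powMean_eq hV.measurable hV.pos]
  have hone := hV.one_le_toReal_powMoment (.inr hp) (ne_top_of_le_ne_top ENNReal.ofReal_ne_top h)
  calc exp (-x) = exp (-p * x) ^ (1 / p) := by
        rw [← exp_mul]; congr 1; field_simp [hp.ne]
    _ ≤ (powMoment P V p).toReal ^ (1 / p) :=
        rpow_le_rpow_of_nonpos (by linarith)
          (ENNReal.toReal_le_of_le_ofReal (exp_pos _).le h) (one_div_nonpos.2 hp.le)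

theorem exp_neg_le_powMean_of_pos (hV : HasUnitSecondMoment P V) {x θ a : ℝ} (hp : 0 < p)
    (hp₂ : p ≤ 2) (hθ : 0 < θ) (hθ₁ : θ ≤ 1) (hq : q = θ * p + (1 - θ) * a)
    (hq₁ : powMoment P V q = 1) (h : powMoment P V a ≤ ENNReal.ofReal (exp x)) :
    exp (-((1 - θ) * x / (θ * p))) ≤ powMean P V p := by
  rw [powMean_eq hV.measurable hV.pos]
  set y := (powMoment P V p).toReal
  have hy : 0 ≤ y := ENNReal.toReal_nonneg
  have hfin : powMoment P V p ≠ ⊤ :=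
    ne_top_of_le_ne_top ENNReal.one_ne_top (hV.powMoment_le_one hp.le hp₂)
  have hholder : ENNReal.ofReal 1 ≤ ENNReal.ofReal (y ^ θ * exp ((1 - θ) * x)) :=
    calc ENNReal.ofReal 1 = powMoment P V q := by rw [hq₁, ENNReal.ofReal_one]
      _ ≤ powMoment P V p ^ θ * powMoment P V a ^ (1 - θ) :=
          powMoment_le_rpow_mul_rpow hV.measurable hV.pos hθ.le hθ₁ p a hq
      _ ≤ powMoment P V p ^ θ * ENNReal.ofReal (exp ((1 - θ) * x)) := by
          gcongr; exact rpow_le_ofReal_exp (sub_nonneg.2 hθ₁) h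
      _ = ENNReal.ofReal (y ^ θ * exp ((1 - θ) * x)) := by
          rw [ENNReal.ofReal_mul (by positivity), ← ENNReal.ofReal_rpow_of_nonneg hy hθ.le,
            ENNReal.ofReal_toReal hfin]
  have hyθ : exp (-((1 - θ) * x)) ≤ y ^ θ := by
    rw [exp_neg, inv_le_iff_one_le_mul₀ (exp_pos _)]
    exact (ENNReal.ofReal_le_ofReal_iff (by positivity)).1 hholder
  calc exp (-((1 - θ) * x / (θ * p))) = exp (-((1 - θ) * x)) ^ (1 / (θ * p)) := by
        rw [← exp_mul]; congr 1; ring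
    _ ≤ (y ^ θ) ^ (1 / (θ * p)) := rpow_le_rpow (exp_pos _).le hyθ (by positivity)
    _ = y ^ (1 / p) := by rw [← rpow_mul hy]; congr 1; field_simp

variable {N β c K : ℝ}

theorem powMoment_sub_le (hV : HasUnitSecondMoment P V) (hprod : SymmetricMomentBound P V N β c K)
    (h₄ : 4 ≤ q) (hq : q ≤ c * N) :
    powMoment P V (2 - q) ≤ ENNReal.ofReal (exp (K * q * (q / N) ^ β)) :=
  (le_mul_of_one_le_right zero_le (hV.one_le_powMoment (.inl (by linarith)))).trans
    (hprod q h₄ hq)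

theorem powMoment_add_le (hV : HasUnitSecondMoment P V) (hprod : SymmetricMomentBound P V N β c K)
    (h₄ : 4 ≤ q) (hq : q ≤ c * N) :
    powMoment P V (2 + q) ≤ ENNReal.ofReal (exp (K * q * (q / N) ^ β)) :=
  (le_mul_of_one_le_left zero_le (hV.one_le_powMoment (.inr (by linarith)))).trans
    (hprod q h₄ hq)

end HasUnitSecondMoment

theorem mul_four_div_rpow_le {N β d : ℝ} (hN : 0 < N) (hβ : β ≤ 1) (hd : 0 < d) (hd₄ : d ≤ 4) :
    d * (4 / N) ^ β ≤ 4 * (d / N) ^ β := by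
  have hsplit : (d / N) ^ β = (d / 4) ^ β * (4 / N) ^ β := by
    rw [← mul_rpow (by positivity) (by positivity)]; congr 1; field_simp
  have hself := self_le_rpow_of_le_one (by positivity : 0 ≤ d / 4) (by linarith) hβ
  calc d * (4 / N) ^ β = 4 * (d / 4 * (4 / N) ^ β) := by ring
    _ ≤ 4 * ((d / 4) ^ β * (4 / N) ^ β) := by gcongr
    _ = 4 * (d / N) ^ β := by rw [hsplit]

theorem exp_mul_le_one_add {a x : ℝ} (ha : 0 ≤ a) (hx : 0 ≤ x) (hx₁ : x ≤ 1) :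
    exp (a * x) ≤ 1 + a * exp a * x := by
  have hinv : exp (a * x) * exp (-(a * x)) = 1 := by rw [← exp_add, add_neg_cancel, exp_zero]
  have hle : exp (a * x) * (1 - a * x) ≤ 1 :=
    (mul_le_mul_of_nonneg_left (by linarith [add_one_le_exp (-(a * x))])
      (exp_pos _).le).trans_eq hinv
  have hmono : exp (a * x) ≤ exp a := exp_le_exp.2 (mul_le_of_le_one_right ha hx₁)
  have hbound : a * x * exp (a * x) ≤ a * x * exp a := by gcongr
  linarith

namespace HasUnitSecondMoment

variable {N β c K : ℝ}

theorem powMoment_le_exp_of_two_lt (hV : HasUnitSecondMoment P V)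
    (hprod : SymmetricMomentBound P V N β c K) (hN : 0 < N) (hβ : β ≤ 1) (hK : 0 ≤ K)
    (hcN : 4 ≤ c * N) (hp : 2 < p) (hpN : p ≤ c * N) :
    powMoment P V p ≤ ENNReal.ofReal (exp (p * (2 * K * ((p - 2) / N) ^ β))) := by
  have hp₂ : 0 < p - 2 := sub_pos.2 hp
  have hKε : 0 ≤ K * ((p - 2) / N) ^ β := by positivity
  rcases le_or_gt 6 p with h₆ | h₆
  · have h := hV.powMoment_add_le hprod (q := p - 2) (by linarith) (by linarith)
    rw [add_sub_cancel] at h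
    exact h.trans (ofReal_exp_le_ofReal_exp (by nlinarith))
  · have hsix : powMoment P V 6 ≤ ENNReal.ofReal (exp (K * 4 * (4 / N) ^ β)) := by
      convert hV.powMoment_add_le hprod le_rfl hcN using 2; norm_num
    have h := powMoment_le_rpow_mul_rpow hV.measurable hV.pos (θ := (p - 2) / 4) (by linarith)
      (by linarith) 6 2 (c := p) (by ring)
    rw [hV.powMoment_two, ENNReal.one_rpow, mul_one] at h
    refine h.trans ((rpow_le_ofReal_exp (by linarith) hsix).trans (ofReal_exp_le_ofReal_exp ?_))
    have := mul_le_mul_of_nonneg_left (mul_four_div_rpow_le hN hβ hp₂ (by linarith)) hK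
    nlinarith

theorem exp_neg_le_powMean_of_one_le (hV : HasUnitSecondMoment P V)
    (hprod : SymmetricMomentBound P V N β c K) (hN : 0 < N) (hβ : β ≤ 1) (hK : 0 ≤ K)
    (hcN : 4 ≤ c * N) (hp₁ : 1 ≤ p) (hp₂ : p < 2) :
    exp (-(4 * K * ((2 - p) / N) ^ β)) ≤ powMean P V p := by
  have hsix : powMoment P V 6 ≤ ENNReal.ofReal (exp (K * 4 * (4 / N) ^ β)) := by
    convert hV.powMoment_add_le hprod le_rfl hcN using 2; norm_num
  have h₆ : 0 < 6 - p := by linarith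
  have hd : 0 < 2 - p := sub_pos.2 hp₂
  have hε : 0 ≤ K * ((2 - p) / N) ^ β := by positivity
  refine le_trans (exp_le_exp.2 (neg_le_neg ?_)) (hV.exp_neg_le_powMean_of_pos (θ := 4 / (6 - p))
    (a := 6) (q := 2) (by linarith) hp₂.le (by positivity) ((div_le_one h₆).2 (by linarith))
    (by field_simp; ring) hV.powMoment_two hsix)
  calc (1 - 4 / (6 - p)) * (K * 4 * (4 / N) ^ β) / (4 / (6 - p) * p)
      = K * ((2 - p) * (4 / N) ^ β) / p := by field_simp; ring
    _ ≤ K * (4 * ((2 - p) / N) ^ β) / p := by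
        gcongr K * ?_ / p
        exact mul_four_div_rpow_le hN hβ hd (by linarith)
    _ ≤ K * (4 * ((2 - p) / N) ^ β) := div_le_self (by linarith) hp₁
    _ = 4 * K * ((2 - p) / N) ^ β := by ring

theorem exp_neg_le_powMean_of_neg_two_le (hV : HasUnitSecondMoment P V)
    (hprod : SymmetricMomentBound P V N β c K) (hcN : 4 ≤ c * N) (hp₀ : p ≠ 0) (hp : -2 ≤ p)
    (hp₂ : p ≤ 2) : exp (-(2 * K * (4 / N) ^ β)) ≤ powMean P V p := by
  have hneg : powMoment P V (-2) ≤ ENNReal.ofReal (exp (K * 4 * (4 / N) ^ β)) := by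
    convert hV.powMoment_sub_le hprod le_rfl hcN using 2; norm_num
  rcases hp₀.lt_or_gt with hlt | hgt
  · refine hV.exp_neg_le_powMean_of_neg hlt ?_
    have h := powMoment_le_rpow_mul_rpow hV.measurable hV.pos (θ := -p / 2) (by linarith)
      (by linarith) (-2) 0 (c := p) (by ring)
    rw [powMoment_zero, ENNReal.one_rpow, mul_one] at h
    exact h.trans ((rpow_le_ofReal_exp (by linarith) hneg).trans_eq (by ring_nf))
  · refine le_trans (le_of_eq ?_) (hV.exp_neg_le_powMean_of_pos (θ := 2 / (p + 2)) (a := -2)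
      hgt hp₂ (by positivity) ((div_le_one (by positivity)).2 (by linarith)) (by field_simp; ring)
      powMoment_zero hneg)
    congr 2; field_simp; ring

theorem exp_neg_le_powMean (hV : HasUnitSecondMoment P V)
    (hprod : SymmetricMomentBound P V N β c K) (hN : 0 < N) (hβ₀ : 0 ≤ β) (hβ : β ≤ 1)
    (hK : 0 ≤ K) (hcN : 4 ≤ c * N) (hp₀ : p ≠ 0) (hp₂ : p < 2) (hpN : 2 - p ≤ c * N) :
    exp (-(8 * K * ((2 - p) / N) ^ β)) ≤ powMean P V p := by
  have hε : 0 ≤ K * ((2 - p) / N) ^ β := by have := sub_pos.2 hp₂; positivity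
  rcases le_or_gt 1 p with h₁ | h₁
  · refine le_trans (exp_le_exp.2 ?_) (hV.exp_neg_le_powMean_of_one_le hprod hN hβ hK hcN h₁ hp₂)
    linarith
  rcases le_or_gt (-2) p with hm₂ | hm₂
  · refine le_trans (exp_le_exp.2 ?_)
      (hV.exp_neg_le_powMean_of_neg_two_le hprod hcN hp₀ hm₂ hp₂.le)
    have hfour : (4 / N) ^ β ≤ 4 * ((2 - p) / N) ^ β :=
      calc (4 / N) ^ β = 1 * (4 / N) ^ β := (one_mul _).symm
        _ ≤ 4 * (1 / N) ^ β := mul_four_div_rpow_le hN hβ one_pos (by norm_num)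
        _ ≤ 4 * ((2 - p) / N) ^ β := by gcongr; linarith
    linarith [mul_le_mul_of_nonneg_left hfour hK]
  · refine hV.exp_neg_le_powMean_of_neg (by linarith) ?_
    have h := hV.powMoment_sub_le hprod (q := 2 - p) (by linarith) hpN
    rw [sub_sub_cancel] at h
    exact h.trans (ofReal_exp_le_ofReal_exp (by nlinarith))

end HasUnitSecondMoment

/-- The constant in the two-sided bound for power means: `4 / c` makes the lower bound vacuous
when `c N < 4`, the other two summands come from linearizing `exp`. -/
def powMeanConst (c K : ℝ) : ℝ := 4 / c + 8 * K + 2 * K * exp (2 * K)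

variable {N β c K : ℝ}

theorem powMeanConst_pos (hc : 0 < c) (hK : 0 ≤ K) : 0 < powMeanConst c K := by
  unfold powMeanConst
  positivity

theorem one_le_powMeanConst_mul_rpow {d : ℝ} (hN : 0 < N) (hβ₀ : 0 ≤ β) (hβ : β ≤ 1) (hc : 0 < c)
    (hc₁ : c ≤ 1) (hK : 0 ≤ K) (hd : c / 4 * N ≤ d) : 1 ≤ powMeanConst c K * (d / N) ^ β := by
  have hfour : 4 / c ≤ powMeanConst c K := by
    have : 0 ≤ 8 * K + 2 * K * exp (2 * K) := by positivity
    rw [powMeanConst]; linarith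
  have hpow : c / 4 ≤ (d / N) ^ β :=
    (self_le_rpow_of_le_one (by positivity) (by linarith) hβ).trans
      (rpow_le_rpow (by positivity) ((le_div_iff₀ hN).2 hd) hβ₀)
  calc (1 : ℝ) = 4 / c * (c / 4) := by field_simp
    _ ≤ powMeanConst c K * (d / N) ^ β :=
        mul_le_mul hfour hpow (by positivity) (le_trans (by positivity) hfour)

theorem HasUnitSecondMoment.powMean_bounds (hV : HasUnitSecondMoment P V)
    (hprod : SymmetricMomentBound P V N β c K) (hN : 0 < N) (hβ₀ : 0 ≤ β) (hβ : β ≤ 1)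
    (hc : 0 < c) (hc₁ : c ≤ 1) (hK : 0 ≤ K) (hp₀ : p ≠ 0) (hp : |p| ≤ c / 4 * N) :
    1 - powMeanConst c K * (|p - 2| / N) ^ β ≤ powMean P V p ∧
      powMean P V p ≤ 1 + powMeanConst c K * (|p - 2| / N) ^ β := by
  have hconst : 0 ≤ powMeanConst c K * (|p - 2| / N) ^ β := by rw [powMeanConst]; positivity
  have hε : 0 ≤ (|p - 2| / N) ^ β := by positivity
  obtain ⟨hpl, hpu⟩ := abs_le.1 hp
  have hnonneg : 0 ≤ powMean P V p := by rw [powMean_eq hV.measurable hV.pos]; positivity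
  rcases lt_trichotomy p 2 with hp₂ | rfl | hp₂
  · refine ⟨?_, (hV.powMean_le_one hp₀ hp₂).trans (by linarith)⟩
    have habs : |p - 2| = 2 - p := by rw [abs_sub_comm]; exact abs_of_pos (by linarith)
    rw [habs] at hε hconst ⊢
    rcases lt_or_ge (c * N) 4 with hs | hs
    · linarith [one_le_powMeanConst_mul_rpow hN hβ₀ hβ hc hc₁ hK
        (show c / 4 * N ≤ 2 - p by linarith)]
    · have hlin := add_one_le_exp (-(8 * K * ((2 - p) / N) ^ β))
      have hlow := hV.exp_neg_le_powMean hprod hN hβ₀ hβ hK hs hp₀ hp₂ (by linarith)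
      have : 0 ≤ (4 / c + 2 * K * exp (2 * K)) * ((2 - p) / N) ^ β := by positivity
      rw [powMeanConst]; linarith
  · rw [hV.powMean_two]
    exact ⟨by linarith, by linarith⟩
  · have habs : |p - 2| = p - 2 := abs_of_pos (by linarith)
    rw [habs] at hε hconst ⊢
    have hmom := hV.powMoment_le_exp_of_two_lt hprod hN hβ hK (by linarith) hp₂ (by linarith)
    have hε₁ : ((p - 2) / N) ^ β ≤ 1 :=
      rpow_le_one (div_nonneg (by linarith) hN.le) ((div_le_one hN).2 (by nlinarith)) hβ₀
    have hup := (hV.powMean_le_exp (by linarith) hmom).trans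
      (exp_mul_le_one_add (by positivity) hε hε₁)
    have hone := hV.one_le_powMean hp₂ (ne_top_of_le_ne_top ENNReal.ofReal_ne_top hmom)
    have : 0 ≤ (4 / c + 8 * K) * ((p - 2) / N) ^ β := by positivity
    refine ⟨by linarith, ?_⟩
    rw [powMeanConst]; linarith

theorem powMean_div_powMean_two_bounds (hm : Measurable V) (hV : ∀ ω, 0 ≤ V ω)
    (hpos : ∀ᵐ ω ∂P, 0 < V ω) {m : ℝ} (hm₀ : 0 < m) (hm₂ : powMoment P V 2 = ENNReal.ofReal m)
    (hprod : ∀ Q : ℝ, 4 ≤ Q → Q ≤ c * N → powMoment P V (2 - Q) * powMoment P V (2 + Q) ≤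
      ENNReal.ofReal (m ^ 2 * exp (K * Q * (Q / N) ^ β)))
    (hN : 0 < N) (hβ₀ : 0 ≤ β) (hβ : β ≤ 1) (hc : 0 < c) (hc₁ : c ≤ 1) (hK : 0 ≤ K) (hp₀ : p ≠ 0)
    (hp : |p| ≤ c / 4 * N) :
    1 - powMeanConst c K * (|p - 2| / N) ^ β ≤ powMean P V p / powMean P V 2 ∧
      powMean P V p / powMean P V 2 ≤ 1 + powMeanConst c K * (|p - 2| / N) ^ β := by
  set s := (√m)⁻¹
  have hs : 0 < s := by positivity
  have hsm : s ^ 2 * m = 1 := by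
    rw [inv_pow, sq_sqrt hm₀.le, inv_mul_cancel₀ hm₀.ne']
  have hunit : HasUnitSecondMoment P (fun ω => s * V ω) :=
    ⟨hm.const_mul s, hpos.mono fun _ hω => mul_pos hs hω, by
      rw [powMoment_const_mul hs hV, hm₂, ← ENNReal.ofReal_mul (by positivity), rpow_two, hsm,
        ENNReal.ofReal_one]⟩
  have hratio : powMean P V p / powMean P V 2 = powMean P (fun ω => s * V ω) p := by
    have htwo := hunit.powMean_two
    rw [powMean_const_mul hs hV two_ne_zero] at htwo
    rw [powMean_const_mul hs hV hp₀, eq_inv_of_mul_eq_one_right htwo, div_inv_eq_mul, mul_comm]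
  rw [hratio]
  refine hunit.powMean_bounds (fun Q h₄ hQ => ?_) hN hβ₀ hβ hc hc₁ hK hp₀ hp
  have hscale : s ^ (2 - Q) * s ^ (2 + Q) * m ^ 2 = 1 := by
    rw [← rpow_add hs, show 2 - Q + (2 + Q) = ((4 : ℕ) : ℝ) by push_cast; ring, rpow_natCast,
      show s ^ 4 * m ^ 2 = (s ^ 2 * m) ^ 2 by ring, hsm, one_pow]
  rw [powMoment_const_mul hs hV, powMoment_const_mul hs hV, mul_mul_mul_comm,
    ← ENNReal.ofReal_mul (by positivity)]
  refine (mul_le_mul_right (hprod Q h₄ hQ) _).trans_eq ?_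
  rw [← ENNReal.ofReal_mul (by positivity), ← mul_assoc, hscale, one_mul]

end PowerMeans

section NoisyImage

/-- Constant in the exponent controlling products of symmetric moments of `‖A x + g‖`: passing from
`noisyStdDev` to the norm of the noisy vector adds `13`. -/
def noisyNormConst : ℝ := noisyMomentConst + 13

theorem noisyNormConst_pos : 0 < noisyNormConst := by
  unfold noisyNormConst noisyMomentConst
  positivity

theorem momentRangeConst_le : momentRangeConst ≤ 1 / 4096 := by
  have h_exp : (1 : ℝ) ≤ exp 9 := one_le_exp (by norm_num)
  calc momentRangeConst ≤ (1 / 16) ^ 3 :=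
        pow_le_pow_left₀ (by positivity) (one_div_le_one_div_of_le (by norm_num) (by linarith)) 3
    _ = 1 / 4096 := by norm_num

theorem hilbertSchmidtSq_id (F : Type*) [NormedAddCommGroup F] [InnerProductSpace ℝ F]
    [FiniteDimensional ℝ F] :
    hilbertSchmidtSq (ContinuousLinearMap.id ℝ F) = Module.finrank ℝ F := by
  simp [hilbertSchmidtSq_eq_sum _ (stdOrthonormalBasis ℝ F)]

theorem IsIsotropicLaw.lintegral_sq_norm_add {F : Type*} [NormedAddCommGroup F]
    [InnerProductSpace ℝ F] [FiniteDimensional ℝ F] [MeasurableSpace F] [BorelSpace F]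
    {ν : Measure F} [IsProbabilityMeasure ν] (h : IsIsotropicLaw ν) (v : F) :
    ∫⁻ x, ENNReal.ofReal (‖v + x‖ ^ 2) ∂ν = ENNReal.ofReal (Module.finrank ℝ F + ‖v‖ ^ 2) := by
  have h_sq : ∫⁻ x, ENNReal.ofReal (‖x‖ ^ 2) ∂ν = ENNReal.ofReal (Module.finrank ℝ F) := by
    simpa only [hilbertSchmidtSq_id, ContinuousLinearMap.id_apply] using
      h.lintegral_sq_norm_map (ContinuousLinearMap.id ℝ F)
  have h_nonneg : 0 ≤ᵐ[ν] fun x => ‖x‖ ^ 2 := ae_of_all _ fun _ => sq_nonneg _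
  have h_integrable : Integrable (fun x => ‖x‖ ^ 2) ν :=
    (lintegral_ofReal_ne_top_iff_integrable (by fun_prop) h_nonneg).1
      (h_sq ▸ ENNReal.ofReal_ne_top)
  have h_integral : ∫ x, ‖x‖ ^ 2 ∂ν = Module.finrank ℝ F := by
    rw [← ENNReal.ofReal_eq_ofReal_iff (integral_nonneg fun _ => sq_nonneg _) (Nat.cast_nonneg _),
      ofReal_integral_eq_lintegral_ofReal h_integrable h_nonneg, h_sq]
  have h_inner : Integrable (fun x => 2 * ⟪x, v⟫) ν := (h.integrable_inner v).const_mul 2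
  have h_expand (x : F) : ‖v + x‖ ^ 2 = ‖v‖ ^ 2 + 2 * ⟪x, v⟫ + ‖x‖ ^ 2 := by
    rw [norm_add_sq_real, real_inner_comm]
  have h_affine : Integrable (fun x => ‖v‖ ^ 2 + 2 * ⟪x, v⟫) ν := (integrable_const _).add h_inner
  have h_sum : Integrable (fun x => ‖v + x‖ ^ 2) ν :=
    (h_affine.add h_integrable).congr (ae_of_all _ fun x => (h_expand x).symm)
  rw [← ofReal_integral_eq_lintegral_ofReal h_sum (ae_of_all _ fun _ => sq_nonneg _)]
  simp_rw [h_expand]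
  rw [integral_add h_affine h_integrable, integral_add (integrable_const _) h_inner,
    integral_const_mul, h.integral_inner, h_integral, integral_const, probReal_univ, one_smul,
    mul_zero, add_zero, add_comm]

theorem noisyNorm_exponent_le {n N P β : ℝ} (hn : 0 < n) (hN : 0 < N) (hNn : N ≤ 4 * n)
    (hP : 4 ≤ P) (hPN : P ≤ N) (hβ : β ≤ 1) :
    P ^ 2 / n + (2 + P) ^ 2 / n ≤ 13 * P * (P / N) ^ β := by
  have h_self : P / N ≤ (P / N) ^ β :=
    self_le_rpow_of_le_one (by positivity) ((div_le_one hN).2 hPN) hβ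
  have h_scale : P / n ≤ 4 * (P / N) := by
    rw [← mul_div_assoc, div_le_div_iff₀ hn hN]
    nlinarith
  calc P ^ 2 / n + (2 + P) ^ 2 / n ≤ 13 / 4 * P * (P / n) := by
        rw [← add_div, ← mul_div_assoc]
        gcongr
        nlinarith
    _ ≤ 13 / 4 * P * (4 * (P / N) ^ β) := by gcongr; linarith
    _ = 13 * P * (P / N) ^ β := by ring

theorem sqrt_rpow_sub_mul_sqrt_rpow_add {n : ℝ} (hn : 0 < n) (P : ℝ) :
    √n ^ (2 - P) * √n ^ (2 + P) = n ^ 2 := by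
  rw [← rpow_add (sqrt_pos.2 hn), show 2 - P + (2 + P) = 2 * (2 : ℕ) by push_cast; ring,
    rpow_mul (sqrt_nonneg n), rpow_two, sq_sqrt hn.le, rpow_natCast]

variable {E F : Type*} [NormedAddCommGroup E] [InnerProductSpace ℝ E] [NormedAddCommGroup F]
  [InnerProductSpace ℝ F]

theorem mul_norm_inv_sqrt_smul {A : E →L[ℝ] F} (hA : A ≠ 0) {α b n : ℝ} (hα : α ≠ 0) (hb : 0 < b)
    (hn : 0 < n) : b * ‖(√n)⁻¹ • A‖ = ((n / (‖A‖ ^ 2 * b ^ 2)) ^ (α / 2)) ^ (-(1 / α)) := by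
  have : 0 < ‖A‖ := norm_pos_iff.2 hA
  rw [← rpow_mul (by positivity), show α / 2 * -(1 / α) = -(1 / 2) by field_simp,
    rpow_neg (by positivity), ← sqrt_eq_rpow, sqrt_div hn.le, ← mul_pow,
    sqrt_sq (by positivity), norm_smul, Real.norm_of_nonneg (by positivity)]
  field_simp

variable [FiniteDimensional ℝ F]

theorem sqrt_finrank_add_sq_norm_map [Nontrivial F] (A : E →L[ℝ] F) (x : E) :
    √(Module.finrank ℝ F + ‖A x‖ ^ 2) =
      √(Module.finrank ℝ F) * noisyStdDev ((√(Module.finrank ℝ F))⁻¹ • A) x := by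
  have hn : (0 : ℝ) < Module.finrank ℝ F := by exact_mod_cast Module.finrank_pos
  rw [noisyStdDev, ← sqrt_mul hn.le, _root_.smul_apply, norm_smul, norm_inv, mul_pow, inv_pow,
    Real.norm_of_nonneg (sqrt_nonneg _), sq_sqrt hn.le]
  congr 1
  field_simp

variable [MeasurableSpace E] [MeasurableSpace F] [BorelSpace F]

/-- The norm of the noisy image `A x + g`, as a random variable on the product of the laws of `x`
and `g`. -/
def noisyNorm (A : E →L[ℝ] F) (z : E × F) : ℝ := ‖A z.1 + z.2‖

theorem measurable_noisyNorm [OpensMeasurableSpace E] (A : E →L[ℝ] F) :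
    Measurable (noisyNorm A) := by
  unfold noisyNorm
  fun_prop

variable {μ : Measure E}

theorem powMoment_noisyNorm [OpensMeasurableSpace E] (A : E →L[ℝ] F) (p : ℝ) :
    powMoment (μ.prod (stdGaussian F)) (noisyNorm A) p =
      ∫⁻ x, (∫⁻ g, ENNReal.ofReal (‖A x + g‖ ^ p) ∂stdGaussian F) ∂μ :=
  lintegral_prod _ ((measurable_noisyNorm A).pow_const p).ennreal_ofReal.aemeasurable

theorem powMoment_noisyNorm_le [OpensMeasurableSpace E] [Nontrivial F] (A : E →L[ℝ] F) {p K : ℝ}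
    (hK : 0 ≤ K) (hF : ∀ v : F, ∫⁻ x, ENNReal.ofReal (‖v + x‖ ^ p) ∂stdGaussian F ≤
      ENNReal.ofReal (√(Module.finrank ℝ F + ‖v‖ ^ 2) ^ p * K)) :
    powMoment (μ.prod (stdGaussian F)) (noisyNorm A) p ≤
      ENNReal.ofReal (√(Module.finrank ℝ F) ^ p * K) *
        noisyMoment μ ((√(Module.finrank ℝ F))⁻¹ • A) p := by
  rw [powMoment_noisyNorm, noisyMoment, ← lintegral_const_mul' _ _ ENNReal.ofReal_ne_top]
  refine lintegral_mono fun x => (hF (A x)).trans_eq ?_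
  rw [sqrt_finrank_add_sq_norm_map, mul_rpow (sqrt_nonneg _) (noisyStdDev_pos _ x).le,
    ← ENNReal.ofReal_mul (by positivity), mul_right_comm]

theorem ae_noisyNorm_pos [OpensMeasurableSpace E] [Nontrivial F] (A : E →L[ℝ] F) :
    ∀ᵐ z ∂μ.prod (stdGaussian F), 0 < noisyNorm A z := by
  have h_meas : MeasurableSet {z | 0 < noisyNorm A z} :=
    measurableSet_lt measurable_const (measurable_noisyNorm A)
  rw [Measure.ae_prod_iff_ae_ae h_meas]
  refine ae_of_all _ fun x => ?_
  have h_atom : stdGaussian F {-A x} = 0 := by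
    rw [stdGaussian_eq_withDensity]
    exact withDensity_absolutelyContinuous _ _ (measure_singleton _)
  filter_upwards [measure_eq_zero_iff_ae_notMem.1 h_atom] with g hg
  rw [noisyNorm, norm_pos_iff]
  exact fun h_zero => hg (eq_neg_of_add_eq_zero_right h_zero)

variable [FiniteDimensional ℝ E] [BorelSpace E]

theorem powMoment_noisyNorm_two (h : IsIsotropicLaw μ) [IsProbabilityMeasure μ] (A : E →L[ℝ] F) :
    powMoment (μ.prod (stdGaussian F)) (noisyNorm A) 2 =
      ENNReal.ofReal (Module.finrank ℝ F + hilbertSchmidtSq A) := by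
  have hHS : 0 ≤ hilbertSchmidtSq A := by
    rw [hilbertSchmidtSq_eq_sum A (stdOrthonormalBasis ℝ E)]; positivity
  simp_rw [powMoment_noisyNorm, rpow_two, isIsotropicLaw_stdGaussian.lintegral_sq_norm_add,
    ENNReal.ofReal_add (Nat.cast_nonneg _) (sq_nonneg _)]
  rw [lintegral_add_left measurable_const, h.lintegral_sq_norm_map, lintegral_const, measure_univ,
    mul_one, ENNReal.ofReal_add (Nat.cast_nonneg _) hHS]

theorem powMoment_noisyNorm_sub_mul_powMoment_noisyNorm_add_le [Nontrivial F]
    [IsProbabilityMeasure μ] (hμ : MidpointPrekopaLeindler μ 0) (h : IsIsotropicLaw μ) {α b : ℝ}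
    (hψ : IsPsiAlphaLaw μ α b) (hα₁ : 1 ≤ α) (hα₂ : α ≤ 2) (hb : 0 ≤ b) {A : E →L[ℝ] F}
    (hHS : hilbertSchmidtSq A = Module.finrank ℝ F) {N : ℝ} (hN : 0 < N)
    (hNF : N ≤ 4 * Module.finrank ℝ F)
    (hbA : b * ‖(√(Module.finrank ℝ F))⁻¹ • A‖ ≤ N ^ (-(1 / α))) {P : ℝ} (hP : 4 ≤ P)
    (hPN : P ≤ momentRangeConst * N) :
    powMoment (μ.prod (stdGaussian F)) (noisyNorm A) (2 - P) *
        powMoment (μ.prod (stdGaussian F)) (noisyNorm A) (2 + P) ≤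
      ENNReal.ofReal ((2 * Module.finrank ℝ F) ^ 2 *
        exp (noisyNormConst * P * (P / N) ^ (1 / (α + 1)))) := by
  have hn : (0 : ℝ) < Module.finrank ℝ F := by exact_mod_cast Module.finrank_pos
  have hc := momentRangeConst_le
  have hPN' : P ≤ N := by nlinarith
  have hPn : P ≤ Module.finrank ℝ F / 1024 := by nlinarith
  have hL : hilbertSchmidtSq ((√(Module.finrank ℝ F))⁻¹ • A) = 1 := by
    rw [hilbertSchmidtSq_smul, hHS, inv_pow, sq_sqrt hn.le, inv_mul_cancel₀ hn.ne']
  have h_upper := powMoment_noisyNorm_le (μ := μ) A (exp_pos _).le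
    (lintegral_norm_add_rpow_stdGaussian_le (F := F) (p := 2 + P) (by linarith) (by linarith))
  have h_lower := powMoment_noisyNorm_le (μ := μ) A (exp_pos _).le
    (lintegral_norm_add_rpow_neg_stdGaussian_le (F := F) (s := (P - 2) / 2) (by linarith)
      (by linarith))
  rw [show -(2 * ((P - 2) / 2)) = 2 - P by ring, show 2 * ((P - 2) / 2) + 2 = P by ring] at h_lower
  refine (mul_le_mul' h_lower h_upper).trans ?_
  rw [mul_mul_mul_comm, ← ENNReal.ofReal_mul (by positivity)]
  refine (mul_le_mul_right (noisyMoment_sub_mul_noisyMoment_add_le_exp hμ h hψ hα₁ hα₂ hb hL hN hbA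
    hP hPN) _).trans ?_
  have h_regroup (u w x y z : ℝ) : u * x * (w * y) * (4 * z) = u * w * 4 * (x * y * z) := by ring
  rw [← ENNReal.ofReal_mul (by positivity), h_regroup, sqrt_rpow_sub_mul_sqrt_rpow_add hn,
    ← exp_add, ← exp_add]
  have h_exp := noisyNorm_exponent_le hn hN hNF hP hPN' (β := 1 / (α + 1))
    ((div_le_one (by linarith)).2 (by linarith))
  rw [mul_pow, mul_comm (2 ^ 2), show (2 : ℝ) ^ 2 = 4 by norm_num, noisyNormConst]
  gcongr
  linarith

end NoisyImage

section EffectiveDimension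

variable {E F : Type*} [NormedAddCommGroup E] [InnerProductSpace ℝ E]
  [NormedAddCommGroup F] [InnerProductSpace ℝ F]

/-- The effective dimension `ñ = n / (‖A‖² b²)` of the image of a vector with `ψ_α` constant `b`
under `A`, where `n` is the dimension of the codomain. -/
def effectiveDim (A : E →L[ℝ] F) (b : ℝ) : ℝ := Module.finrank ℝ F / (‖A‖ ^ 2 * b ^ 2)

theorem nontrivial_of_effectiveDim_ne_zero {A : E →L[ℝ] F} {b : ℝ} (h : effectiveDim A b ≠ 0) :
    Nontrivial F := by
  by_contra h_trivial
  rw [not_nontrivial_iff_subsingleton] at h_trivial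
  exact h (by rw [effectiveDim, Module.finrank_zero_of_subsingleton, Nat.cast_zero, zero_div])

theorem nontrivial_of_map_ne_zero {A : E →L[ℝ] F} (hA : A ≠ 0) : Nontrivial E := by
  by_contra h_trivial
  rw [not_nontrivial_iff_subsingleton] at h_trivial
  exact hA (Subsingleton.elim _ _)

variable [FiniteDimensional ℝ E] [FiniteDimensional ℝ F]

theorem one_le_sq_norm_of_hilbertSchmidtSq_eq_finrank [Nontrivial F] {A : E →L[ℝ] F}
    (hA : hilbertSchmidtSq A = Module.finrank ℝ F) : 1 ≤ ‖A‖ ^ 2 := by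
  have h_dim : (0 : ℝ) < Module.finrank ℝ F := by exact_mod_cast Module.finrank_pos
  have h_le := hilbertSchmidtSq_le A
  rw [hA] at h_le
  exact le_of_mul_le_mul_right (by linarith) h_dim

theorem effectiveDim_le [Nontrivial F] {A : E →L[ℝ] F}
    (hA : hilbertSchmidtSq A = Module.finrank ℝ F) {b : ℝ} (hb : 1 / 2 ≤ b) :
    effectiveDim A b ≤ 4 * Module.finrank ℝ F := by
  have h_norm := one_le_sq_norm_of_hilbertSchmidtSq_eq_finrank hA
  have h_denom : 1 / 4 ≤ ‖A‖ ^ 2 * b ^ 2 := by nlinarith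
  rw [effectiveDim, div_le_iff₀ (by linarith)]
  nlinarith [Nat.cast_nonneg (α := ℝ) (Module.finrank ℝ F)]

variable [MeasurableSpace E] [BorelSpace E] [MeasurableSpace F] [BorelSpace F]

theorem powMean_noisyNorm_div_powMean_two_bounds {μ : Measure E} [IsProbabilityMeasure μ]
    (hμ : MidpointPrekopaLeindler μ 0) (h : IsIsotropicLaw μ) {α b : ℝ} (hψ : IsPsiAlphaLaw μ α b)
    (hα₁ : 1 ≤ α) (hα₂ : α ≤ 2) {A : E →L[ℝ] F} (hA : hilbertSchmidtSq A = Module.finrank ℝ F)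
    {p : ℝ} (hp₀ : p ≠ 0) (hp : |p| ≤ momentRangeConst / 4 * effectiveDim A b ^ (α / 2)) :
    1 - powMeanConst momentRangeConst noisyNormConst *
        (|p - 2| / effectiveDim A b ^ (α / 2)) ^ (1 / (α + 1)) ≤
        powMean (μ.prod (stdGaussian F)) (noisyNorm A) p /
          powMean (μ.prod (stdGaussian F)) (noisyNorm A) 2 ∧
      powMean (μ.prod (stdGaussian F)) (noisyNorm A) p /
          powMean (μ.prod (stdGaussian F)) (noisyNorm A) 2 ≤
        1 + powMeanConst momentRangeConst noisyNormConst *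
          (|p - 2| / effectiveDim A b ^ (α / 2)) ^ (1 / (α + 1)) := by
  have h_range := momentRangeConst_le
  have h_eff_ne : effectiveDim A b ≠ 0 := by
    rintro h_zero
    rw [h_zero, zero_rpow (by linarith), mul_zero] at hp
    exact hp₀ (abs_nonpos_iff.1 hp)
  have : Nontrivial F := nontrivial_of_effectiveDim_ne_zero h_eff_ne
  have h_dim : (0 : ℝ) < Module.finrank ℝ F := by exact_mod_cast Module.finrank_pos
  have hA₀ : A ≠ 0 := by
    rintro rfl
    have h_norm := one_le_sq_norm_of_hilbertSchmidtSq_eq_finrank hA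
    norm_num at h_norm
  have : Nontrivial E := nontrivial_of_map_ne_zero hA₀
  have hb : 1 / 2 ≤ b := hψ.half_le h hα₁
  have h_eff_pos : 0 < effectiveDim A b := by
    have : 0 ≤ effectiveDim A b := by unfold effectiveDim; positivity
    exact this.lt_of_ne' h_eff_ne
  have h_two : powMoment (μ.prod (stdGaussian F)) (noisyNorm A) 2 =
      ENNReal.ofReal (2 * Module.finrank ℝ F) := by
    rw [powMoment_noisyNorm_two h, hA, two_mul]
  refine powMean_div_powMean_two_bounds (measurable_noisyNorm A) (fun _ => norm_nonneg _)
    (ae_noisyNorm_pos A) (by positivity) h_two (fun Q hQ₄ hQ => ?_) (by positivity)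
    (by positivity) ((div_le_one (by linarith)).2 (by linarith)) momentRangeConst_pos
    (by linarith) noisyNormConst_pos.le hp₀ hp
  have h_pow_one : 1 ≤ effectiveDim A b ^ (α / 2) := by
    nlinarith [momentRangeConst_pos]
  have h_eff_one : 1 ≤ effectiveDim A b := by
    by_contra! h_lt
    linarith [rpow_lt_one h_eff_pos.le h_lt (by linarith : 0 < α / 2)]
  have h_pow_le : effectiveDim A b ^ (α / 2) ≤ 4 * Module.finrank ℝ F :=
    (rpow_le_self_of_one_le h_eff_one (by linarith)).trans (effectiveDim_le hA hb)
  exact powMoment_noisyNorm_sub_mul_powMoment_noisyNorm_add_le hμ h hψ hα₁ hα₂ (by linarith) hA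
    (by positivity) h_pow_le
    (mul_norm_inv_sqrt_smul hA₀ (by linarith) (by linarith) h_dim).le hQ₄ hQ

end EffectiveDimension

section RandomVectors

variable {Ω : Type*} [MeasurableSpace Ω] {P : Measure Ω}

theorem powMean_map {Ω' : Type*} [MeasurableSpace Ω'] {T : Ω → Ω'} (hT : Measurable T) {V : Ω' → ℝ}
    (hV : Measurable V) (p : ℝ) : powMean (P.map T) V p = powMean P (fun ω => V (T ω)) p := by
  rw [powMean, powMean, integral_map hT.aemeasurable (hV.pow_const p).aestronglyMeasurable]

theorem powMean_norm_smul_noisy {E F : Type*} [NormedAddCommGroup E] [InnerProductSpace ℝ E]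
    [MeasurableSpace E] [OpensMeasurableSpace E] [NormedAddCommGroup F] [InnerProductSpace ℝ F]
    [FiniteDimensional ℝ F] [MeasurableSpace F] [BorelSpace F] [IsFiniteMeasure P] {X : Ω → E}
    {G : Ω → F} (hX : Measurable X) (hG : Measurable G) (hG_law : P.map G = stdGaussian F)
    (hXG : IndepFun X G P) (A : E →L[ℝ] F) {s p : ℝ} (hs : 0 < s) (hp : p ≠ 0) :
    powMean P (fun ω => ‖s • (A (X ω) + G ω)‖) p =
      s * powMean ((P.map X).prod (stdGaussian F)) (noisyNorm A) p := by
  have h_joint := (indepFun_iff_map_prod_eq_prod_map_map hX.aemeasurable hG.aemeasurable).1 hXG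
  rw [← hG_law, ← h_joint, powMean_map (hX.prodMk hG) (measurable_noisyNorm A),
    ← powMean_const_mul hs (fun ω => show 0 ≤ noisyNorm A (X ω, G ω) from norm_nonneg _) hp]
  simp only [norm_smul, Real.norm_of_nonneg hs.le, noisyNorm]

theorem statement14_general :
    ∃ c C : ℝ, 0 < c ∧ 0 < C ∧
      ∀ {E F Ω : Type*} [NormedAddCommGroup E] [InnerProductSpace ℝ E] [FiniteDimensional ℝ E]
        [MeasurableSpace E] [BorelSpace E] [NormedAddCommGroup F] [InnerProductSpace ℝ F]
        [FiniteDimensional ℝ F] [MeasurableSpace F] [BorelSpace F] [MeasurableSpace Ω]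
        {P : Measure Ω} [IsProbabilityMeasure P] {X : Ω → E} {G : Ω → F} {f : E → ℝ} {α b : ℝ}
        {A : E →L[ℝ] F},
        Measurable X → P.map X = volume.withDensity (fun x => ENNReal.ofReal (f x)) →
          IsLogConcaveFn f → IsIsotropicLaw (P.map X) → 1 ≤ α → α ≤ 2 →
          IsPsiAlphaLaw (P.map X) α b → Measurable G → P.map G = stdGaussian F →
          IndepFun X G P → hilbertSchmidtSq A = Module.finrank ℝ F →
          ∀ p : ℝ, p ≠ 0 → |p| ≤ c * effectiveDim A b ^ (α / 2) →
            1 - C * (|p - 2| / effectiveDim A b ^ (α / 2)) ^ (1 / (α + 1)) ≤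
                powMean P (fun ω => ‖(√2)⁻¹ • (A (X ω) + G ω)‖) p /
                  powMean P (fun ω => ‖(√2)⁻¹ • (A (X ω) + G ω)‖) 2 ∧
              powMean P (fun ω => ‖(√2)⁻¹ • (A (X ω) + G ω)‖) p /
                  powMean P (fun ω => ‖(√2)⁻¹ • (A (X ω) + G ω)‖) 2 ≤
                1 + C * (|p - 2| / effectiveDim A b ^ (α / 2)) ^ (1 / (α + 1)) := by
  refine ⟨momentRangeConst / 4, powMeanConst momentRangeConst noisyNormConst,
    by linarith [momentRangeConst_pos], powMeanConst_pos momentRangeConst_pos noisyNormConst_pos.le,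
    ?_⟩
  intro E F Ω _ _ _ _ _ _ _ _ _ _ _ P _ X G f α b A hX hX_law hf h_iso hα₁ hα₂ hψ hG hG_law hXG hA
    p hp₀ hp
  have : IsProbabilityMeasure (P.map X) := Measure.isProbabilityMeasure_map hX.aemeasurable
  have hs : (0 : ℝ) < (√2)⁻¹ := by positivity
  rw [powMean_norm_smul_noisy hX hG hG_law hXG A hs hp₀,
    powMean_norm_smul_noisy hX hG hG_law hXG A hs two_ne_zero, mul_div_mul_left _ _ hs.ne']
  exact powMean_noisyNorm_div_powMean_two_bounds (hX_law ▸ hf.midpointPrekopaLeindler) h_iso hψ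
    hα₁ hα₂ hA hp₀ hp

variable {n : ℕ} {X : Ω → EuclideanSpace ℝ (Fin n)}

theorem Isotropic.isIsotropicLaw_map (h : Isotropic P X) (hX : Measurable X) :
    IsIsotropicLaw (P.map X) where
  integral_id := by rw [integral_map hX.aemeasurable (by fun_prop), h.1]
  integral_inner_mul_inner θ η := by rw [integral_map hX.aemeasurable (by fun_prop), h.2]

theorem IsPsiAlpha.isPsiAlphaLaw_map {α b : ℝ} (h : IsPsiAlpha P X α b) (hX : Measurable X) :
    IsPsiAlphaLaw (P.map X) α b := by
  intro p hp v
  have h_meas : Measurable fun x : EuclideanSpace ℝ (Fin n) => |⟪x, v⟫| ^ p :=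
    (by fun_prop : Measurable fun x : EuclideanSpace ℝ (Fin n) => |⟪x, v⟫|).pow_const p
  rw [integral_map hX.aemeasurable h_meas.aestronglyMeasurable,
    integral_map hX.aemeasurable (by fun_prop)]
  exact h p hp v

theorem IsStdGaussian.map_eq_stdGaussian (h : IsStdGaussian P X) :
    P.map X = stdGaussian (EuclideanSpace ℝ (Fin n)) := by
  rw [h.2, stdGaussian_eq_withDensity]
  simp only [stdGaussianDensity, finrank_euclideanSpace_fin]

theorem hilbertSchmidtSq_toEuclideanLin (A : Matrix (Fin n) (Fin n) ℝ) :
    hilbertSchmidtSq (LinearMap.toContinuousLinearMap (Matrix.toEuclideanLin A)) =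
      hsNorm A ^ 2 := by
  rw [hilbertSchmidtSq_eq_sum _ (EuclideanSpace.basisFun (Fin n) ℝ), hsNorm,
    sq_sqrt (by positivity), Finset.sum_comm]
  refine Finset.sum_congr rfl fun j _ => ?_
  rw [EuclideanSpace.norm_sq_eq]
  refine Finset.sum_congr rfl fun i _ => ?_
  simp [Matrix.toLpLin_apply]

theorem effectiveDim_toEuclideanLin (A : Matrix (Fin n) (Fin n) ℝ) (b : ℝ) :
    effectiveDim (LinearMap.toContinuousLinearMap (Matrix.toEuclideanLin A)) b =
      n / (opNorm A ^ 2 * b ^ 2) := by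
  rw [effectiveDim, finrank_euclideanSpace_fin, opNorm]

end RandomVectors

/-- moment estimates for `Y = (AX + G_n)/√2`. -/
theorem statement14 :
    ∃ c C : ℝ, 0 < c ∧ 0 < C ∧
      ∀ (n : ℕ) (Ω : Type) (_mΩ : MeasurableSpace Ω) (P : Measure Ω),
        IsProbabilityMeasure P →
        ∀ (X G : Ω → EuclideanSpace ℝ (Fin n)) (f : EuclideanSpace ℝ (Fin n) → ℝ)
          (α b : ℝ) (A : Matrix (Fin n) (Fin n) ℝ),
          HasDensityFn P X f → IsLogConcaveFn f → Isotropic P X →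
          1 ≤ α → α ≤ 2 → IsPsiAlpha P X α b →
          IsStdGaussian P G → IndepFun X G P →
          hsNorm A ^ 2 = n →
          ∀ p : ℝ, p ≠ 0 →
            |p| ≤ c * ((n : ℝ) / (opNorm A ^ 2 * b ^ 2)) ^ (α / 2) →
            1 - C * (|p - 2| / ((n : ℝ) / (opNorm A ^ 2 * b ^ 2)) ^ (α / 2)) ^ (1/(α+1)) ≤
                (∫ ω, ‖(Real.sqrt 2)⁻¹ • (mApp A (X ω) + G ω)‖ ^ p ∂P) ^ (1/p) /
                  (∫ ω, ‖(Real.sqrt 2)⁻¹ • (mApp A (X ω) + G ω)‖ ^ (2:ℝ) ∂P) ^ ((1:ℝ)/2) ∧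
              (∫ ω, ‖(Real.sqrt 2)⁻¹ • (mApp A (X ω) + G ω)‖ ^ p ∂P) ^ (1/p) /
                  (∫ ω, ‖(Real.sqrt 2)⁻¹ • (mApp A (X ω) + G ω)‖ ^ (2:ℝ) ∂P) ^ ((1:ℝ)/2) ≤
                1 + C * (|p - 2| / ((n : ℝ) / (opNorm A ^ 2 * b ^ 2)) ^ (α / 2)) ^ (1/(α+1)) := by
  obtain ⟨c, C, hc, hC, h_general⟩ := statement14_general
  refine ⟨c, C, hc, hC, fun n Ω _ P _ X G f α b A hf hf_lc hX hα₁ hα₂ hψ hG hXG hA p hp₀ hp => ?_⟩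
  rw [← effectiveDim_toEuclideanLin] at hp ⊢
  exact h_general hf.1 hf.2 hf_lc (hX.isIsotropicLaw_map hf.1) hα₁ hα₂ (hψ.isPsiAlphaLaw_map hf.1)
    hG.1 hG.map_eq_stdGaussian hXG
    (by rw [hilbertSchmidtSq_toEuclideanLin, hA, finrank_euclideanSpace_fin]) p hp₀ hp
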